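/- For n ≥ 3, let Z_n be the zig-zag graph: the simple graph on Fin (n+1) in which distinct vertices i and j are adjacent if and only if |i − j| = 1, or |i − j| = 2, or {i, j} = {0, n} (so Z_n is a linear chain of n−1 triangles whose two end vertices are joined by an edge; it has 2n edges and loop number n). Let e₀ be the edge {0, n}. Then the function u ↦ Ψ_{Z_n}(x_u)⁻² is Lebesgue integrable on the positive orthant of functions u : E(Z_n) \ {e₀} → (0, ∞), and its integral equals 4 · (2n−2)!/(n! · (n−1)!) · (1 − (1 − (−1)ⁿ)/2^{2n−3}) · ζ(2n−3), where ζ(m) = ∑_{k ≥ 1} k^{−m}. -/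

import Mathlib

open MeasureTheory
open scoped Classical

/-- The Kirchhoff graph polynomial: the sum over spanning trees `T` of `G` of the
product of `x e` over all edges `e` of `G` not in `T`. -/
noncomputable def kirchhoff {V : Type*} [Fintype V] (G : SimpleGraph V)
    (x : G.edgeSet → ℝ) : ℝ :=
  ∑ T ∈ Finset.univ.filter (fun T : SimpleGraph V => T ≤ G ∧ T.IsTree),
    ∏ e : G.edgeSet, if (e : Sym2 V) ∈ T.edgeSet then 1 else x e

/-- The affine chart `x(e₀) = 1`: extend `u : E \ {e₀} → ℝ` to `E → ℝ` by
sending `e₀` to `1`. -/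
noncomputable def chart {V : Type*} [Fintype V] (G : SimpleGraph V) (e₀ : G.edgeSet)
    (u : {e : G.edgeSet // e ≠ e₀} → ℝ) : G.edgeSet → ℝ :=
  fun e => if h : e = e₀ then 1 else u ⟨e, h⟩

/-- The zig-zag graph `Z_n` on `Fin (n+1)`: distinct vertices `i, j` are
adjacent iff `|i − j| = 1`, or `|i − j| = 2`, or `{i, j} = {0, n}`. -/
def zigzag (n : ℕ) : SimpleGraph (Fin (n + 1)) :=
  SimpleGraph.fromRel (fun i j =>
    ((i : ℤ) - (j : ℤ)).natAbs = 1 ∨ ((i : ℤ) - (j : ℤ)).natAbs = 2 ∨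
      ((i : ℕ) = 0 ∧ (j : ℕ) = n))

/-!
The matrix-tree theorem turns the Kirchhoff polynomial of the zig-zag graph into the determinant of
its loop matrix, so that `Ψ⁻²` is a Gaussian integral over `n` loop momenta in `ℝ⁴`. Integrating out
the edge variables leaves a chain of triangles glued by a transfer operator, which multiplies
`φ (p - y)` by `‖x - y‖⁻² ‖y‖⁻²` and integrates over `y`, iterated on `‖x‖⁻²`. The star-triangle
identity, proved by inversion, intertwines it with a symmetrised operator that commutes with the
rotations fixing `p`. In elliptic coordinates with foci `0` and `p` the latter acts through the odd
Poisson kernel of a half strip, and the sine expansion of that kernel reduces every iterate to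
integrals over the regions `|σ - s| < τ < σ + s`. These integrals send exponentials to exponentials
times polynomials with ballot-number coefficients, which is where the Catalan-type factor comes
from. Summing `n² e^{-nx}` over `n` produces the zeta value; for odd loop number the sum alternates,
which gives the correction factor.
-/

open scoped ENNReal

/-! ### The matrix-tree theorem -/

section MatrixTree

variable {V : Type*} {r : V} {f g : {v // v ≠ r} → V}

/-- `f` assigns to every vertex other than the root `r` a parent, and following parents always
leads to `r`; this is encoded by a depth function that decreases from a vertex to its parent. -/
def IsParentMap (f : {v // v ≠ r} → V) : Prop :=
  ∃ d : V → ℕ, ∀ v, d (f v) < d v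

/-- One step towards the root along the parent map `f`, staying at `r`. -/
noncomputable def parentStep (f : {v // v ≠ r} → V) (v : V) : V :=
  if h : v = r then r else f ⟨v, h⟩

lemma parentStep_root : parentStep f r = r :=
  dif_pos rfl

lemma parentStep_coe (v : {v // v ≠ r}) : parentStep f v = f v :=
  dif_neg v.2

lemma isParentMap_of_forall_exists_iterate_eq (h : ∀ v, ∃ k, (parentStep f)^[k] v = r) :
    IsParentMap f := by
  refine ⟨fun v => Nat.find (h v), fun v => ?_⟩
  have hpos : 0 < Nat.find (h v) :=
    Nat.pos_of_ne_zero fun h0 => v.2 (by simpa [h0] using Nat.find_spec (h v))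
  obtain ⟨k, hk⟩ := Nat.exists_eq_add_of_lt hpos
  have hspec := Nat.find_spec (h v)
  rw [hk, zero_add, Function.iterate_succ_apply, parentStep_coe] at hspec
  calc Nat.find (h (f v)) ≤ k := Nat.find_min' _ hspec
    _ < Nat.find (h v) := by omega

/-- The graph whose edges join each vertex other than the root to its parent. -/
def parentGraph (f : {v // v ≠ r} → V) : SimpleGraph V :=
  SimpleGraph.fromEdgeSet (Set.range fun v => s(v.1, f v))

lemma card_ne_add_one [Finite V] (r : V) : Nat.card {v // v ≠ r} + 1 = Nat.card V := by
  have := Fintype.ofFinite V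
  rw [← Finite.card_option, Nat.card_congr (Equiv.optionSubtypeNe r)]

namespace IsParentMap

lemma ne (h : IsParentMap f) (v : {v // v ≠ r}) : v.1 ≠ f v := by
  obtain ⟨d, hd⟩ := h
  exact fun hv => (hd v).ne' (congrArg d hv)

lemma edgeSet_parentGraph (h : IsParentMap f) :
    (parentGraph f).edgeSet = Set.range fun v => s(v.1, f v) := by
  rw [parentGraph, SimpleGraph.edgeSet_fromEdgeSet, sdiff_eq_left, Set.disjoint_left]
  rintro _ ⟨v, rfl⟩
  simpa using h.ne v

lemma adj (h : IsParentMap f) (v : {v // v ≠ r}) : (parentGraph f).Adj v (f v) := by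
  rw [← SimpleGraph.mem_edgeSet, h.edgeSet_parentGraph]
  exact ⟨v, rfl⟩

lemma reachable_root (h : IsParentMap f) (v : V) : (parentGraph f).Reachable v r := by
  obtain ⟨d, hd⟩ := id h
  induction hk : d v using Nat.strong_induction_on generalizing v with
  | _ k ih =>
    by_cases hv : v = r
    · rw [hv]
    · exact (h.adj ⟨v, hv⟩).reachable.trans (ih _ (hk ▸ hd ⟨v, hv⟩) _ rfl)

lemma connected (h : IsParentMap f) : (parentGraph f).Connected :=
  have : Nonempty V := ⟨r⟩
  ⟨fun u v => (h.reachable_root u).trans (h.reachable_root v).symm⟩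

lemma eq_of_parentGraph_eq (hf : IsParentMap f) (hg : IsParentMap g)
    (h : parentGraph f = parentGraph g) : f = g := by
  obtain ⟨d, hd⟩ := id hf
  funext v
  induction hk : d v using Nat.strong_induction_on generalizing v with
  | _ k ih =>
    have hadj := hf.adj v
    rw [h, ← SimpleGraph.mem_edgeSet, hg.edgeSet_parentGraph] at hadj
    obtain ⟨u, hu⟩ := hadj
    rcases Sym2.eq_iff.1 hu with ⟨huv, hgf⟩ | ⟨huf, hgv⟩
    · rw [← hgf, Subtype.ext huv]
    · have hdu : d u < d v := huf ▸ hd v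
      have hfu : d v < d u := by simpa only [ih _ (hk ▸ hdu) u rfl, hgv] using hd u
      exact absurd hdu hfu.asymm

section Finite

variable [Finite V]

lemma card_edgeSet_parentGraph (h : IsParentMap f) :
    Nat.card (parentGraph f).edgeSet = Nat.card {v // v ≠ r} := by
  refine le_antisymm ?_ ?_
  · rw [h.edgeSet_parentGraph]
    exact Finite.card_range_le _
  · have hc := h.connected.card_vert_le_card_edgeSet_add_one
    have hV := card_ne_add_one r
    omega

lemma isTree (h : IsParentMap f) : (parentGraph f).IsTree := by
  rw [SimpleGraph.isTree_iff_connected_and_card, h.card_edgeSet_parentGraph]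
  exact ⟨h.connected, card_ne_add_one r⟩

lemma injective_edge (h : IsParentMap f) :
    Function.Injective fun v : {v // v ≠ r} => s(v.1, f v) := by
  have hcard := h.card_edgeSet_parentGraph
  rw [h.edgeSet_parentGraph, Nat.card_coe_set_eq, ← Set.image_univ, ← Set.ncard_univ] at hcard
  exact Set.injOn_univ.1 (Set.injOn_of_ncard_image_eq hcard)

end Finite

end IsParentMap

lemma exists_isParentMap_of_isTree {T : SimpleGraph V} (hT : T.IsTree) (r : V) :
    ∃ f : {v // v ≠ r} → V, IsParentMap f ∧ parentGraph f = T := by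
  have hstep : ∀ v : {v // v ≠ r}, ∃ u, T.Adj v u ∧ T.dist u r < T.dist v r := by
    rintro ⟨v, hv⟩
    obtain ⟨p, hp⟩ := hT.1.exists_walk_length_eq_dist v r
    cases p with
    | nil => exact absurd rfl hv
    | cons hadj q =>
      refine ⟨_, hadj, ?_⟩
      rw [← hp, SimpleGraph.Walk.length_cons]
      exact Nat.lt_succ_of_le (SimpleGraph.dist_le q)
  choose f hadj hlt using hstep
  have hf : IsParentMap f := ⟨fun u => T.dist u r, hlt⟩
  have hle : parentGraph f ≤ T := by
    rw [← SimpleGraph.edgeSet_subset_edgeSet, hf.edgeSet_parentGraph]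
    rintro _ ⟨v, rfl⟩
    exact hadj v
  exact ⟨f, hf, le_antisymm hle
    ((SimpleGraph.isTree_iff_minimal_connected.1 hT).2 hf.connected hle)⟩

variable [Fintype V] [DecidableEq V] (R : Type*) [CommRing R]

/-- The matrix `1 - P`, where `P` is the transition matrix of the map `f`, with the root
deleted. -/
def parentMatrix (f : {v // v ≠ r} → V) : Matrix {v // v ≠ r} {v // v ≠ r} R :=
  1 - Matrix.of fun v u => if f v = u.1 then 1 else 0

lemma det_parentMatrix_of_isParentMap (h : IsParentMap f) : (parentMatrix R f).det = 1 := by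
  obtain ⟨d, hd⟩ := h
  have hne : ∀ {v u : {v // v ≠ r}}, d v ≤ d u → f v ≠ u :=
    fun hvu hf => (hd _).not_ge (hf ▸ hvu)
  have htri : (parentMatrix R f).BlockTriangular fun v => OrderDual.toDual (d v) := by
    intro v u hvu
    have hvu' : d v < d u := hvu
    have : v ≠ u := fun h => hvu'.ne (congrArg (fun w : {v // v ≠ r} => d w) h)
    simp [parentMatrix, this, hne hvu'.le]
  rw [htri.det]
  refine Finset.prod_eq_one fun k _ => ?_
  have hblock : (parentMatrix R f).toSquareBlock (fun v => OrderDual.toDual (d v)) k = 1 := by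
    ext ⟨v, hv⟩ ⟨u, hu⟩
    have : f v ≠ u := hne (OrderDual.toDual.injective (hv.trans hu.symm)).le
    simp [parentMatrix, Matrix.toSquareBlock_def, this, Matrix.one_apply]
  rw [hblock, Matrix.det_one]

-- The indicator of the vertices that never reach the root spans a kernel.
lemma det_parentMatrix_int_of_not_isParentMap (h : ¬ IsParentMap f) :
    (parentMatrix ℤ f).det = 0 := by
  have hex : ∃ v, ∀ k, (parentStep f)^[k] v ≠ r := by
    by_contra! hreach
    exact h (isParentMap_of_forall_exists_iterate_eq hreach)
  obtain ⟨v₀, hv₀⟩ := hex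
  let χ : V → ℤ := fun v => if ∀ k, (parentStep f)^[k] v ≠ r then 1 else 0
  have hχ_root : χ r = 0 := if_neg fun h => h 0 rfl
  have hχ_step (v : V) : χ (parentStep f v) = χ v := by
    have : (∀ k, (parentStep f)^[k] (parentStep f v) ≠ r) ↔ ∀ k, (parentStep f)^[k] v ≠ r := by
      simp only [← Function.iterate_succ_apply]
      refine ⟨fun h k hk => h k ?_, fun h k => h _⟩
      rw [Function.iterate_succ_apply', hk, parentStep_root]
    simp only [χ, this]
  refine Matrix.exists_mulVec_eq_zero_iff.1 ⟨fun v => χ v, fun h0 => ?_, ?_⟩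
  · have : χ v₀ = 0 := congrFun h0 ⟨v₀, hv₀ 0⟩
    simp [χ, hv₀] at this
  · ext v
    have hsum : ∑ u : {v // v ≠ r}, (if f v = u then χ u else 0) = χ (f v) := by
      have := Fintype.sum_eq_add_sum_subtype_ne (fun u => if f v = u then χ u else 0) r
      simpa [hχ_root] using this.symm
    rw [parentMatrix, Matrix.sub_mulVec, Matrix.one_mulVec, Pi.sub_apply]
    simp only [Matrix.mulVec, dotProduct, Matrix.of_apply, ite_mul, one_mul, zero_mul]
    rw [hsum, ← hχ_step v, parentStep_coe, sub_self, Pi.zero_apply]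

lemma det_parentMatrix_of_not_isParentMap (h : ¬ IsParentMap f) :
    (parentMatrix R f).det = 0 := by
  have hmap : parentMatrix R f = (Int.castRingHom R).mapMatrix (parentMatrix ℤ f) := by
    ext v u
    simp [parentMatrix, Matrix.one_apply]
  rw [hmap, ← RingHom.map_det, det_parentMatrix_int_of_not_isParentMap h, map_zero]

variable {R}

/-- The weighted Laplacian `D - A` of the edge weights `y`, with the row and the column of the
vertex `r` deleted. -/
def reducedLaplacian (y : Sym2 V → R) (r : V) : Matrix {v // v ≠ r} {v // v ≠ r} R :=
  Matrix.diagonal (fun v => ∑ x, y s(v.1, x)) - Matrix.of fun v u => y s(v.1, u.1)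

lemma det_reducedLaplacian_eq_sum_parentMatrix (y : Sym2 V → R) (r : V) :
    (reducedLaplacian y r).det =
      ∑ f : {v // v ≠ r} → V, (∏ v, y s(v.1, f v)) * (parentMatrix R f).det := by
  have hrows : reducedLaplacian y r = fun v => ∑ x, y s(v.1, x) •
      fun u => (1 : Matrix {v // v ≠ r} {v // v ≠ r} R) v u - if x = u then 1 else 0 := by
    ext v u
    simp [reducedLaplacian, mul_sub, Finset.sum_sub_distrib, Matrix.diagonal_apply,
      Matrix.one_apply]
  rw [hrows]
  change Matrix.detRowAlternating.toMultilinearMap _ = _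
  rw [MultilinearMap.map_sum]
  refine Finset.sum_congr rfl fun f _ => ?_
  rw [MultilinearMap.map_smul_univ]
  rfl

theorem det_reducedLaplacian (y : Sym2 V → R) (r : V) :
    (reducedLaplacian y r).det =
      ∑ T ∈ Finset.univ.filter (fun T : SimpleGraph V => T.IsTree), ∏ e ∈ T.edgeFinset, y e := by
  have hdet (f : {v // v ≠ r} → V) : (∏ v, y s(v.1, f v)) * (parentMatrix R f).det =
      if IsParentMap f then ∏ v, y s(v.1, f v) else 0 := by
    split_ifs with h
    · rw [det_parentMatrix_of_isParentMap R h, mul_one]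
    · rw [det_parentMatrix_of_not_isParentMap R h, mul_zero]
  rw [det_reducedLaplacian_eq_sum_parentMatrix, Finset.sum_congr rfl fun f _ => hdet f,
    ← Finset.sum_filter]
  refine Finset.sum_bij (fun f _ => parentGraph f) ?_ ?_ ?_ ?_ <;>
    simp only [Finset.mem_filter_univ]
  · exact fun f hf => hf.isTree
  · exact fun f hf g hg h => hf.eq_of_parentGraph_eq hg h
  · intro T hT
    obtain ⟨f, hf, rfl⟩ := exists_isParentMap_of_isTree hT r
    exact ⟨f, hf, rfl⟩
  · intro f hf
    have : (parentGraph f).edgeFinset = Finset.univ.image fun v => s(v.1, f v) := by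
      ext e
      rw [SimpleGraph.mem_edgeFinset, hf.edgeSet_parentGraph]
      simp
    rw [this, Finset.prod_image fun a _ b _ h => hf.injective_edge h]

end MatrixTree

/-! ### The Kirchhoff polynomial of the zig-zag graph -/

section KirchhoffDeterminant

variable {V : Type*} [Fintype V]

lemma prod_edgeFinset_eq_prod_edgeSet_ite {G T : SimpleGraph V} (hle : T ≤ G) (y : Sym2 V → ℝ) :
    ∏ e ∈ T.edgeFinset, y e = ∏ e : G.edgeSet, if (e : Sym2 V) ∈ T.edgeSet then y e else 1 := by
  rw [← Finset.prod_filter]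
  symm
  refine Finset.prod_bij (fun e _ => (e : Sym2 V)) ?_ ?_ ?_ fun _ _ => rfl
  · exact fun e he => by simpa using he
  · exact fun _ _ _ _ h => Subtype.ext h
  · intro e he
    rw [SimpleGraph.mem_edgeFinset] at he
    exact ⟨⟨e, SimpleGraph.edgeSet_subset_edgeSet.2 hle he⟩, by simpa using he, rfl⟩

variable [DecidableEq V]

lemma kirchhoff_eq_prod_mul_det_reducedLaplacian (G : SimpleGraph V) (r : V) {x : G.edgeSet → ℝ}
    (hx : ∀ e, x e ≠ 0) {y : Sym2 V → ℝ} (hy : ∀ e : G.edgeSet, y e = (x e)⁻¹)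
    (hy_zero : ∀ e, e ∉ G.edgeSet → y e = 0) :
    kirchhoff G x = (∏ e, x e) * (reducedLaplacian y r).det := by
  rw [det_reducedLaplacian, kirchhoff, Finset.mul_sum, Finset.sum_filter, Finset.sum_filter]
  refine Finset.sum_congr (by ext; simp) fun T _ => ?_
  by_cases hT : T.IsTree
  swap
  · rw [if_neg fun h => hT h.2, if_neg hT]
  by_cases hle : T ≤ G
  · rw [if_pos ⟨hle, hT⟩, if_pos hT, prod_edgeFinset_eq_prod_edgeSet_ite hle,
      ← Finset.prod_mul_distrib]
    refine Finset.prod_congr rfl fun e _ => ?_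
    split_ifs
    · rw [hy, mul_inv_cancel₀ (hx e)]
    · rw [mul_one]
  · obtain ⟨e, heT, heG⟩ : ∃ e ∈ T.edgeSet, e ∉ G.edgeSet := by
      by_contra! h
      exact hle (SimpleGraph.edgeSet_subset_edgeSet.1 h)
    rw [if_neg fun h => hle h.1, if_pos hT,
      Finset.prod_eq_zero (SimpleGraph.mem_edgeFinset.2 heT) (hy_zero e heG), mul_zero]

/-- The signed incidence of the vertex `v` with the edge oriented from `a` to `b`. -/
def incidence (R : Type*) [Ring R] (a b v : V) : R :=
  (if b = v then 1 else 0) - (if a = v then 1 else 0)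

variable {R : Type*} [CommRing R]

lemma reducedLaplacian_single {a b : V} (hab : a ≠ b) (w : R) {r : V} (v u : {v // v ≠ r}) :
    reducedLaplacian (fun e => if s(a, b) = e then w else 0) r v u =
      w * (incidence R a b v * incidence R a b u) := by
  have hdeg : ∑ x, (if s(a, b) = s(v.1, x) then w else 0) =
      w * ((if b = v then 1 else 0) + (if a = v then 1 else 0)) := by
    have hsplit (x : V) : (if s(a, b) = s(v.1, x) then w else 0) =
        (if b = v then (if a = x then w else 0) else 0) +
        (if a = v then (if b = x then w else 0) else 0) := by
      by_cases hav : a = v <;> by_cases hbv : b = v <;>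
        by_cases hax : a = x <;> by_cases hbx : b = x <;> simp_all
    simp only [hsplit, Finset.sum_add_distrib]
    split_ifs <;> simp [mul_add]
  simp only [reducedLaplacian, Matrix.sub_apply, Matrix.diagonal_apply, Matrix.of_apply, hdeg,
    incidence]
  by_cases hvu : v = u
  · subst hvu
    by_cases hav : a = v <;> by_cases hbv : b = v <;> simp_all
  · have hvu' : (v : V) ≠ u := fun h => hvu (Subtype.ext h)
    by_cases hav : a = v <;> by_cases hbv : b = v <;>
      by_cases hau : a = u <;> by_cases hbu : b = u <;> simp_all

lemma reducedLaplacian_sum {ι : Type*} [Fintype ι] (y : ι → Sym2 V → R) {r : V}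
    (v u : {v // v ≠ r}) :
    reducedLaplacian (fun e => ∑ j, y j e) r v u = ∑ j, reducedLaplacian (y j) r v u := by
  by_cases hvu : v = u <;>
    simp [reducedLaplacian, hvu, Finset.sum_comm (s := Finset.univ (α := V))]

end KirchhoffDeterminant

open Matrix in
lemma det_diagonal_inv_add_mul_mul_transpose {ι κ K : Type*} [Fintype ι] [Fintype κ]
    [DecidableEq ι] [DecidableEq κ] [Field K] (N : Matrix ι κ K) {x : ι → K} {z : κ → K}
    (hx : ∀ i, x i ≠ 0) (hz : ∀ c, z c ≠ 0) :
    ((∏ c, z c) * ∏ i, x i) *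
        (diagonal (fun i => (x i)⁻¹) + N * diagonal (fun c => (z c)⁻¹) * Nᵀ).det =
      (diagonal z + Nᵀ * diagonal x * N).det := by
  have hxx : diagonal x * diagonal (fun i => (x i)⁻¹) = 1 := by
    simp [diagonal_mul_diagonal, hx]
  have hzz : diagonal (fun c => (z c)⁻¹) * diagonal z = 1 := by
    simp [diagonal_mul_diagonal, hz]
  have hleft : diagonal x * (diagonal (fun i => (x i)⁻¹) + N * diagonal (fun c => (z c)⁻¹) * Nᵀ) =
      1 + (diagonal x * N * diagonal fun c => (z c)⁻¹) * Nᵀ := by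
    rw [mul_add, hxx]
    simp only [Matrix.mul_assoc]
  have hright : diagonal z + Nᵀ * diagonal x * N =
      (1 + Nᵀ * (diagonal x * N * diagonal fun c => (z c)⁻¹)) * diagonal z := by
    simp only [add_mul, one_mul, Matrix.mul_assoc, hzz, Matrix.mul_one]
  rw [← det_diagonal (d := z), ← det_diagonal (d := x), mul_assoc, ← det_mul, hleft,
    det_one_add_mul_comm, hright, det_mul, mul_comm]

section ZigzagEdges

variable {m : ℕ}

/-- The source of an edge of the zig-zag graph on `m + 2` vertices. The edges are indexed by the
chords of the Hamiltonian path `0, 1, …, m + 1` (`Sum.inl`, where `0` is the closing edge) and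
by the edges of that path (`Sum.inr`). -/
def zigzagSrc (m : ℕ) : Fin (m + 1) ⊕ Fin (m + 1) → Fin (m + 2) :=
  Sum.elim (Fin.cons 0 fun c : Fin m => c.castSucc.castSucc) Fin.castSucc

/-- The target of an edge of the zig-zag graph on `m + 2` vertices, see `zigzagSrc`. -/
def zigzagTgt (m : ℕ) : Fin (m + 1) ⊕ Fin (m + 1) → Fin (m + 2) :=
  Sum.elim (Fin.cons (Fin.last _) fun c : Fin m => c.succ.succ) Fin.succ

/-- The enumeration of the edges of the zig-zag graph by its chords and its path edges. -/
def zigzagEdge (m : ℕ) (j : Fin (m + 1) ⊕ Fin (m + 1)) : Sym2 (Fin (m + 2)) :=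
  s(zigzagSrc m j, zigzagTgt m j)

lemma zigzagSrc_lt_zigzagTgt (j : Fin (m + 1) ⊕ Fin (m + 1)) :
    zigzagSrc m j < zigzagTgt m j := by
  rcases j with j | j
  · induction j using Fin.cases <;> simp [zigzagSrc, zigzagTgt, Fin.lt_def]
  · simp [zigzagSrc, zigzagTgt, Fin.lt_def]

lemma zigzagEdge_injective (hm : 2 ≤ m) : Function.Injective (zigzagEdge m) := by
  intro i j h
  have hends : zigzagSrc m i = zigzagSrc m j ∧ zigzagTgt m i = zigzagTgt m j := by
    have hi := zigzagSrc_lt_zigzagTgt i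
    have hj := zigzagSrc_lt_zigzagTgt j
    rcases Sym2.eq_iff.1 h with h | ⟨hs, ht⟩
    · exact h
    · exact absurd (hs ▸ ht ▸ hi) hj.asymm
  rcases i with i | i <;> rcases j with j | j <;> (try induction i using Fin.cases) <;>
    (try induction j using Fin.cases) <;>
    simp only [zigzagSrc, zigzagTgt, Sum.elim_inl, Sum.elim_inr, Fin.cons_zero, Fin.cons_succ,
        Fin.ext_iff, Fin.val_succ, Fin.val_castSucc, Fin.val_zero, Fin.val_last,
        Sum.inl.injEq, Sum.inr.injEq, reduceCtorEq, false_and] at hends ⊢ <;> omega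

lemma zigzagEdge_mem (j : Fin (m + 1) ⊕ Fin (m + 1)) :
    zigzagEdge m j ∈ (zigzag (m + 1)).edgeSet := by
  rw [zigzagEdge, SimpleGraph.mem_edgeSet, zigzag, SimpleGraph.fromRel_adj]
  refine ⟨(zigzagSrc_lt_zigzagTgt j).ne, ?_⟩
  rcases j with j | j
  · induction j using Fin.cases <;> simp [zigzagSrc, zigzagTgt]
    omega
  · simp [zigzagSrc, zigzagTgt]

lemma exists_zigzagEdge_eq_of_lt {a b : Fin (m + 2)} (hab : a < b)
    (h : (zigzag (m + 1)).Adj a b) : ∃ j, zigzagEdge m j = s(a, b) := by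
  rw [zigzag, SimpleGraph.fromRel_adj] at h
  have hgap : (b : ℕ) = a + 1 ∨ (b : ℕ) = a + 2 ∨ ((a : ℕ) = 0 ∧ (b : ℕ) = m + 1) := by
    have := h.2
    have := Fin.lt_def.1 hab
    omega
  rcases hgap with hb_one | hb_two | ⟨ha, hb_last⟩
  · refine ⟨Sum.inr ⟨a, by omega⟩, ?_⟩
    simp [zigzagEdge, zigzagSrc, zigzagTgt, Fin.ext_iff, hb_one]
  · refine ⟨Sum.inl (Fin.succ ⟨a, by omega⟩), ?_⟩
    simp only [zigzagEdge, zigzagSrc, zigzagTgt, Sum.elim_inl, Fin.cons_succ]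
    exact congrArg (s(a, ·)) (Fin.ext hb_two.symm)
  · refine ⟨Sum.inl 0, ?_⟩
    simp [zigzagEdge, zigzagSrc, zigzagTgt, Fin.ext_iff, ha, hb_last]

lemma exists_zigzagEdge_eq {e : Sym2 (Fin (m + 2))} (he : e ∈ (zigzag (m + 1)).edgeSet) :
    ∃ j, zigzagEdge m j = e := by
  induction e using Sym2.ind with
  | _ a b =>
  rw [SimpleGraph.mem_edgeSet] at he
  rcases he.ne.lt_or_gt with h | h
  · exact exists_zigzagEdge_eq_of_lt h he
  · rw [Sym2.eq_swap]
    exact exists_zigzagEdge_eq_of_lt h he.symm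

/-- The enumeration `zigzagEdge` as an equivalence onto the edge set of the zig-zag graph. -/
noncomputable def zigzagEdgeEquiv (hm : 2 ≤ m) :
    Fin (m + 1) ⊕ Fin (m + 1) ≃ (zigzag (m + 1)).edgeSet :=
  Equiv.ofBijective (fun j => ⟨zigzagEdge m j, zigzagEdge_mem j⟩)
    ⟨fun _ _ h => zigzagEdge_injective hm (congrArg Subtype.val h),
      fun e => (exists_zigzagEdge_eq e.2).imp fun _ hj => Subtype.ext hj⟩

lemma coe_zigzagEdgeEquiv (hm : 2 ≤ m) (j : Fin (m + 1) ⊕ Fin (m + 1)) :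
    (zigzagEdgeEquiv hm j : Sym2 (Fin (m + 2))) = zigzagEdge m j := rfl

end ZigzagEdges

section LoopMatrix

variable (m : ℕ)

/-- The column of the chord `c` expresses that chord, up to sign, as a sum of edges of the
Hamiltonian path of the zig-zag graph. -/
def chordMatrix : Matrix (Fin (m + 1)) (Fin (m + 1)) ℝ :=
  Matrix.of fun i => Fin.cons 1 fun c : Fin m =>
    -((if i = c.castSucc then 1 else 0) + (if i = c.succ then 1 else 0))

/-- The incidence matrix of the Hamiltonian path of the zig-zag graph, without the row of the
vertex `0`. -/
def pathIncidence : Matrix (Fin (m + 1)) (Fin (m + 1)) ℝ :=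
  Matrix.of fun v i => incidence ℝ i.castSucc i.succ v.succ

lemma det_pathIncidence : (pathIncidence m).det = 1 := by
  rw [Matrix.det_of_isUpperTriangular]
  · exact Finset.prod_eq_one fun i _ => by simp [pathIncidence, incidence, Fin.ext_iff]
  · intro v u huv
    have : (u : ℕ) < v := huv
    simp only [pathIncidence, incidence, Matrix.of_apply, Fin.ext_iff, Fin.val_succ,
      Fin.val_castSucc]
    rw [if_neg (by omega), if_neg (by omega), sub_self]

lemma pathIncidence_mul_chordMatrix (v c : Fin (m + 1)) :
    (pathIncidence m * chordMatrix m) v c = (if c = 0 then 1 else -1) *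
      incidence ℝ (zigzagSrc m (Sum.inl c)) (zigzagTgt m (Sum.inl c)) v.succ := by
  rw [Matrix.mul_apply]
  induction c using Fin.cases with
  | zero =>
    have hsum_castSucc :=
      Fin.sum_univ_castSucc fun w : Fin (m + 2) => if w = v.succ then (1 : ℝ) else 0
    have hsum_succ := Fin.sum_univ_succ fun w : Fin (m + 2) => if w = v.succ then (1 : ℝ) else 0
    simp only [pathIncidence, chordMatrix, Matrix.of_apply, Fin.cons_zero, mul_one, incidence,
      zigzagSrc, zigzagTgt, Sum.elim_inl, if_true, one_mul, Finset.sum_sub_distrib]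
    linarith
  | succ d =>
    simp only [pathIncidence, chordMatrix, Matrix.of_apply, Fin.cons_succ, mul_neg, mul_add,
      mul_ite, mul_one, mul_zero, Finset.sum_neg_distrib, Finset.sum_add_distrib,
      Finset.sum_ite_eq', Finset.mem_univ, if_true, incidence, zigzagSrc, zigzagTgt, Sum.elim_inl,
      Fin.succ_ne_zero, if_false, Fin.succ_castSucc]
    ring

/-- The matrix of the quadratic form of the loop momenta of the zig-zag graph: one loop for each
chord, closed up along the Hamiltonian path. -/
def loopMatrix (x : Fin (m + 1) ⊕ Fin (m + 1) → ℝ) : Matrix (Fin (m + 1)) (Fin (m + 1)) ℝ :=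
  Matrix.diagonal (fun c => x (Sum.inl c)) +
    (chordMatrix m).transpose * Matrix.diagonal (fun i => x (Sum.inr i)) * chordMatrix m

variable {m}

lemma reducedLaplacian_zigzag (w : Fin (m + 1) ⊕ Fin (m + 1) → ℝ) :
    (reducedLaplacian (fun e => ∑ j, if zigzagEdge m j = e then w j else 0) 0).submatrix
        (finSuccAboveEquiv 0) (finSuccAboveEquiv 0) =
      pathIncidence m * (Matrix.diagonal (fun i => w (Sum.inr i)) + chordMatrix m *
        Matrix.diagonal (fun c => w (Sum.inl c)) * (chordMatrix m).transpose) *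
        (pathIncidence m).transpose := by
  have hexpand (D N X Z : Matrix (Fin (m + 1)) (Fin (m + 1)) ℝ) :
      D * (X + N * Z * N.transpose) * D.transpose =
        D * X * D.transpose + D * N * Z * (D * N).transpose := by
    rw [Matrix.transpose_mul]
    simp only [mul_add, add_mul, mul_assoc]
  ext v u
  rw [hexpand, Matrix.submatrix_apply, reducedLaplacian_sum, Fintype.sum_sum_type, add_comm,
    Matrix.add_apply, Matrix.mul_apply, Matrix.mul_apply]
  have hsingle (j) (v u : {v : Fin (m + 2) // v ≠ 0}) :
      reducedLaplacian (fun e => if zigzagEdge m j = e then w j else 0) 0 v u =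
        w j * (incidence ℝ (zigzagSrc m j) (zigzagTgt m j) v *
          incidence ℝ (zigzagSrc m j) (zigzagTgt m j) u) :=
    reducedLaplacian_single (zigzagSrc_lt_zigzagTgt j).ne (w j) v u
  simp only [hsingle, Matrix.mul_diagonal, Matrix.transpose_apply, pathIncidence_mul_chordMatrix,
    finSuccAboveEquiv_apply, Fin.succAbove_zero]
  congr 1 <;> refine Finset.sum_congr rfl fun i _ => ?_
  · simp only [pathIncidence, Matrix.of_apply, zigzagSrc, zigzagTgt, Sum.elim_inr]
    ring
  · split_ifs <;> ring

lemma prod_mul_det_reducedLaplacian_zigzag {x : Fin (m + 1) ⊕ Fin (m + 1) → ℝ}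
    (hx : ∀ j, x j ≠ 0) :
    (∏ j, x j) * (reducedLaplacian
      (fun e => ∑ j, if zigzagEdge m j = e then (x j)⁻¹ else 0) 0).det = (loopMatrix m x).det := by
  rw [← Matrix.det_submatrix_equiv_self (finSuccAboveEquiv 0), reducedLaplacian_zigzag,
    Matrix.det_mul, Matrix.det_mul, Matrix.det_transpose, det_pathIncidence, one_mul, mul_one,
    Fintype.prod_sum_type, det_diagonal_inv_add_mul_mul_transpose _ (fun i => hx _) fun c => hx _,
    loopMatrix]

theorem kirchhoff_zigzag (hm : 2 ≤ m) {x : (zigzag (m + 1)).edgeSet → ℝ} (hx : ∀ e, x e ≠ 0) :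
    kirchhoff (zigzag (m + 1)) x = (loopMatrix m fun j => x (zigzagEdgeEquiv hm j)).det := by
  rw [← prod_mul_det_reducedLaplacian_zigzag fun j => hx _, (zigzagEdgeEquiv hm).prod_comp x]
  refine kirchhoff_eq_prod_mul_det_reducedLaplacian _ _ hx (fun e => ?_) fun e he => ?_
  · obtain ⟨j, rfl⟩ := (zigzagEdgeEquiv hm).surjective e
    simp only [coe_zigzagEdgeEquiv, (zigzagEdge_injective hm).eq_iff]
    simp
  · refine Finset.sum_eq_zero fun j _ => if_neg ?_
    rintro rfl
    exact he (zigzagEdge_mem j)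

end LoopMatrix

/-! ### Gaussian integrals over tuples of vectors -/

lemma lintegral_exp_neg_mul_Ioi {a : ℝ} (ha : 0 ≤ a) :
    ∫⁻ u in Set.Ioi (0 : ℝ), ENNReal.ofReal (Real.exp (-(u * a))) = (ENNReal.ofReal a)⁻¹ := by
  rcases ha.eq_or_lt with rfl | ha
  · simp
  · have hint : ∫ u in Set.Ioi (0 : ℝ), Real.exp (-(u * a)) = a⁻¹ := by
      have hscale := integral_comp_mul_right_Ioi (fun u => Real.exp (-u)) 0 ha
      simpa only [zero_mul, integral_exp_neg_Ioi, neg_zero, Real.exp_zero, smul_eq_mul,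
        mul_one] using hscale
    have hint_ne : ∫ u in Set.Ioi (0 : ℝ), Real.exp (-(u * a)) ≠ 0 := by
      rw [hint]
      exact inv_ne_zero ha.ne'
    rw [← ofReal_integral_eq_lintegral_ofReal (.of_integral_ne_zero hint_ne)
      (.of_forall fun _ => (Real.exp_pos _).le), hint, ENNReal.ofReal_inv_of_pos ha]

lemma lintegral_pi_fin_prod {n : ℕ} {α : Type*} [MeasurableSpace α] (μ : Fin n → Measure α)
    [∀ i, SigmaFinite (μ i)] {f : Fin n → α → ℝ≥0∞} (hf : ∀ i, Measurable (f i)) :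
    ∫⁻ x, ∏ i, f i (x i) ∂(Measure.pi μ) = ∏ i, ∫⁻ x, f i x ∂(μ i) := by
  induction n with
  | zero => simp
  | succ n ih =>
    have h := (measurePreserving_piFinSuccAbove μ 0).symm
    rw [← h.lintegral_comp_emb (MeasurableEquiv.measurableEmbedding _)]
    simp_rw [MeasurableEquiv.piFinSuccAbove_symm_apply, Fin.insertNthEquiv,
      Fin.prod_univ_succ, Fin.insertNth_zero, Equiv.coe_fn_mk, Fin.cons_succ,
      Fin.zero_succAbove, cast_eq, Fin.cons_zero]
    rw [lintegral_prod_mul (f := f 0) (g := fun y : Fin n → α => ∏ i : Fin n, f i.succ (y i)),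
      ih (fun i => μ i.succ) (fun i => hf i.succ)]
    · exact (hf 0).aemeasurable
    · exact (Finset.measurable_prod _ fun i _ =>
        (hf i.succ).comp (measurable_pi_apply i)).aemeasurable

lemma lintegral_pi_prod {ι α : Type*} [Fintype ι] [MeasurableSpace α] (μ : ι → Measure α)
    [∀ i, SigmaFinite (μ i)] {f : ι → α → ℝ≥0∞} (hf : ∀ i, Measurable (f i)) :
    ∫⁻ x, ∏ i, f i (x i) ∂(Measure.pi μ) = ∏ i, ∫⁻ x, f i x ∂(μ i) := by
  let e := (Fintype.equivFin ι).symm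
  rw [← (measurePreserving_piCongrLeft μ e).lintegral_comp_emb
    (MeasurableEquiv.measurableEmbedding _)]
  simp_rw [← e.prod_comp, MeasurableEquiv.coe_piCongrLeft, Equiv.piCongrLeft_apply_apply]
  exact lintegral_pi_fin_prod (fun i => μ (e i)) (fun i => hf (e i))

lemma lintegral_fin_cons {E : Type*} [MeasureSpace E] [SigmaFinite (volume : Measure E)] {m : ℕ}
    {f : (Fin (m + 1) → E) → ℝ≥0∞} (hf : Measurable f) :
    ∫⁻ k, f k = ∫⁻ p, ∫⁻ Y, f (Fin.cons p Y) := by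
  have h := (volume_preserving_piFinSuccAbove (fun _ : Fin (m + 1) => E) 0).symm
  rw [← h.lintegral_comp_emb (MeasurableEquiv.measurableEmbedding _), Measure.volume_eq_prod,
    lintegral_prod]
  · refine lintegral_congr fun p => lintegral_congr fun Y => ?_
    simp [MeasurableEquiv.piFinSuccAbove_symm_apply, Fin.insertNthEquiv]
  · exact (hf.comp (MeasurableEquiv.measurable _)).aemeasurable

section TupleMap

variable {ι κ R M : Type*} [Fintype κ] [CommRing R] [AddCommGroup M] [Module R M]

/-- The action of a matrix on tuples of vectors of an arbitrary module. -/
def tupleMap (B : Matrix ι κ R) : (κ → M) →ₗ[R] (ι → M) where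
  toFun k i := ∑ j, B i j • k j
  map_add' k l := by
    funext i
    simp [Finset.sum_add_distrib]
  map_smul' c k := by
    funext i
    simp [Finset.smul_sum, smul_comm c]

lemma tupleMap_apply (B : Matrix ι κ R) (k : κ → M) (i : ι) :
    tupleMap B k i = ∑ j, B i j • k j := rfl

lemma det_tupleMap [Module.Free R M] [Module.Finite R M] [DecidableEq κ] (B : Matrix κ κ R) :
    LinearMap.det (tupleMap B : (κ → M) →ₗ[R] (κ → M)) = B.det ^ Module.finrank R M := by
  nontriviality R
  let e : (κ → M) ≃ₗ[R] (Fin (Module.finrank R M) → κ → R) :=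
    (LinearEquiv.piCongrRight fun _ => (Module.finBasis R M).equivFun).trans
      (Matrix.transposeLinearEquiv κ (Fin (Module.finrank R M)) R R)
  have he (k : κ → M) (a) (i) : e k a i = (Module.finBasis R M).equivFun (k i) a := rfl
  have hconj : (e : (κ → M) →ₗ[R] (Fin (Module.finrank R M) → κ → R)) ∘ₗ tupleMap B =
      (LinearMap.pi fun a => (Matrix.toLin' B).comp (LinearMap.proj a)) ∘ₗ
        (e : (κ → M) →ₗ[R] (Fin (Module.finrank R M) → κ → R)) := by
    refine LinearMap.ext fun k => ?_
    funext a i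
    simp [he, tupleMap_apply, Matrix.mulVec, dotProduct]
  rw [← LinearMap.det_conj _ e, ← LinearMap.comp_assoc, hconj, LinearMap.comp_assoc,
    LinearEquiv.comp_coe, LinearEquiv.symm_trans_self, LinearEquiv.refl_toLinearMap,
    LinearMap.comp_id, LinearMap.det_pi]
  simp

end TupleMap

section Gaussian

variable {ι κ E : Type*} [Fintype ι] [Fintype κ] [NormedAddCommGroup E] [InnerProductSpace ℝ E]

open Matrix in
lemma sum_transpose_mul_diagonal_mul_inner [DecidableEq ι] (N : Matrix ι κ ℝ) (x : ι → ℝ)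
    (k : κ → E) :
    ∑ c, ∑ d, (Nᵀ * diagonal x * N) c d * inner ℝ (k c) (k d) =
      ∑ i, x i * ‖tupleMap N k i‖ ^ 2 := by
  simp only [← real_inner_self_eq_norm_sq, tupleMap_apply, sum_inner, inner_sum,
    real_inner_smul_left, real_inner_smul_right, Matrix.mul_apply (N := N), mul_diagonal,
    transpose_apply, Finset.mul_sum, Finset.sum_mul]
  rw [Finset.sum_congr rfl fun i _ => Finset.sum_comm, Finset.sum_comm]
  refine Finset.sum_congr rfl fun i _ => ?_
  rw [Finset.sum_comm]
  exact Finset.sum_congr rfl fun c _ => Finset.sum_congr rfl fun d _ => by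
    rw [real_inner_comm]
    ring

variable [FiniteDimensional ℝ E] [MeasurableSpace E] [BorelSpace E]

lemma lintegral_exp_neg_mul_norm_sq {b : ℝ} (hb : 0 < b) :
    ∫⁻ v : E, ENNReal.ofReal (Real.exp (-(b * ‖v‖ ^ 2))) =
      ENNReal.ofReal ((Real.pi / b) ^ (Module.finrank ℝ E / 2 : ℝ)) := by
  have hint : ∫ v : E, Real.exp (-(b * ‖v‖ ^ 2)) =
      (Real.pi / b) ^ (Module.finrank ℝ E / 2 : ℝ) := by
    simpa only [neg_mul] using GaussianFourier.integral_rexp_neg_mul_sq_norm (V := E) hb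
  have hint_ne : ∫ v : E, Real.exp (-(b * ‖v‖ ^ 2)) ≠ 0 := by
    rw [hint]
    positivity
  rw [← ofReal_integral_eq_lintegral_ofReal (.of_integral_ne_zero hint_ne)
    (.of_forall fun _ => (Real.exp_pos _).le), hint]

lemma lintegral_exp_neg_sum_norm_sq :
    ∫⁻ k : ι → E, ENNReal.ofReal (Real.exp (-∑ i, ‖k i‖ ^ 2)) =
      ENNReal.ofReal (Real.pi ^ (Module.finrank ℝ E / 2 : ℝ)) ^ Fintype.card ι := by
  have hprod (k : ι → E) : ENNReal.ofReal (Real.exp (-∑ i, ‖k i‖ ^ 2)) =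
      ∏ i, ENNReal.ofReal (Real.exp (-(1 * ‖k i‖ ^ 2))) := by
    simp_rw [one_mul]
    rw [← ENNReal.ofReal_prod_of_nonneg fun i _ => (Real.exp_pos _).le, ← Real.exp_sum,
      Finset.sum_neg_distrib]
  simp_rw [hprod]
  rw [volume_pi, lintegral_pi_prod (fun _ : ι => (volume : Measure E))
    (f := fun _ v => ENNReal.ofReal (Real.exp (-(1 * ‖v‖ ^ 2)))) fun _ => by fun_prop]
  simp only [lintegral_exp_neg_mul_norm_sq one_pos, div_one, Finset.prod_const, Finset.card_univ]

lemma lintegral_comp_tupleMap [DecidableEq ι] {B : Matrix ι ι ℝ} (hB : B.det ≠ 0)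
    {f : (ι → E) → ℝ≥0∞} (hf : Measurable f) :
    ∫⁻ k, f (tupleMap B k) =
      ENNReal.ofReal |(B.det ^ Module.finrank ℝ E)⁻¹| * ∫⁻ k, f k := by
  have hdet : LinearMap.det (tupleMap B : (ι → E) →ₗ[ℝ] (ι → E)) ≠ 0 := by
    rw [det_tupleMap]
    exact pow_ne_zero _ hB
  have hcont : Continuous (tupleMap B : (ι → E) →ₗ[ℝ] (ι → E)) :=
    LinearMap.continuous_of_finiteDimensional _
  rw [← lintegral_map hf hcont.measurable,
    Measure.map_linearMap_addHaar_eq_smul_addHaar volume hdet, lintegral_smul_measure,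
    det_tupleMap, smul_eq_mul]

open scoped MatrixOrder ComplexOrder in
theorem lintegral_exp_neg_quadratic_of_posDef [DecidableEq ι] {A : Matrix ι ι ℝ}
    (hA : A.PosDef) :
    ∫⁻ k : ι → E, ENNReal.ofReal (Real.exp (-∑ i, ∑ j, A i j * inner ℝ (k i) (k j))) =
      ENNReal.ofReal ((Real.pi ^ Fintype.card ι / A.det) ^ (Module.finrank ℝ E / 2 : ℝ)) := by
  obtain ⟨B, rfl⟩ := CStarAlgebra.nonneg_iff_eq_star_mul_self.1 hA.posSemidef.nonneg
  have hstar : star B * B = B.transpose * Matrix.diagonal (fun _ => 1) * B := by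
    rw [Matrix.diagonal_one, Matrix.mul_one, Matrix.star_eq_conjTranspose,
      Matrix.conjTranspose_eq_transpose_of_trivial]
  have hdet : (star B * B).det = |B.det| ^ 2 := by
    rw [hstar, Matrix.diagonal_one, Matrix.mul_one, Matrix.det_mul, Matrix.det_transpose, sq_abs,
      sq]
  have hB : B.det ≠ 0 := fun h => hA.det_pos.ne' (by rw [hdet, h, abs_zero, sq, zero_mul])
  have hquad (k : ι → E) : ∑ i, ∑ j, (star B * B) i j * inner ℝ (k i) (k j) =
      ∑ i, ‖tupleMap B k i‖ ^ 2 := by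
    simp_rw [hstar, sum_transpose_mul_diagonal_mul_inner, one_mul]
  simp_rw [hquad]
  rw [lintegral_comp_tupleMap hB (f := fun k => ENNReal.ofReal (Real.exp (-∑ i, ‖k i‖ ^ 2)))
    (by fun_prop), lintegral_exp_neg_sum_norm_sq, ← ENNReal.ofReal_pow (by positivity),
    ← ENNReal.ofReal_mul (abs_nonneg _), hdet, Real.div_rpow (by positivity) (by positivity),
    ← Real.rpow_natCast_mul (by positivity), ← Real.rpow_natCast_mul (abs_nonneg _),
    ← Real.rpow_mul_natCast (by positivity), abs_inv, abs_pow, Nat.cast_ofNat,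
    mul_div_cancel₀ _ (two_ne_zero' ℝ), Real.rpow_natCast,
    mul_comm (Fintype.card ι : ℝ), inv_mul_eq_div]

end Gaussian

/-! ### Schwinger's trick and the transfer operator -/

section Schwinger

lemma setOf_forall_pos_eq_pi (ι : Type*) :
    {u : ι → ℝ | ∀ i, 0 < u i} = Set.univ.pi fun _ => Set.Ioi 0 := by
  ext u
  simp

variable {E : Type*} [NormedAddCommGroup E]

/-- The kernel `‖x‖⁻ᵏ` of a Riesz potential, which is infinite at the origin for `k ≠ 0`. -/
noncomputable def rieszKernel (k : ℕ) (x : E) : ℝ≥0∞ := (‖x‖ₑ ^ k)⁻¹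

@[fun_prop]
lemma measurable_rieszKernel [MeasurableSpace E] [OpensMeasurableSpace E] (k : ℕ) :
    Measurable (rieszKernel k : E → ℝ≥0∞) := by
  unfold rieszKernel
  fun_prop

lemma lintegral_Ioi_exp_neg_mul_norm_sq (v : E) :
    ∫⁻ u in Set.Ioi (0 : ℝ), ENNReal.ofReal (Real.exp (-(u * ‖v‖ ^ 2))) = rieszKernel 2 v := by
  rw [lintegral_exp_neg_mul_Ioi (by positivity), rieszKernel, ENNReal.ofReal_pow (norm_nonneg _),
    ofReal_norm]

lemma setLIntegral_prod_exp_neg_mul_norm_sq {ι : Type*} [Fintype ι] (w : ι → E) :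
    ∫⁻ u in {u : ι → ℝ | ∀ i, 0 < u i},
        ∏ i, ENNReal.ofReal (Real.exp (-(u i * ‖w i‖ ^ 2))) = ∏ i, rieszKernel 2 (w i) := by
  rw [setOf_forall_pos_eq_pi, volume_pi, Measure.restrict_pi_pi,
    lintegral_pi_prod (fun _ => volume.restrict (Set.Ioi (0 : ℝ)))
      (f := fun i v => ENNReal.ofReal (Real.exp (-(v * ‖w i‖ ^ 2)))) fun i => by fun_prop]
  simp only [lintegral_Ioi_exp_neg_mul_norm_sq]

end Schwinger

section Transfer

variable {E : Type*} [NormedAddCommGroup E]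

/-- The differences of consecutive terms of the chain `x, p - Y₀, …, p - Yₘ₋₁` and
`Y₀, …, Yₘ₋₁, 0`: the momenta of the path edges of the zig-zag graph with external momentum `p`
and loop momenta `Y`, where the first vertex is moved to `x` to allow induction. -/
def chainDiff {m : ℕ} (p x : E) (Y : Fin m → E) (i : Fin (m + 1)) : E :=
  (Fin.cons x fun c => p - Y c : Fin (m + 1) → E) i - (Fin.snoc Y 0 : Fin (m + 1) → E) i

variable {m : ℕ} (p x : E)

lemma chainDiff_cons_zero (y : E) (Y : Fin m → E) :
    chainDiff p x (Fin.cons y Y : Fin (m + 1) → E) 0 = x - y := by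
  rw [chainDiff, ← Fin.cons_snoc_eq_snoc_cons, Fin.cons_zero, Fin.cons_zero]

lemma chainDiff_cons_succ (y : E) (Y : Fin m → E) (i : Fin (m + 1)) :
    chainDiff p x (Fin.cons y Y : Fin (m + 1) → E) i.succ = chainDiff p (p - y) Y i := by
  rw [chainDiff, ← Fin.cons_snoc_eq_snoc_cons, Fin.cons_succ, Fin.cons_succ, chainDiff]
  congr 1
  cases i using Fin.cases <;> simp only [Fin.cons_zero, Fin.cons_succ]

lemma tupleMap_chordMatrix_cons [Module ℝ E] (Y : Fin m → E) (i : Fin (m + 1)) :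
    tupleMap (chordMatrix m) (Fin.cons p Y : Fin (m + 1) → E) i = chainDiff p p Y i := by
  have hcons : (Fin.cons p fun c => p - Y c : Fin (m + 1) → E) i =
      p - ∑ c : Fin m, if i = c.succ then Y c else 0 := by
    cases i using Fin.cases with
    | zero => simp [(Fin.succ_ne_zero _).symm]
    | succ j => simp [Fin.succ_inj]
  have hsnoc : (Fin.snoc Y 0 : Fin (m + 1) → E) i =
      ∑ c : Fin m, if i = c.castSucc then Y c else 0 := by
    cases i using Fin.lastCases with
    | last => simp [(Fin.castSucc_lt_last _).ne']
    | cast j => simp [Fin.castSucc_inj]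
  rw [tupleMap_apply, Fin.sum_univ_succ, chainDiff, hcons, hsnoc]
  simp only [chordMatrix, Matrix.of_apply, Fin.cons_zero, Fin.cons_succ, one_smul, neg_smul,
    add_smul, ite_smul, zero_smul, Finset.sum_neg_distrib, Finset.sum_add_distrib]
  abel

/-- The transfer operator of the zig-zag graph with external momentum `p`: one application adds a
triangle to the chain. -/
noncomputable def transfer [MeasureSpace E] (p : E) (φ : E → ℝ≥0∞) (x : E) : ℝ≥0∞ :=
  ∫⁻ y, rieszKernel 2 (x - y) * rieszKernel 2 y * φ (p - y)

section Measurable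

variable [SecondCountableTopology E] [MeasurableSpace E] [BorelSpace E]

@[fun_prop]
lemma measurable_chainDiff (i : Fin (m + 1)) :
    Measurable fun Y : Fin m → E => chainDiff p x Y i := by
  have hcont : Continuous fun Y : Fin m → E => chainDiff p x Y i := by
    unfold chainDiff
    fun_prop
  exact hcont.measurable

end Measurable

lemma lintegral_zigzag_chain [SecondCountableTopology E] [MeasureSpace E] [BorelSpace E]
    [SigmaFinite (volume : Measure E)] :
    ∫⁻ Y : Fin m → E, (∏ c, rieszKernel 2 (Y c)) * ∏ i, rieszKernel 2 (chainDiff p x Y i) =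
      (transfer p)^[m] (rieszKernel 2) x := by
  induction m generalizing x with
  | zero => simp [chainDiff, Fin.snoc, volume_pi]
  | succ m ih =>
    rw [lintegral_fin_cons (by fun_prop), Function.iterate_succ_apply', transfer]
    refine lintegral_congr fun y => ?_
    rw [← ih (p - y), ← lintegral_const_mul _ (by fun_prop)]
    refine lintegral_congr fun Y => ?_
    simp only [Fin.prod_univ_succ, Fin.cons_zero, Fin.cons_succ, chainDiff_cons_zero,
      chainDiff_cons_succ]
    ring

end Transfer

section EdgeMomenta

variable {m : ℕ} {E : Type*} [NormedAddCommGroup E] [InnerProductSpace ℝ E]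

/-- The momenta flowing through the edges of the zig-zag graph, given the loop momenta `k`. -/
def edgeVec (k : Fin (m + 1) → E) : Fin (m + 1) ⊕ Fin (m + 1) → E :=
  Sum.elim k (tupleMap (chordMatrix m) k)

@[fun_prop]
lemma measurable_edgeVec [SecondCountableTopology E] [MeasurableSpace E] [BorelSpace E]
    (j : Fin (m + 1) ⊕ Fin (m + 1)) : Measurable fun k : Fin (m + 1) → E => edgeVec k j := by
  rcases j with j | j <;>
    simp only [edgeVec, Sum.elim_inl, Sum.elim_inr, tupleMap_apply] <;> fun_prop

lemma sum_loopMatrix_mul_inner (x : Fin (m + 1) ⊕ Fin (m + 1) → ℝ) (k : Fin (m + 1) → E) :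
    ∑ c, ∑ d, loopMatrix m x c d * inner ℝ (k c) (k d) = ∑ j, x j * ‖edgeVec k j‖ ^ 2 := by
  simp only [loopMatrix, Matrix.add_apply, add_mul, Finset.sum_add_distrib,
    sum_transpose_mul_diagonal_mul_inner, Fintype.sum_sum_type, edgeVec, Sum.elim_inl,
    Sum.elim_inr, Matrix.diagonal_apply, ite_mul, zero_mul, Finset.sum_ite_eq, Finset.mem_univ,
    if_true, real_inner_self_eq_norm_sq]

lemma loopMatrix_posDef {x : Fin (m + 1) ⊕ Fin (m + 1) → ℝ} (hx : ∀ j, 0 < x j) :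
    (loopMatrix m x).PosDef := by
  have hpath : Matrix.PosSemidef (Matrix.diagonal fun i => x (Sum.inr i)) :=
    Matrix.PosSemidef.diagonal fun i => (hx _).le
  refine Matrix.PosDef.add_posSemidef (Matrix.PosDef.diagonal fun c => hx _) ?_
  simpa only [Matrix.conjTranspose_eq_transpose_of_trivial] using
    hpath.conjTranspose_mul_mul_same (chordMatrix m)

/-- Euclidean space-time. -/
abbrev R4 : Type := EuclideanSpace ℝ (Fin 4)

lemma rpow_finrank_R4_div_two (a : ℝ) : a ^ (Module.finrank ℝ R4 / 2 : ℝ) = a ^ 2 := by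
  rw [finrank_euclideanSpace_fin, ← Real.rpow_natCast]
  norm_num

lemma lintegral_prod_exp_neg_edgeVec {x : Fin (m + 1) ⊕ Fin (m + 1) → ℝ} (hx : ∀ j, 0 < x j) :
    ∫⁻ k : Fin (m + 1) → R4, ∏ j, ENNReal.ofReal (Real.exp (-(x j * ‖edgeVec k j‖ ^ 2))) =
      ENNReal.ofReal (Real.pi ^ (2 * (m + 1))) *
        ENNReal.ofReal ((loopMatrix m x).det⁻¹ ^ 2) := by
  have hgauss := lintegral_exp_neg_quadratic_of_posDef (E := R4) (loopMatrix_posDef hx)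
  rw [rpow_finrank_R4_div_two, div_pow, ← pow_mul, Fintype.card_fin, mul_comm (m + 1),
    div_eq_mul_inv, ← inv_pow, ENNReal.ofReal_mul (by positivity)] at hgauss
  rw [← hgauss]
  refine lintegral_congr fun k => ?_
  rw [← ENNReal.ofReal_prod_of_nonneg fun _ _ => (Real.exp_pos _).le, ← Real.exp_sum,
    Finset.sum_neg_distrib, sum_loopMatrix_mul_inner]

end EdgeMomenta

section Residue

lemma chart_pos {V : Type*} [Fintype V] {G : SimpleGraph V} {e₀ : G.edgeSet}
    {u : {e : G.edgeSet // e ≠ e₀} → ℝ} (hu : ∀ e, 0 < u e) (e : G.edgeSet) :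
    0 < chart G e₀ u e := by
  unfold chart
  split_ifs with h
  exacts [one_pos, hu ⟨e, h⟩]

lemma prod_chart {V M : Type*} [Fintype V] [CommMonoid M] {G : SimpleGraph V}
    [Fintype G.edgeSet] [DecidableEq G.edgeSet] (e₀ : G.edgeSet)
    (u : {e : G.edgeSet // e ≠ e₀} → ℝ) (f : ℝ → G.edgeSet → M) :
    ∏ e, f (chart G e₀ u e) e = f 1 e₀ * ∏ e : {e // e ≠ e₀}, f (u e) e := by
  rw [Fintype.prod_eq_mul_prod_subtype_ne _ e₀, chart, dif_pos rfl]
  exact congrArg _ (Finset.prod_congr rfl fun e _ => by rw [chart, dif_neg e.2])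

variable {m : ℕ} (hm : 2 ≤ m)

lemma prod_ne_zigzagEdgeEquiv {M : Type*} [CommMonoid M] (f : Fin (m + 1) ⊕ Fin (m + 1) → M) :
    ∏ e : {e // e ≠ zigzagEdgeEquiv hm (Sum.inl 0)}, f ((zigzagEdgeEquiv hm).symm e) =
      (∏ c : Fin m, f (Sum.inl c.succ)) * ∏ i, f (Sum.inr i) := by
  have hsplit := Fintype.prod_eq_mul_prod_subtype_ne
    (fun e => Function.update f (Sum.inl 0) 1 ((zigzagEdgeEquiv hm).symm e))
    (zigzagEdgeEquiv hm (Sum.inl 0))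
  have hne (e : {e // e ≠ zigzagEdgeEquiv hm (Sum.inl 0)}) :
      (zigzagEdgeEquiv hm).symm e ≠ Sum.inl 0 := by
    rw [Ne, Equiv.symm_apply_eq]
    exact e.2
  simp only [Function.update_of_ne (hne _), Equiv.symm_apply_apply, Function.update_self,
    one_mul] at hsplit
  rw [← hsplit, (zigzagEdgeEquiv hm).symm.prod_comp, Fintype.prod_sum_type, Fin.prod_univ_succ]
  simp

lemma lintegral_exp_neg_edgeVec_chart
    {u : {e // e ≠ zigzagEdgeEquiv hm (Sum.inl 0)} → ℝ} (hu : ∀ e, 0 < u e) :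
    ∫⁻ k : Fin (m + 1) → R4, ENNReal.ofReal (Real.exp (-‖k 0‖ ^ 2)) *
        ∏ e, ENNReal.ofReal (Real.exp (-(u e * ‖edgeVec k ((zigzagEdgeEquiv hm).symm e)‖ ^ 2))) =
      ENNReal.ofReal (Real.pi ^ (2 * (m + 1))) *
        ENNReal.ofReal ((kirchhoff (zigzag (m + 1)) (chart _ _ u))⁻¹ ^ 2) := by
  rw [kirchhoff_zigzag hm fun e => (chart_pos hu e).ne',
    ← lintegral_prod_exp_neg_edgeVec fun j => chart_pos hu _]
  refine lintegral_congr fun k => ?_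
  rw [← (zigzagEdgeEquiv hm).symm.prod_comp]
  simp only [Equiv.apply_symm_apply]
  rw [prod_chart (zigzagEdgeEquiv hm (Sum.inl 0)) u fun t e =>
    ENNReal.ofReal (Real.exp (-(t * ‖edgeVec k ((zigzagEdgeEquiv hm).symm e)‖ ^ 2)))]
  simp [edgeVec]

lemma setLIntegral_exp_neg_edgeVec (k : Fin (m + 1) → R4) :
    ∫⁻ u in {u : {e // e ≠ zigzagEdgeEquiv hm (Sum.inl 0)} → ℝ | ∀ e, 0 < u e},
        ENNReal.ofReal (Real.exp (-‖k 0‖ ^ 2)) * ∏ e,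
          ENNReal.ofReal (Real.exp (-(u e * ‖edgeVec k ((zigzagEdgeEquiv hm).symm e)‖ ^ 2))) =
      ENNReal.ofReal (Real.exp (-‖k 0‖ ^ 2)) * ((∏ c : Fin m, rieszKernel 2 (k c.succ)) *
        ∏ i, rieszKernel 2 (tupleMap (chordMatrix m) k i)) := by
  rw [lintegral_const_mul' _ _ ENNReal.ofReal_ne_top, setLIntegral_prod_exp_neg_mul_norm_sq,
    prod_ne_zigzagEdgeEquiv hm fun j => rieszKernel 2 (edgeVec k j)]
  rfl

theorem lintegral_kirchhoff_zigzag :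
    ENNReal.ofReal (Real.pi ^ (2 * (m + 1))) *
      ∫⁻ u in {u : {e // e ≠ zigzagEdgeEquiv hm (Sum.inl 0)} → ℝ | ∀ e, 0 < u e},
        ENNReal.ofReal ((kirchhoff (zigzag (m + 1)) (chart _ _ u))⁻¹ ^ 2) =
      ∫⁻ p : R4, ENNReal.ofReal (Real.exp (-‖p‖ ^ 2)) * (transfer p)^[m] (rieszKernel 2) p := by
  have hmeas : MeasurableSet
      {u : {e // e ≠ zigzagEdgeEquiv hm (Sum.inl 0)} → ℝ | ∀ e, 0 < u e} := by
    rw [setOf_forall_pos_eq_pi]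
    exact .univ_pi fun _ => measurableSet_Ioi
  rw [← lintegral_const_mul' _ _ ENNReal.ofReal_ne_top,
    ← setLIntegral_congr_fun hmeas fun u hu => lintegral_exp_neg_edgeVec_chart hm hu,
    lintegral_lintegral_swap (by fun_prop)]
  simp_rw [setLIntegral_exp_neg_edgeVec, tupleMap_apply]
  rw [lintegral_fin_cons (by fun_prop)]
  refine lintegral_congr fun p => ?_
  rw [← lintegral_zigzag_chain, ← lintegral_const_mul' _ _ ENNReal.ofReal_ne_top]
  simp only [Fin.cons_zero, Fin.cons_succ, ← tupleMap_apply, tupleMap_chordMatrix_cons]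

end Residue

/-! ### The conformal star identity and the symmetrised transfer operator -/

section RieszKernel

variable {E : Type*} [NormedAddCommGroup E]

lemma rieszKernel_of_ne_zero (k : ℕ) {x : E} (hx : x ≠ 0) :
    rieszKernel k x = ENNReal.ofReal ((‖x‖ ^ k)⁻¹) := by
  have hnorm : 0 < ‖x‖ := norm_pos_iff.2 hx
  rw [rieszKernel, ENNReal.ofReal_inv_of_pos (by positivity), ENNReal.ofReal_pow hnorm.le,
    ofReal_norm]

lemma rieszKernel_ne_top (k : ℕ) {x : E} (hx : x ≠ 0) : rieszKernel k x ≠ ∞ := by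
  rw [rieszKernel_of_ne_zero k hx]
  exact ENNReal.ofReal_ne_top

lemma rieszKernel_add (j k : ℕ) (x : E) :
    rieszKernel (j + k) x = rieszKernel j x * rieszKernel k x := by
  rw [rieszKernel, pow_add, ENNReal.mul_inv (.inr (by finiteness)) (.inl (by finiteness)),
    rieszKernel, rieszKernel]

lemma rieszKernel_sub_comm (k : ℕ) (x y : E) : rieszKernel k (x - y) = rieszKernel k (y - x) := by
  rw [rieszKernel, rieszKernel, ← ofReal_norm, ← ofReal_norm, norm_sub_rev]

variable [NormedSpace ℝ E]

lemma rieszKernel_linearIsometryEquiv (k : ℕ) (U : E ≃ₗᵢ[ℝ] E) (x : E) :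
    rieszKernel k (U x) = rieszKernel k x := by
  rw [rieszKernel, rieszKernel, U.enorm_map]

lemma rieszKernel_smul (k : ℕ) {r : ℝ} (hr : 0 < r) (x : E) :
    rieszKernel k (r • x) = ENNReal.ofReal ((r ^ k)⁻¹) * rieszKernel k x := by
  have hr_pow : ENNReal.ofReal r ^ k ≠ 0 := pow_ne_zero _ (ENNReal.ofReal_pos.2 hr).ne'
  rw [rieszKernel, enorm_smul, Real.enorm_of_nonneg hr.le, mul_pow,
    ENNReal.mul_inv (.inl hr_pow) (.inl (by finiteness)), ENNReal.ofReal_inv_of_pos (by positivity),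
    ENNReal.ofReal_pow hr.le, rieszKernel]

end RieszKernel

section ChangeOfVariables

variable {E : Type*} [NormedAddCommGroup E] [InnerProductSpace ℝ E]

lemma image_inversion_compl_singleton {r : ℝ} (hr : r ≠ 0) (c : E) :
    EuclideanGeometry.inversion c r '' {c}ᶜ = {c}ᶜ := by
  rw [Set.image_compl_eq (EuclideanGeometry.inversion_bijective c hr), Set.image_singleton,
    EuclideanGeometry.inversion_self]

variable [FiniteDimensional ℝ E]

lemma abs_det_smul_reflection (a : ℝ) (K : Submodule ℝ E) :
    |(a • (K.reflection : E →L[ℝ] E)).det| = |a| ^ Module.finrank ℝ E := by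
  have hdet : LinearMap.det ((K.reflection : E →L[ℝ] E) : E →ₗ[ℝ] E) =
    (-1) ^ Module.finrank ℝ Kᗮ := K.det_reflection
  rw [ContinuousLinearMap.det, ContinuousLinearMap.toLinearMap_smul, LinearMap.det_smul, hdet,
    abs_mul, abs_pow, abs_neg_one_pow, mul_one]

variable [MeasurableSpace E] [BorelSpace E]

lemma lintegral_comp_linearIsometryEquiv (U : E ≃ₗᵢ[ℝ] E) (f : E → ℝ≥0∞) :
    ∫⁻ y, f (U y) = ∫⁻ y, f y :=
  U.measurePreserving.lintegral_comp_emb U.toHomeomorph.measurableEmbedding f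

lemma lintegral_comp_smul {r : ℝ} (hr : 0 < r) (f : E → ℝ≥0∞) :
    ENNReal.ofReal (r ^ Module.finrank ℝ E) * ∫⁻ y, f (r • y) = ∫⁻ y, f y := by
  have hmap : ∫⁻ y, f (r • y) = ∫⁻ y, f y ∂(Measure.map (fun y : E => r • y) volume) :=
    ((Homeomorph.smulOfNeZero r hr.ne').measurableEmbedding.lintegral_map f).symm
  rw [hmap, Measure.map_addHaar_smul volume hr.ne', lintegral_smul_measure, smul_eq_mul,
    ← mul_assoc, ← ENNReal.ofReal_mul (by positivity), abs_of_pos (by positivity),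
    mul_inv_cancel₀ (by positivity), ENNReal.ofReal_one, one_mul]

theorem lintegral_inversion [Nontrivial E] {r : ℝ} (hr : r ≠ 0) (f : E → ℝ≥0∞) :
    ∫⁻ v : E, ENNReal.ofReal ((r / ‖v‖) ^ (2 * Module.finrank ℝ E)) *
      f (EuclideanGeometry.inversion 0 r v) = ∫⁻ u, f u := by
  have hvol : (volume : Measure E).restrict {0}ᶜ = volume :=
    Measure.restrict_eq_self_of_ae_mem (Measure.ae_ne _ 0)
  have hchange := lintegral_image_eq_lintegral_abs_det_fderiv_mul (volume : Measure E)
    (measurableSet_singleton (0 : E)).compl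
    (fun x hx => (EuclideanGeometry.hasFDerivAt_inversion (R := r) hx).hasFDerivWithinAt)
    (EuclideanGeometry.inversion_injective _ hr).injOn f
  rw [image_inversion_compl_singleton hr, hvol] at hchange
  rw [hchange]
  refine lintegral_congr fun v => ?_
  rw [abs_det_smul_reflection, dist_zero_right, abs_of_nonneg (by positivity), ← pow_mul]

end ChangeOfVariables

section Inversion

variable {E : Type*} [NormedAddCommGroup E] [InnerProductSpace ℝ E]

lemma norm_inversion_zero (r : ℝ) (x : E) :
    ‖EuclideanGeometry.inversion 0 r x‖ = r ^ 2 / ‖x‖ := by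
  rw [← dist_zero_right, EuclideanGeometry.dist_inversion_center, dist_zero_right]

lemma norm_sub_inversion_zero {r : ℝ} (hr : r ≠ 0) {x v : E} (hx : x ≠ 0) (hv : v ≠ 0) :
    ‖x - EuclideanGeometry.inversion 0 r v‖ =
      ‖x‖ / ‖v‖ * ‖EuclideanGeometry.inversion 0 r x - v‖ := by
  have hx' : EuclideanGeometry.inversion 0 r x ≠ 0 := by
    rwa [Ne, EuclideanGeometry.inversion_eq_center hr]
  have hnorm : ‖x‖ ≠ 0 := norm_ne_zero_iff.2 hx
  nth_rw 1 [← EuclideanGeometry.inversion_inversion 0 hr x]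
  rw [← dist_eq_norm, EuclideanGeometry.dist_inversion_inversion hx' hv, dist_zero_right,
    dist_zero_right, norm_inversion_zero, dist_eq_norm]
  field_simp

lemma exists_isometry_inversion_swap {x z : E} (hx : x ≠ 0) (hz : z ≠ 0) {r : ℝ}
    (hr : r ^ 2 = ‖x‖ * ‖z‖) : ∃ U : E ≃ₗᵢ[ℝ] E,
      U (EuclideanGeometry.inversion 0 r x) = z ∧ U (EuclideanGeometry.inversion 0 r z) = x := by
  have hx_norm : ‖x‖ ≠ 0 := norm_ne_zero_iff.2 hx
  have hz_norm : ‖z‖ ≠ 0 := norm_ne_zero_iff.2 hz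
  have hinv (y : E) : EuclideanGeometry.inversion 0 r y = (‖x‖ * ‖z‖ / ‖y‖ ^ 2) • y := by
    simp [EuclideanGeometry.inversion, div_pow, hr]
  have hnorm : ‖EuclideanGeometry.inversion 0 r x‖ = ‖z‖ := by
    rw [norm_inversion_zero, hr, mul_div_cancel_left₀ _ hx_norm]
  let U := (ℝ ∙ (EuclideanGeometry.inversion 0 r x - z))ᗮ.reflection
  have hUx : U (EuclideanGeometry.inversion 0 r x) = z := Submodule.reflection_sub hnorm
  have hUz : U z = EuclideanGeometry.inversion 0 r x := by
    rw [← hUx]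
    exact Submodule.reflection_reflection _ _
  refine ⟨U, hUx, ?_⟩
  rw [hinv z, map_smul, hUz, hinv x, smul_smul]
  convert one_smul ℝ x
  field_simp

end Inversion

lemma star_integrand_inversion {x z v : R4} (hx : x ≠ 0) (hz : z ≠ 0) (hv : v ≠ 0) {r : ℝ}
    (hr : r ^ 2 = ‖x‖ * ‖z‖) (hvx : v ≠ EuclideanGeometry.inversion 0 r x)
    (hvz : v ≠ EuclideanGeometry.inversion 0 r z) :
    ENNReal.ofReal ((r / ‖v‖) ^ (2 * Module.finrank ℝ R4)) *
        (rieszKernel 2 (x - EuclideanGeometry.inversion 0 r v) *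
          rieszKernel 2 (EuclideanGeometry.inversion 0 r v) *
          rieszKernel 3 (EuclideanGeometry.inversion 0 r v - z)) =
      rieszKernel 1 z * (rieszKernel 3 (EuclideanGeometry.inversion 0 r z - v) *
        rieszKernel 1 v * rieszKernel 2 (v - EuclideanGeometry.inversion 0 r x)) := by
  have hx_norm : 0 < ‖x‖ := norm_pos_iff.2 hx
  have hz_norm : 0 < ‖z‖ := norm_pos_iff.2 hz
  have hv_norm : 0 < ‖v‖ := norm_pos_iff.2 hv
  have hr0 : r ≠ 0 := by
    rintro rfl
    exact (mul_pos hx_norm hz_norm).ne (by rw [← hr, zero_pow two_ne_zero])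
  have hvx_sub : EuclideanGeometry.inversion 0 r x - v ≠ 0 := sub_ne_zero.2 hvx.symm
  have hvz_sub : EuclideanGeometry.inversion 0 r z - v ≠ 0 := sub_ne_zero.2 hvz.symm
  have hvx_norm := norm_pos_iff.2 hvx_sub
  have hvz_norm := norm_pos_iff.2 hvz_sub
  have hinv_norm := norm_inversion_zero r v
  have hx_norm_sub := norm_sub_inversion_zero hr0 hx hv
  have hz_norm_sub := norm_sub_inversion_zero hr0 hz hv
  have hinv : EuclideanGeometry.inversion 0 r v ≠ 0 :=
    norm_pos_iff.1 (by rw [hinv_norm]; positivity)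
  have hx_sub : x - EuclideanGeometry.inversion 0 r v ≠ 0 :=
    norm_pos_iff.1 (by rw [hx_norm_sub]; positivity)
  have hz_sub : z - EuclideanGeometry.inversion 0 r v ≠ 0 :=
    norm_pos_iff.1 (by rw [hz_norm_sub]; positivity)
  have hpow : (r / ‖v‖) ^ (2 * Module.finrank ℝ R4) = (‖x‖ * ‖z‖) ^ 4 / ‖v‖ ^ 8 := by
    rw [finrank_euclideanSpace_fin, div_pow, pow_mul, hr]
  rw [rieszKernel_sub_comm 3 _ z, rieszKernel_sub_comm 2 v, rieszKernel_of_ne_zero _ hx_sub,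
    rieszKernel_of_ne_zero _ hz_sub, rieszKernel_of_ne_zero _ hinv, rieszKernel_of_ne_zero _ hz,
    rieszKernel_of_ne_zero _ hv, rieszKernel_of_ne_zero _ hvx_sub,
    rieszKernel_of_ne_zero _ hvz_sub, hx_norm_sub, hz_norm_sub, hinv_norm, hpow, hr]
  repeat rw [← ENNReal.ofReal_mul (by positivity)]
  congr 1
  field_simp

theorem lintegral_star {x z : R4} (hx : x ≠ 0) (hz : z ≠ 0) :
    ∫⁻ u, rieszKernel 2 (x - u) * rieszKernel 2 u * rieszKernel 3 (u - z) =
      rieszKernel 1 z *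
        ∫⁻ u, rieszKernel 3 (x - u) * rieszKernel 1 u * rieszKernel 2 (u - z) := by
  have hx_norm : 0 < ‖x‖ := norm_pos_iff.2 hx
  have hz_norm : 0 < ‖z‖ := norm_pos_iff.2 hz
  obtain ⟨r, hr0, hr⟩ : ∃ r : ℝ, r ≠ 0 ∧ r ^ 2 = ‖x‖ * ‖z‖ :=
    ⟨√(‖x‖ * ‖z‖), by positivity, Real.sq_sqrt (by positivity)⟩
  obtain ⟨U, hUx, hUz⟩ := exists_isometry_inversion_swap hx hz hr
  have hx_sub (v : R4) : x - U v = U (EuclideanGeometry.inversion 0 r z - v) := by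
    rw [map_sub, hUz]
  have hz_sub (v : R4) : U v - z = U (v - EuclideanGeometry.inversion 0 r x) := by
    rw [map_sub, hUx]
  rw [← lintegral_inversion hr0,
    ← lintegral_const_mul' _ _ (rieszKernel_ne_top 1 hz), ← lintegral_comp_linearIsometryEquiv U
      fun u => rieszKernel 1 z * (rieszKernel 3 (x - u) * rieszKernel 1 u * rieszKernel 2 (u - z))]
  refine lintegral_congr_ae ?_
  filter_upwards [Measure.ae_ne _ 0, Measure.ae_ne _ (EuclideanGeometry.inversion 0 r x),
    Measure.ae_ne _ (EuclideanGeometry.inversion 0 r z)] with v hv hvx hvz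
  rw [star_integrand_inversion hx hz hv hr hvx hvz, hx_sub, hz_sub]
  simp only [rieszKernel_linearIsometryEquiv]

section Intertwining

section Defs

variable {E : Type*} [NormedAddCommGroup E] [MeasureSpace E]

/-- The transfer operator, symmetrised by distributing the weights evenly over both of its
arguments. -/
noncomputable def symmTransfer (p : E) (φ : E → ℝ≥0∞) (x : E) : ℝ≥0∞ :=
  ∫⁻ y, rieszKernel 2 (x - y) * (rieszKernel 1 y * rieszKernel 1 (p - y)) * φ (p - y)

/-- The integral operator that intertwines `transfer` with `symmTransfer`. -/
noncomputable def intertwiner (φ : E → ℝ≥0∞) (x : E) : ℝ≥0∞ :=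
  ∫⁻ y, rieszKernel 3 (x - y) * rieszKernel 1 y * φ y

end Defs

lemma transfer_congr {E : Type*} [NormedAddCommGroup E] [MeasureSpace E]
    [NullSingletonClass (volume : Measure E)] {p : E} {φ ψ : E → ℝ≥0∞}
    (h : ∀ x ≠ 0, φ x = ψ x) (x : E) : transfer p φ x = transfer p ψ x := by
  refine lintegral_congr_ae ?_
  filter_upwards [Measure.ae_ne _ p] with y hy
  rw [h _ (sub_ne_zero.2 hy.symm)]

lemma transfer_iterate_congr {E : Type*} [NormedAddCommGroup E] [MeasureSpace E]
    [NullSingletonClass (volume : Measure E)] {p : E} {φ ψ : E → ℝ≥0∞}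
    (h : ∀ x ≠ 0, φ x = ψ x) (k : ℕ) :
    ∀ x ≠ 0, (transfer p)^[k] φ x = (transfer p)^[k] ψ x := by
  induction k with
  | zero => exact h
  | succ k ih =>
    intro x _
    rw [Function.iterate_succ_apply', Function.iterate_succ_apply', transfer_congr ih]

lemma transfer_const_mul {E : Type*} [NormedAddCommGroup E] [MeasureSpace E] {c : ℝ≥0∞}
    (hc : c ≠ ∞) (p : E) (φ : E → ℝ≥0∞) (x : E) :
    transfer p (fun y => c * φ y) x = c * transfer p φ x := by
  rw [transfer, transfer, ← lintegral_const_mul' _ _ hc]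
  exact lintegral_congr fun y => by ring

lemma transfer_iterate_const_mul {E : Type*} [NormedAddCommGroup E] [MeasureSpace E] {c : ℝ≥0∞}
    (hc : c ≠ ∞) (p : E) (φ : E → ℝ≥0∞) (k : ℕ) :
    (transfer p)^[k] (fun y => c * φ y) = fun x => c * (transfer p)^[k] φ x := by
  induction k with
  | zero => rfl
  | succ k ih =>
    funext x
    rw [Function.iterate_succ_apply', ih, transfer_const_mul hc, Function.iterate_succ_apply']

variable {p : R4} {φ : R4 → ℝ≥0∞}

lemma measurable_symmTransfer (hφ : Measurable φ) : Measurable (symmTransfer p φ) := by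
  unfold symmTransfer
  refine Measurable.lintegral_prod_right' (f := fun z : R4 × R4 =>
    rieszKernel 2 (z.1 - z.2) * (rieszKernel 1 z.2 * rieszKernel 1 (p - z.2)) * φ (p - z.2)) ?_
  fun_prop

lemma measurable_symmTransfer_iterate (hφ : Measurable φ) (k : ℕ) :
    Measurable ((symmTransfer p)^[k] φ) := by
  induction k with
  | zero => exact hφ
  | succ k ih =>
    rw [Function.iterate_succ_apply']
    exact measurable_symmTransfer ih

lemma transfer_intertwiner_eq_lintegral_lintegral (p : R4) (φ : R4 → ℝ≥0∞) (x : R4) :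
    transfer p (intertwiner φ) x = ∫⁻ y, ∫⁻ z, rieszKernel 2 (x - y) * rieszKernel 2 y *
      rieszKernel 3 (y - z) * (rieszKernel 1 (p - z) * φ (p - z)) := by
  refine lintegral_congr_ae ?_
  filter_upwards [Measure.ae_ne _ 0, Measure.ae_ne _ x] with y hy hyx
  have hfin : rieszKernel 2 (x - y) * rieszKernel 2 y ≠ ∞ :=
    ENNReal.mul_ne_top (rieszKernel_ne_top 2 (sub_ne_zero.2 hyx.symm)) (rieszKernel_ne_top 2 hy)
  rw [intertwiner, ← lintegral_sub_left_eq_self _ p, ← lintegral_const_mul' _ _ hfin]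
  refine lintegral_congr fun z => ?_
  rw [sub_sub_sub_cancel_left, rieszKernel_sub_comm 3 z y]
  ring

lemma intertwiner_symmTransfer_eq_lintegral_lintegral (p : R4) (φ : R4 → ℝ≥0∞) (x : R4) :
    intertwiner (symmTransfer p φ) x = ∫⁻ y, ∫⁻ z, rieszKernel 3 (x - y) * rieszKernel 1 y *
      rieszKernel 2 (y - z) * (rieszKernel 1 z * (rieszKernel 1 (p - z) * φ (p - z))) := by
  refine lintegral_congr_ae ?_
  filter_upwards [Measure.ae_ne _ 0, Measure.ae_ne _ x] with y hy hyx
  have hfin : rieszKernel 3 (x - y) * rieszKernel 1 y ≠ ∞ :=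
    ENNReal.mul_ne_top (rieszKernel_ne_top 3 (sub_ne_zero.2 hyx.symm)) (rieszKernel_ne_top 1 hy)
  rw [symmTransfer, ← lintegral_const_mul' _ _ hfin]
  exact lintegral_congr fun z => by ring

theorem transfer_intertwiner (hφ : Measurable φ) {x : R4} (hx : x ≠ 0) :
    transfer p (intertwiner φ) x = intertwiner (symmTransfer p φ) x := by
  rw [transfer_intertwiner_eq_lintegral_lintegral, intertwiner_symmTransfer_eq_lintegral_lintegral,
    lintegral_lintegral_swap (by fun_prop)]
  conv_rhs => rw [lintegral_lintegral_swap (by fun_prop)]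
  refine lintegral_congr_ae ?_
  filter_upwards [Measure.ae_ne _ 0] with z hz
  rw [lintegral_mul_const _ (by fun_prop), lintegral_mul_const _ (by fun_prop),
    lintegral_star hx hz]
  ring

lemma transfer_iterate_intertwiner (hφ : Measurable φ) (k : ℕ) :
    ∀ x ≠ 0, (transfer p)^[k] (intertwiner φ) x = intertwiner ((symmTransfer p)^[k] φ) x := by
  induction k with
  | zero => exact fun x _ => rfl
  | succ k ih =>
    intro x hx
    rw [Function.iterate_succ_apply', Function.iterate_succ_apply', transfer_congr ih,
      transfer_intertwiner (measurable_symmTransfer_iterate hφ k) hx]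

end Intertwining

/-! ### Radial Gaussian integrals and the Riesz kernels -/

lemma lintegral_Ioi_pow_mul_exp {b : ℝ} (hb : 0 < b) (k : ℕ) :
    ∫⁻ s in Set.Ioi (0 : ℝ), ENNReal.ofReal (s ^ k * Real.exp (-(b * s ^ 2))) =
      ENNReal.ofReal (b ^ (-((k : ℝ) + 1) / 2) * (1 / 2) * Real.Gamma (((k : ℝ) + 1) / 2)) := by
  have hk : (-1 : ℝ) < k := neg_one_lt_zero.trans_le k.cast_nonneg
  rw [← integral_rpow_mul_exp_neg_mul_rpow two_pos hk hb,
    ofReal_integral_eq_lintegral_ofReal (integrableOn_rpow_mul_exp_neg_mul_rpow hk two_pos hb)]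
  · simp only [neg_mul, Real.rpow_natCast, Real.rpow_two]
  · filter_upwards [self_mem_ae_restrict measurableSet_Ioi] with s (hs : 0 < s)
    positivity

lemma lintegral_Ioi_sq_mul_exp {b : ℝ} (hb : 0 < b) :
    ∫⁻ s in Set.Ioi (0 : ℝ), ENNReal.ofReal (s ^ 2 * Real.exp (-(b ^ 2 * s ^ 2))) =
      ENNReal.ofReal (√Real.pi / 4 * (b ^ 3)⁻¹) := by
  have hGamma : Real.Gamma (((2 : ℕ) + 1 : ℝ) / 2) = √Real.pi / 2 := by
    rw [show (((2 : ℕ) + 1 : ℝ) / 2) = 1 / 2 + 1 by norm_num, Real.Gamma_add_one (by norm_num),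
      Real.Gamma_one_half_eq]
    ring
  have hpow : (b ^ 2) ^ (-(((2 : ℕ) : ℝ) + 1) / 2) = (b ^ 3)⁻¹ := by
    rw [← Real.rpow_natCast b 2, ← Real.rpow_mul hb.le, ← Real.rpow_natCast b 3,
      ← Real.rpow_neg hb.le]
    norm_num
  rw [lintegral_Ioi_pow_mul_exp (by positivity), hGamma, hpow]
  congr 1
  ring

lemma lintegral_Ioi_mul_exp {b : ℝ} (hb : 0 < b) :
    ∫⁻ s in Set.Ioi (0 : ℝ), ENNReal.ofReal (s * Real.exp (-(b * s ^ 2))) =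
      ENNReal.ofReal (b⁻¹ / 2) := by
  have hint := lintegral_Ioi_pow_mul_exp hb 1
  simp only [pow_one] at hint
  rw [hint, show -(((1 : ℕ) : ℝ) + 1) / 2 = -1 by norm_num,
    show (((1 : ℕ) : ℝ) + 1) / 2 = 1 by norm_num, Real.Gamma_one, Real.rpow_neg_one, mul_one,
    mul_one_div]

lemma lintegral_Ioi_comp_mul {s : ℝ} (hs : 0 < s) (f : ℝ → ℝ≥0∞) :
    ENNReal.ofReal s * ∫⁻ t in Set.Ioi (0 : ℝ), f (s * t) = ∫⁻ t in Set.Ioi (0 : ℝ), f t := by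
  have hderiv (t : ℝ) : HasDerivAt (fun t => s * t) s t := by
    simpa only [mul_one, id] using (hasDerivAt_id t).const_mul s
  have hchange := lintegral_image_eq_lintegral_abs_deriv_mul
    (measurableSet_Ioi (a := (0 : ℝ)))
    (fun t _ => (hderiv t).hasDerivWithinAt) (mul_right_injective₀ hs.ne').injOn f
  rw [Set.image_const_mul_Ioi_zero hs] at hchange
  rw [hchange, lintegral_const_mul' _ _ ENNReal.ofReal_ne_top, abs_of_pos hs]

lemma lintegral_Ioi_inv_one_add_sq :
    ∫⁻ t in Set.Ioi (0 : ℝ), ENNReal.ofReal ((1 + t ^ 2)⁻¹) = ENNReal.ofReal (Real.pi / 2) := by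
  rw [← ofReal_integral_eq_lintegral_ofReal integrable_inv_one_add_sq.integrableOn
    (.of_forall fun t => by positivity), integral_Ioi_inv_one_add_sq, Real.arctan_zero, sub_zero]

lemma lintegral_Ioi_inv_sq_one_add :
    ∫⁻ a in Set.Ioi (0 : ℝ), ENNReal.ofReal (((1 + a) ^ 2)⁻¹) = 1 := by
  have hderiv : ∀ a ∈ Set.Ici (0 : ℝ),
      HasDerivAt (fun a : ℝ => -(1 + a)⁻¹) (((1 + a) ^ 2)⁻¹) a := by
    intro a (ha : 0 ≤ a)
    have hinv : HasDerivAt (fun a : ℝ => -(1 + a)⁻¹) (-(-1 / (1 + a) ^ 2)) a :=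
      (((hasDerivAt_id a).const_add 1).inv (by simp only [id]; positivity)).neg
    rwa [neg_div, neg_neg, one_div] at hinv
  have hnonneg : ∀ a ∈ Set.Ioi (0 : ℝ), 0 ≤ ((1 + a) ^ 2)⁻¹ := fun a _ => by positivity
  have hlim : Filter.Tendsto (fun a : ℝ => -(1 + a)⁻¹) Filter.atTop (nhds 0) := by
    simpa using (Filter.tendsto_atTop_add_const_left _ (1 : ℝ)
      Filter.tendsto_id).inv_tendsto_atTop.neg
  rw [← ofReal_integral_eq_lintegral_ofReal (integrableOn_Ioi_deriv_of_nonneg' hderiv hnonneg hlim)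
    ((ae_restrict_iff' measurableSet_Ioi).2 (.of_forall hnonneg)),
    integral_Ioi_of_hasDerivAt_of_nonneg' hderiv hnonneg hlim]
  norm_num

lemma lintegral_exp_neg_mul_norm_sq_R4 {b : ℝ} (hb : 0 < b) :
    ∫⁻ y : R4, ENNReal.ofReal (Real.exp (-(b * ‖y‖ ^ 2))) =
      ENNReal.ofReal (Real.pi ^ 2 / b ^ 2) := by
  rw [lintegral_exp_neg_mul_norm_sq hb, rpow_finrank_R4_div_two, div_pow]

lemma lintegral_exp_neg_add_norm_sq {s t : ℝ} (hs : 0 < s) (ht : 0 < t) (x : R4) :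
    ∫⁻ y : R4, ENNReal.ofReal (Real.exp (-(s * ‖x - y‖ ^ 2 + t * ‖y‖ ^ 2))) =
      ENNReal.ofReal (Real.pi ^ 2 / (s + t) ^ 2 * Real.exp (-(s * t / (s + t) * ‖x‖ ^ 2))) := by
  have hsquare (y : R4) : s * ‖x - y‖ ^ 2 + t * ‖y‖ ^ 2 =
      (s + t) * ‖y - (s / (s + t)) • x‖ ^ 2 + s * t / (s + t) * ‖x‖ ^ 2 := by
    rw [norm_sub_sq_real, norm_sub_sq_real, norm_smul, inner_smul_right, real_inner_comm, mul_pow,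
      Real.norm_eq_abs, sq_abs]
    field_simp
    ring
  simp_rw [hsquare, neg_add, Real.exp_add, ENNReal.ofReal_mul (Real.exp_pos _).le]
  rw [lintegral_mul_const _ (by fun_prop),
    lintegral_sub_right_eq_self (fun y => ENNReal.ofReal (Real.exp (-((s + t) * ‖y‖ ^ 2)))),
    lintegral_exp_neg_mul_norm_sq_R4 (by positivity), ← ENNReal.ofReal_mul (by positivity)]

lemma rieszKernel_three_eq_lintegral {E : Type*} [NormedAddCommGroup E] {y : E} (hy : y ≠ 0) :
    rieszKernel 3 y = ENNReal.ofReal (4 / √Real.pi) *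
      ∫⁻ s in Set.Ioi (0 : ℝ), ENNReal.ofReal (s ^ 2 * Real.exp (-(s ^ 2 * ‖y‖ ^ 2))) := by
  have hint := lintegral_Ioi_sq_mul_exp (norm_pos_iff.2 hy)
  simp_rw [mul_comm (‖y‖ ^ 2)] at hint
  rw [hint, ← ENNReal.ofReal_mul (by positivity), rieszKernel_of_ne_zero _ hy]
  congr 1
  field_simp

lemma lintegral_sq_mul_exp_mul_sq_mul_exp {s t : ℝ} (hs : 0 < s) (ht : 0 < t) (x : R4) :
    ∫⁻ y : R4, ENNReal.ofReal (s ^ 2 * Real.exp (-(s ^ 2 * ‖x - y‖ ^ 2))) *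
        ENNReal.ofReal (t ^ 2 * Real.exp (-(t ^ 2 * ‖y‖ ^ 2))) =
      ENNReal.ofReal (Real.pi ^ 2 * (s * t) ^ 2 / (s ^ 2 + t ^ 2) ^ 2 *
        Real.exp (-(s ^ 2 * t ^ 2 / (s ^ 2 + t ^ 2) * ‖x‖ ^ 2))) := by
  have hfactor (y : R4) : ENNReal.ofReal (s ^ 2 * Real.exp (-(s ^ 2 * ‖x - y‖ ^ 2))) *
        ENNReal.ofReal (t ^ 2 * Real.exp (-(t ^ 2 * ‖y‖ ^ 2))) =
      ENNReal.ofReal ((s * t) ^ 2) *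
        ENNReal.ofReal (Real.exp (-(s ^ 2 * ‖x - y‖ ^ 2 + t ^ 2 * ‖y‖ ^ 2))) := by
    rw [← ENNReal.ofReal_mul (by positivity), ← ENNReal.ofReal_mul (by positivity), neg_add,
      Real.exp_add]
    congr 1
    ring
  simp only [hfactor]
  rw [lintegral_const_mul' _ _ ENNReal.ofReal_ne_top,
    lintegral_exp_neg_add_norm_sq (by positivity) (by positivity),
    ← ENNReal.ofReal_mul (by positivity)]
  congr 1
  ring

lemma lintegral_lintegral_sq_mul_exp {s : ℝ} (hs : 0 < s) (x : R4) :
    ∫⁻ t in Set.Ioi (0 : ℝ), ∫⁻ y : R4,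
        ENNReal.ofReal (s ^ 2 * Real.exp (-(s ^ 2 * ‖x - y‖ ^ 2))) *
          ENNReal.ofReal (t ^ 2 * Real.exp (-(t ^ 2 * ‖y‖ ^ 2))) =
      ∫⁻ t in Set.Ioi (0 : ℝ), ENNReal.ofReal (Real.pi ^ 2 * t ^ 2 / (1 + t ^ 2) ^ 2) *
        ENNReal.ofReal (s * Real.exp (-((t ^ 2 / (1 + t ^ 2) * ‖x‖ ^ 2) * s ^ 2))) := by
  rw [← lintegral_Ioi_comp_mul hs, ← lintegral_const_mul' _ _ ENNReal.ofReal_ne_top]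
  refine setLIntegral_congr_fun measurableSet_Ioi fun t (ht : 0 < t) => ?_
  have hsum : s ^ 2 + (s * t) ^ 2 = s ^ 2 * (1 + t ^ 2) := by ring
  have hexp : s ^ 2 * (s * t) ^ 2 / (s ^ 2 * (1 + t ^ 2)) * ‖x‖ ^ 2 =
      t ^ 2 / (1 + t ^ 2) * ‖x‖ ^ 2 * s ^ 2 := by field_simp
  rw [lintegral_sq_mul_exp_mul_sq_mul_exp hs (by positivity), hsum, hexp,
    ← ENNReal.ofReal_mul (by positivity), ← ENNReal.ofReal_mul (by positivity)]
  congr 1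
  field_simp

lemma lintegral_Ioi_gaussian_weight {x : R4} (hx : x ≠ 0) {t : ℝ} (ht : 0 < t) :
    ∫⁻ s in Set.Ioi (0 : ℝ), ENNReal.ofReal (Real.pi ^ 2 * t ^ 2 / (1 + t ^ 2) ^ 2) *
        ENNReal.ofReal (s * Real.exp (-((t ^ 2 / (1 + t ^ 2) * ‖x‖ ^ 2) * s ^ 2))) =
      ENNReal.ofReal (Real.pi ^ 2 / 2) * rieszKernel 2 x * ENNReal.ofReal ((1 + t ^ 2)⁻¹) := by
  have hx_norm : 0 < ‖x‖ := norm_pos_iff.2 hx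
  rw [lintegral_const_mul' _ _ ENNReal.ofReal_ne_top, lintegral_Ioi_mul_exp (by positivity),
    rieszKernel_of_ne_zero 2 hx]
  repeat rw [← ENNReal.ofReal_mul (by positivity)]
  congr 1
  field_simp

lemma lintegral_lintegral_lintegral_sq_mul_exp {x : R4} (hx : x ≠ 0) :
    ∫⁻ y : R4, ∫⁻ s in Set.Ioi (0 : ℝ), ∫⁻ t in Set.Ioi (0 : ℝ),
        ENNReal.ofReal (s ^ 2 * Real.exp (-(s ^ 2 * ‖x - y‖ ^ 2))) *
          ENNReal.ofReal (t ^ 2 * Real.exp (-(t ^ 2 * ‖y‖ ^ 2))) =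
      ENNReal.ofReal (Real.pi ^ 3 / 4) * rieszKernel 2 x := by
  have hswap (s : ℝ) : ∫⁻ y : R4, ∫⁻ t in Set.Ioi (0 : ℝ),
      ENNReal.ofReal (s ^ 2 * Real.exp (-(s ^ 2 * ‖x - y‖ ^ 2))) *
        ENNReal.ofReal (t ^ 2 * Real.exp (-(t ^ 2 * ‖y‖ ^ 2))) =
      ∫⁻ t in Set.Ioi (0 : ℝ), ∫⁻ y : R4,
        ENNReal.ofReal (s ^ 2 * Real.exp (-(s ^ 2 * ‖x - y‖ ^ 2))) *
          ENNReal.ofReal (t ^ 2 * Real.exp (-(t ^ 2 * ‖y‖ ^ 2))) :=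
    lintegral_lintegral_swap (by fun_prop)
  have hmeas : Measurable fun z : R4 × ℝ => ∫⁻ t in Set.Ioi (0 : ℝ),
      ENNReal.ofReal (z.2 ^ 2 * Real.exp (-(z.2 ^ 2 * ‖x - z.1‖ ^ 2))) *
        ENNReal.ofReal (t ^ 2 * Real.exp (-(t ^ 2 * ‖z.1‖ ^ 2))) := by
    refine Measurable.lintegral_prod_right' (f := fun z : (R4 × ℝ) × ℝ =>
      ENNReal.ofReal (z.1.2 ^ 2 * Real.exp (-(z.1.2 ^ 2 * ‖x - z.1.1‖ ^ 2))) *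
        ENNReal.ofReal (z.2 ^ 2 * Real.exp (-(z.2 ^ 2 * ‖z.1.1‖ ^ 2)))) ?_
    fun_prop
  rw [lintegral_lintegral_swap hmeas.aemeasurable]
  simp_rw [hswap]
  rw [setLIntegral_congr_fun measurableSet_Ioi fun s hs => lintegral_lintegral_sq_mul_exp hs x,
    lintegral_lintegral_swap (by fun_prop),
    setLIntegral_congr_fun measurableSet_Ioi fun t ht => lintegral_Ioi_gaussian_weight hx ht,
    lintegral_const_mul _ (by fun_prop), lintegral_Ioi_inv_one_add_sq, mul_right_comm,
    ← ENNReal.ofReal_mul (by positivity)]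
  congr 2
  ring

theorem lintegral_rieszKernel_three_mul_three {x : R4} (hx : x ≠ 0) :
    ∫⁻ y, rieszKernel 3 (x - y) * rieszKernel 3 y =
      ENNReal.ofReal (4 * Real.pi ^ 2) * rieszKernel 2 x := by
  have hgauss : ∫⁻ y, rieszKernel 3 (x - y) * rieszKernel 3 y =
      ENNReal.ofReal ((4 / √Real.pi) ^ 2) *
        ∫⁻ y : R4, ∫⁻ s in Set.Ioi (0 : ℝ), ∫⁻ t in Set.Ioi (0 : ℝ),
          ENNReal.ofReal (s ^ 2 * Real.exp (-(s ^ 2 * ‖x - y‖ ^ 2))) *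
            ENNReal.ofReal (t ^ 2 * Real.exp (-(t ^ 2 * ‖y‖ ^ 2))) := by
    rw [← lintegral_const_mul' _ _ ENNReal.ofReal_ne_top]
    refine lintegral_congr_ae ?_
    filter_upwards [Measure.ae_ne _ 0, Measure.ae_ne _ x] with y hy hyx
    rw [rieszKernel_three_eq_lintegral hy,
      rieszKernel_three_eq_lintegral (sub_ne_zero.2 hyx.symm)]
    simp_rw [lintegral_const_mul' _ _ ENNReal.ofReal_ne_top]
    rw [lintegral_mul_const _ (by fun_prop), ENNReal.ofReal_pow (by positivity)]
    ring
  rw [hgauss, lintegral_lintegral_lintegral_sq_mul_exp hx, ← mul_assoc,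
    ← ENNReal.ofReal_mul (by positivity), div_pow, Real.sq_sqrt Real.pi_pos.le]
  congr 2
  field_simp

lemma intertwiner_rieszKernel_two {x : R4} (hx : x ≠ 0) :
    intertwiner (rieszKernel 2) x = ENNReal.ofReal (4 * Real.pi ^ 2) * rieszKernel 2 x := by
  rw [← lintegral_rieszKernel_three_mul_three hx, intertwiner]
  exact lintegral_congr fun y => by rw [mul_assoc, ← rieszKernel_add]

lemma transfer_iterate_smul_isometry (U : R4 ≃ₗᵢ[ℝ] R4) {r : ℝ} (hr : 0 < r) (e : R4) (k : ℕ)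
    (x : R4) : (transfer (r • U e))^[k] (rieszKernel 2) (r • U x) =
      ENNReal.ofReal ((r ^ 2)⁻¹) * (transfer e)^[k] (rieszKernel 2) x := by
  induction k generalizing x with
  | zero =>
    rw [Function.iterate_zero, Function.iterate_zero, id_eq, rieszKernel_smul _ hr,
      rieszKernel_linearIsometryEquiv]
  | succ k ih =>
    have hscale : ENNReal.ofReal (r ^ Module.finrank ℝ R4) *
        (ENNReal.ofReal ((r ^ 2)⁻¹) * ENNReal.ofReal ((r ^ 2)⁻¹)) = 1 := by
      rw [← ENNReal.ofReal_mul (by positivity), ← ENNReal.ofReal_mul (by positivity),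
        finrank_euclideanSpace_fin, ← ENNReal.ofReal_one]
      congr 1
      field_simp
    rw [Function.iterate_succ_apply', Function.iterate_succ_apply', transfer, transfer,
      ← lintegral_comp_smul hr, ← lintegral_comp_linearIsometryEquiv U,
      ← lintegral_const_mul' _ _ ENNReal.ofReal_ne_top,
      ← lintegral_const_mul' _ _ ENNReal.ofReal_ne_top]
    refine lintegral_congr fun y => ?_
    rw [← smul_sub, ← smul_sub, ← map_sub, ← map_sub, ih, rieszKernel_smul _ hr,
      rieszKernel_smul _ hr, rieszKernel_linearIsometryEquiv, rieszKernel_linearIsometryEquiv]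
    calc _ = ENNReal.ofReal (r ^ Module.finrank ℝ R4) *
          (ENNReal.ofReal ((r ^ 2)⁻¹) * ENNReal.ofReal ((r ^ 2)⁻¹)) *
          (ENNReal.ofReal ((r ^ 2)⁻¹) * (rieszKernel 2 (x - y) * rieszKernel 2 y *
            (transfer e)^[k] (rieszKernel 2) (e - y))) := by ring
      _ = _ := by rw [hscale, one_mul]

lemma transfer_iterate_self {e p : R4} (he : ‖e‖ = 1) (hp : p ≠ 0) (k : ℕ) :
    (transfer p)^[k] (rieszKernel 2) p =
      rieszKernel 2 p * (transfer e)^[k] (rieszKernel 2) e := by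
  have hp_norm : 0 < ‖p‖ := norm_pos_iff.2 hp
  have hnorm : ‖e‖ = ‖‖p‖⁻¹ • p‖ := by
    rw [he, norm_smul, norm_inv, norm_norm, inv_mul_cancel₀ hp_norm.ne']
  let U := (ℝ ∙ (e - ‖p‖⁻¹ • p))ᗮ.reflection
  have hU : ‖p‖ • U e = p := by
    rw [show U e = ‖p‖⁻¹ • p from Submodule.reflection_sub hnorm, smul_inv_smul₀ hp_norm.ne']
  have hscale := transfer_iterate_smul_isometry U hp_norm e k e
  rwa [hU, ← rieszKernel_of_ne_zero 2 hp] at hscale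

lemma lintegral_exp_mul_rieszKernel_two :
    ∫⁻ p : R4, ENNReal.ofReal (Real.exp (-‖p‖ ^ 2)) * rieszKernel 2 p =
      ENNReal.ofReal (Real.pi ^ 2) := by
  have hschwinger (p : R4) : ENNReal.ofReal (Real.exp (-‖p‖ ^ 2)) * rieszKernel 2 p =
      ∫⁻ a in Set.Ioi (0 : ℝ), ENNReal.ofReal (Real.exp (-((1 + a) * ‖p‖ ^ 2))) := by
    rw [← lintegral_Ioi_exp_neg_mul_norm_sq, ← lintegral_const_mul' _ _ ENNReal.ofReal_ne_top]
    refine lintegral_congr fun a => ?_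
    rw [← ENNReal.ofReal_mul (Real.exp_pos _).le, ← Real.exp_add]
    congr 2
    ring
  have hgauss : ∀ a ∈ Set.Ioi (0 : ℝ),
      ∫⁻ p : R4, ENNReal.ofReal (Real.exp (-((1 + a) * ‖p‖ ^ 2))) =
        ENNReal.ofReal (Real.pi ^ 2) * ENNReal.ofReal (((1 + a) ^ 2)⁻¹) := by
    intro a (ha : 0 < a)
    rw [lintegral_exp_neg_mul_norm_sq_R4 (by positivity), ← ENNReal.ofReal_mul (by positivity),
      div_eq_mul_inv]
  simp_rw [hschwinger]
  rw [lintegral_lintegral_swap (by fun_prop), setLIntegral_congr_fun measurableSet_Ioi hgauss,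
    lintegral_const_mul' _ _ ENNReal.ofReal_ne_top, lintegral_Ioi_inv_sq_one_add, mul_one]

theorem lintegral_exp_mul_transfer_iterate {e : R4} (he : ‖e‖ = 1) (m : ℕ) :
    ENNReal.ofReal 4 * ∫⁻ p : R4, ENNReal.ofReal (Real.exp (-‖p‖ ^ 2)) *
        (transfer p)^[m] (rieszKernel 2) p =
      ∫⁻ y, rieszKernel 3 (e - y) * rieszKernel 1 y *
        (symmTransfer e)^[m] (rieszKernel 2) y := by
  have he_ne : e ≠ 0 := norm_ne_zero_iff.1 (he ▸ one_ne_zero)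
  calc ENNReal.ofReal 4 * ∫⁻ p : R4, ENNReal.ofReal (Real.exp (-‖p‖ ^ 2)) *
        (transfer p)^[m] (rieszKernel 2) p
      = ENNReal.ofReal 4 * ∫⁻ p : R4, ENNReal.ofReal (Real.exp (-‖p‖ ^ 2)) * rieszKernel 2 p *
          (transfer e)^[m] (rieszKernel 2) e := by
        congr 1
        refine lintegral_congr_ae ?_
        filter_upwards [Measure.ae_ne _ 0] with p hp
        rw [transfer_iterate_self he hp, mul_assoc]
    _ = ENNReal.ofReal (4 * Real.pi ^ 2) * (transfer e)^[m] (rieszKernel 2) e := by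
        rw [lintegral_mul_const _ (by fun_prop), lintegral_exp_mul_rieszKernel_two, ← mul_assoc,
          ← ENNReal.ofReal_mul (by norm_num)]
    _ = (transfer e)^[m] (intertwiner (rieszKernel 2)) e := by
        rw [transfer_iterate_congr (fun x hx => intertwiner_rieszKernel_two hx) m e he_ne,
          transfer_iterate_const_mul ENNReal.ofReal_ne_top]
    _ = intertwiner ((symmTransfer e)^[m] (rieszKernel 2)) e :=
        transfer_iterate_intertwiner (measurable_rieszKernel 2) m e he_ne

/-! ### The hat-box theorem and elliptic coordinates -/

/-- Distance to the axis spanned by the first basis vector. -/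
noncomputable def axisDist (y : R4) : ℝ := √(y 1 ^ 2 + (y 2 ^ 2 + y 3 ^ 2))

@[fun_prop]
lemma measurable_axisDist : Measurable axisDist := by
  unfold axisDist
  fun_prop

lemma lintegral_R4_eq_lintegral {f : R4 → ℝ≥0∞} (hf : Measurable f) :
    ∫⁻ y, f y = ∫⁻ a : ℝ, ∫⁻ b : ℝ, ∫⁻ c : ℝ × ℝ, f !₂[a, b, c.1, c.2] := by
  have hf_pi : Measurable fun y : Fin 4 → ℝ => f (WithLp.toLp 2 y) :=
    hf.comp (MeasurableEquiv.toLp 2 (Fin 4 → ℝ)).measurable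
  rw [← (PiLp.volume_preserving_toLp (Fin 4)).lintegral_comp_emb
    (MeasurableEquiv.toLp 2 (Fin 4 → ℝ)).measurableEmbedding, lintegral_fin_cons hf_pi]
  refine lintegral_congr fun a => ?_
  have hf_cons : Measurable fun Y : Fin 3 → ℝ => f (WithLp.toLp 2 (Fin.cons a Y : Fin 4 → ℝ)) :=
    hf_pi.comp (measurable_pi_lambda _ (Fin.cases measurable_const measurable_pi_apply))
  rw [lintegral_fin_cons hf_cons]
  refine lintegral_congr fun b => ?_
  rw [← (volume_preserving_finTwoArrow ℝ).symm.lintegral_comp_emb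
    (MeasurableEquiv.measurableEmbedding _)]
  refine lintegral_congr fun c => ?_
  congr 2

lemma lintegral_comp_sq_add_sq {g : ℝ → ℝ≥0∞} (hg : Measurable g) :
    ∫⁻ c : ℝ × ℝ, g (c.1 ^ 2 + c.2 ^ 2) =
      ENNReal.ofReal (2 * Real.pi) * ∫⁻ r in Set.Ioi (0 : ℝ), ENNReal.ofReal r * g (r ^ 2) := by
  rw [← lintegral_comp_polarCoord_symm, polarCoord_target, Measure.volume_eq_prod,
    ← Measure.prod_restrict, lintegral_prod]
  · rw [← lintegral_const_mul' _ _ ENNReal.ofReal_ne_top]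
    refine lintegral_congr fun r => ?_
    have hradial (φ : ℝ) : ENNReal.ofReal r • g
        ((polarCoord.symm (r, φ)).1 ^ 2 + (polarCoord.symm (r, φ)).2 ^ 2) =
          ENNReal.ofReal r * g (r ^ 2) := by
      rw [polarCoord_symm_apply, smul_eq_mul]
      congr 2
      linear_combination r ^ 2 * Real.sin_sq_add_cos_sq φ
    simp only [hradial, lintegral_const, Measure.restrict_apply_univ, Real.volume_Ioo]
    rw [mul_comm]
    congr 2
    ring
  · have hpolar := continuous_polarCoord_symm.measurable
    exact Measurable.aemeasurable (by fun_prop)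

lemma hasDerivAt_sqrt_sq_add_sq (b : ℝ) {r : ℝ} (hr : 0 < r) :
    HasDerivAt (fun r => √(b ^ 2 + r ^ 2)) (r / √(b ^ 2 + r ^ 2)) r := by
  convert! (((hasDerivAt_id r).pow 2).const_add (b ^ 2)).sqrt
    (by simp only [id, Pi.pow_apply]; positivity) using 1
  simp only [id, Pi.pow_apply]
  field_simp
  ring

lemma injOn_sqrt_sq_add_sq (b : ℝ) : Set.InjOn (fun r => √(b ^ 2 + r ^ 2)) (Set.Ioi 0) := by
  intro r (hr : 0 < r) s (hs : 0 < s) hrs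
  have hsq := (Real.sqrt_inj (by positivity) (by positivity)).1 hrs
  exact (pow_left_inj₀ hr.le hs.le two_ne_zero).1 (add_left_cancel hsq)

lemma image_sqrt_sq_add_sq_Ioi (b : ℝ) :
    (fun r => √(b ^ 2 + r ^ 2)) '' Set.Ioi 0 = Set.Ioi |b| := by
  ext ρ
  constructor
  · rintro ⟨r, hr : 0 < r, rfl⟩
    exact Real.lt_sqrt_of_sq_lt (by rw [sq_abs]; exact lt_add_of_pos_right _ (by positivity))
  · intro (hρ : |b| < ρ)
    have hsq : 0 < ρ ^ 2 - b ^ 2 := sub_pos.2 (sq_lt_sq.2 (hρ.trans_le (le_abs_self ρ)))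
    refine ⟨√(ρ ^ 2 - b ^ 2), Real.sqrt_pos.2 hsq, ?_⟩
    dsimp only
    rw [Real.sq_sqrt hsq.le, add_sub_cancel, Real.sqrt_sq ((abs_nonneg b).trans hρ.le)]

lemma lintegral_Ioi_comp_sqrt_sq_add_sq (b : ℝ) (g : ℝ → ℝ≥0∞) :
    ∫⁻ r in Set.Ioi (0 : ℝ), ENNReal.ofReal r * g √(b ^ 2 + r ^ 2) =
      ∫⁻ ρ in Set.Ioi |b|, ENNReal.ofReal ρ * g ρ := by
  rw [← image_sqrt_sq_add_sq_Ioi, lintegral_image_eq_lintegral_abs_deriv_mul measurableSet_Ioi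
    (fun r hr => (hasDerivAt_sqrt_sq_add_sq b hr).hasDerivWithinAt) (injOn_sqrt_sq_add_sq b)]
  refine setLIntegral_congr_fun measurableSet_Ioi fun r (hr : 0 < r) => ?_
  rw [← mul_assoc, ← ENNReal.ofReal_mul (abs_nonneg _), abs_of_nonneg (by positivity),
    div_mul_cancel₀ _ (by positivity)]

lemma lintegral_lintegral_Ioi_abs {g : ℝ → ℝ → ℝ≥0∞} (hg : Measurable (Function.uncurry g)) :
    ∫⁻ b : ℝ, ∫⁻ ρ in Set.Ioi |b|, g b ρ =
      ∫⁻ ρ in Set.Ioi (0 : ℝ), ∫⁻ b in Set.Ioo (-ρ) ρ, g b ρ := by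
  let cone := {p : ℝ × ℝ | |p.1| < p.2}
  have hfiber_fst (b : ℝ) : ∫⁻ ρ in Set.Ioi |b|, g b ρ =
      ∫⁻ ρ in Set.Ioi (0 : ℝ), cone.indicator (Function.uncurry g) (b, ρ) := by
    rw [← lintegral_indicator measurableSet_Ioi, ← lintegral_indicator measurableSet_Ioi]
    refine lintegral_congr fun ρ => ?_
    by_cases hρ : |b| < ρ
    · simp [cone, Set.indicator, hρ, (abs_nonneg b).trans_lt hρ, Function.uncurry]
    · simp [cone, Set.indicator, hρ]
  have hfiber_snd (ρ : ℝ) : ∫⁻ b in Set.Ioo (-ρ) ρ, g b ρ =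
      ∫⁻ b, cone.indicator (Function.uncurry g) (b, ρ) := by
    rw [← lintegral_indicator measurableSet_Ioo]
    refine lintegral_congr fun b => ?_
    simp [cone, Set.indicator, abs_lt, Function.uncurry]
  simp_rw [hfiber_fst, hfiber_snd]
  exact lintegral_lintegral_swap
    (hg.indicator (measurableSet_lt (by fun_prop) (by fun_prop))).aemeasurable

/-- Archimedes' hat-box theorem: on a sphere about the axis, the coordinate `y 1` is uniformly
distributed. -/
theorem lintegral_hatbox {F : ℝ → ℝ → ℝ → ℝ≥0∞}
    (hF : Measurable fun z : ℝ × ℝ × ℝ => F z.1 z.2.1 z.2.2) :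
    ∫⁻ y : R4, F (y 0) (y 1) (axisDist y) = ENNReal.ofReal (2 * Real.pi) *
      ∫⁻ a : ℝ, ∫⁻ ρ in Set.Ioi (0 : ℝ), ENNReal.ofReal ρ * ∫⁻ t in Set.Ioo (-ρ) ρ, F a t ρ := by
  have hF_comp : ∀ {α : Type} [MeasurableSpace α] {f g h : α → ℝ}, Measurable f → Measurable g →
      Measurable h → Measurable fun x => F (f x) (g x) (h x) := fun hf hg hh =>
    hF.comp (hf.prodMk (hg.prodMk hh))
  rw [lintegral_R4_eq_lintegral (hF_comp (by fun_prop) (by fun_prop) (by fun_prop)),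
    ← lintegral_const_mul' _ _ ENNReal.ofReal_ne_top]
  refine lintegral_congr fun a => ?_
  have hpolar (b : ℝ) : ∫⁻ c : ℝ × ℝ, F ((!₂[a, b, c.1, c.2] : R4) 0)
      ((!₂[a, b, c.1, c.2] : R4) 1) (axisDist !₂[a, b, c.1, c.2]) =
        ENNReal.ofReal (2 * Real.pi) * ∫⁻ ρ in Set.Ioi |b|, ENNReal.ofReal ρ * F a b ρ := by
    rw [← lintegral_Ioi_comp_sqrt_sq_add_sq b (F a b),
      ← lintegral_comp_sq_add_sq (g := fun s => F a b √(b ^ 2 + s))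
        (hF_comp (by fun_prop) (by fun_prop) (by fun_prop))]
    rfl
  simp_rw [hpolar]
  rw [lintegral_const_mul' _ _ ENNReal.ofReal_ne_top, lintegral_lintegral_Ioi_abs
    (Measurable.mul (by fun_prop) (hF_comp (by fun_prop) (by fun_prop) (by fun_prop)))]
  congr 1
  exact lintegral_congr fun ρ => lintegral_const_mul' _ _ ENNReal.ofReal_ne_top

/-- Elliptic coordinates `(σ, θ)` on the upper half plane, with foci `(0, 0)` and `(1, 0)`. -/
noncomputable def ellipticCoord (p : ℝ × ℝ) : ℝ × ℝ :=
  ((1 + Real.cosh p.1 * Real.cos p.2) / 2, Real.sinh p.1 * Real.sin p.2 / 2)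

/-- The derivative of `ellipticCoord`, as a Jacobian matrix. -/
noncomputable def ellipticCoordDeriv (p : ℝ × ℝ) : ℝ × ℝ →L[ℝ] ℝ × ℝ :=
  (Matrix.toLin (.finTwoProd ℝ) (.finTwoProd ℝ)
    !![Real.sinh p.1 * Real.cos p.2 / 2, -(Real.cosh p.1 * Real.sin p.2 / 2);
      Real.cosh p.1 * Real.sin p.2 / 2, Real.sinh p.1 * Real.cos p.2 / 2]).toContinuousLinearMap

lemma hasFDerivAt_ellipticCoord (p : ℝ × ℝ) :
    HasFDerivAt ellipticCoord (ellipticCoordDeriv p) p := by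
  have hcosh := (Real.hasDerivAt_cosh p.1).comp_hasFDerivAt p (hasFDerivAt_fst (𝕜 := ℝ) (p := p))
  have hsinh := (Real.hasDerivAt_sinh p.1).comp_hasFDerivAt p (hasFDerivAt_fst (𝕜 := ℝ) (p := p))
  have hcos := (Real.hasDerivAt_cos p.2).comp_hasFDerivAt p (hasFDerivAt_snd (𝕜 := ℝ) (p := p))
  have hsin := (Real.hasDerivAt_sin p.2).comp_hasFDerivAt p (hasFDerivAt_snd (𝕜 := ℝ) (p := p))
  have hcoord := (((hcosh.mul hcos).const_add 1).mul_const (2 : ℝ)⁻¹).prodMk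
    ((hsinh.mul hsin).mul_const (2 : ℝ)⁻¹)
  refine hcoord.congr_fderiv ?_
  rw [ellipticCoordDeriv, Matrix.toLin_finTwoProd_toContinuousLinearMap]
  ext <;> simp <;> ring

lemma det_ellipticCoordDeriv (p : ℝ × ℝ) :
    (ellipticCoordDeriv p).det = (Real.cosh p.1 ^ 2 - Real.cos p.2 ^ 2) / 4 := by
  unfold ellipticCoordDeriv
  simp only [LinearMap.det_toContinuousLinearMap, LinearMap.det_toLin, Matrix.det_fin_two_of]
  linear_combination (-(Real.cos p.2 ^ 2) / 4) * Real.cosh_sq_sub_sinh_sq p.1 +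
    Real.cosh p.1 ^ 2 / 4 * Real.sin_sq_add_cos_sq p.2

lemma ellipticCoord_sq_add_sq (p : ℝ × ℝ) :
    (ellipticCoord p).1 ^ 2 + (ellipticCoord p).2 ^ 2 =
      ((Real.cosh p.1 + Real.cos p.2) / 2) ^ 2 := by
  rw [ellipticCoord]
  linear_combination (-(Real.sin p.2 ^ 2) / 4) * Real.cosh_sq p.1 +
    (Real.cosh p.1 ^ 2 - 1) / 4 * Real.sin_sq_add_cos_sq p.2

lemma one_sub_ellipticCoord_sq_add_sq (p : ℝ × ℝ) :
    (1 - (ellipticCoord p).1) ^ 2 + (ellipticCoord p).2 ^ 2 =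
      ((Real.cosh p.1 - Real.cos p.2) / 2) ^ 2 := by
  have hfst : (ellipticCoord p).1 = (1 + Real.cosh p.1 * Real.cos p.2) / 2 := rfl
  linear_combination ellipticCoord_sq_add_sq p - 2 * hfst

lemma cosh_add_cos_nonneg (σ θ : ℝ) : 0 ≤ Real.cosh σ + Real.cos θ := by
  linarith [Real.one_le_cosh σ, Real.neg_one_le_cos θ]

lemma cosh_sub_cos_nonneg (σ θ : ℝ) : 0 ≤ Real.cosh σ - Real.cos θ :=
  sub_nonneg.2 ((Real.cos_le_one θ).trans (Real.one_le_cosh σ))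

lemma injOn_ellipticCoord : Set.InjOn ellipticCoord (Set.Ioi 0 ×ˢ Set.Ioo 0 Real.pi) := by
  rintro ⟨σ, θ⟩ ⟨hσ : 0 < σ, hθ⟩ ⟨σ', θ'⟩ ⟨hσ' : 0 < σ', hθ'⟩ heq
  have hadd_sq := ellipticCoord_sq_add_sq (σ, θ)
  have hsub_sq := one_sub_ellipticCoord_sq_add_sq (σ, θ)
  rw [heq, ellipticCoord_sq_add_sq] at hadd_sq
  rw [heq, one_sub_ellipticCoord_sq_add_sq] at hsub_sq
  have hadd := (pow_left_inj₀ (div_nonneg (cosh_add_cos_nonneg σ' θ') zero_le_two)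
    (div_nonneg (cosh_add_cos_nonneg σ θ) zero_le_two) two_ne_zero).1 hadd_sq
  have hsub := (pow_left_inj₀ (div_nonneg (cosh_sub_cos_nonneg σ' θ') zero_le_two)
    (div_nonneg (cosh_sub_cos_nonneg σ θ) zero_le_two) two_ne_zero).1 hsub_sq
  exact Prod.ext (Real.cosh_injOn hσ.le hσ'.le (by linarith))
    (Real.injOn_cos (Set.Ioo_subset_Icc_self hθ) (Set.Ioo_subset_Icc_self hθ') (by linarith))

lemma exists_focal_distances (a : ℝ) {ρ : ℝ} (hρ : ρ ≠ 0) :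
    ∃ R S : ℝ, R ^ 2 = a ^ 2 + ρ ^ 2 ∧ S ^ 2 = (1 - a) ^ 2 + ρ ^ 2 ∧ 1 < R + S ∧
      -1 < R - S ∧ R - S < 1 := by
  have hρ_sq : 0 < ρ ^ 2 := by positivity
  have hR_sq := Real.sq_sqrt (show 0 ≤ a ^ 2 + ρ ^ 2 by positivity)
  have hS_sq := Real.sq_sqrt (show 0 ≤ (1 - a) ^ 2 + ρ ^ 2 by positivity)
  have hR := abs_lt.1 (Real.lt_sqrt_of_sq_lt
    (show |a| ^ 2 < a ^ 2 + ρ ^ 2 by rw [sq_abs]; linarith))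
  have hS := abs_lt.1 (Real.lt_sqrt_of_sq_lt
    (show |1 - a| ^ 2 < (1 - a) ^ 2 + ρ ^ 2 by rw [sq_abs]; linarith))
  exact ⟨_, _, hR_sq, hS_sq, by linarith, by nlinarith, by nlinarith⟩

lemma exists_ellipticCoord_eq (a : ℝ) {ρ : ℝ} (hρ : 0 < ρ) :
    ∃ p ∈ Set.Ioi 0 ×ˢ Set.Ioo 0 Real.pi, ellipticCoord p = (a, ρ) := by
  obtain ⟨R, S, hR, hS, hsum, hdiff_gt, hdiff_lt⟩ := exists_focal_distances a hρ.ne'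
  have hσ := Real.arcosh_pos hsum
  have hθ : Real.arccos (R - S) ∈ Set.Ioo 0 Real.pi :=
    ⟨Real.arccos_pos.2 hdiff_lt, (Real.arccos_le_pi _).lt_of_ne fun hpi =>
      (Real.arccos_eq_pi.1 hpi).not_gt hdiff_gt⟩
  have hcosh := Real.cosh_arcosh hsum.le
  have hcos := Real.cos_arccos hdiff_gt.le hdiff_lt.le
  refine ⟨(Real.arcosh (R + S), Real.arccos (R - S)), ⟨hσ, hθ⟩, ?_⟩
  have hfst : (ellipticCoord (Real.arcosh (R + S), Real.arccos (R - S))).1 = a := by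
    rw [ellipticCoord, hcosh, hcos]
    linear_combination (hR - hS) / 2
  refine Prod.ext hfst ((pow_left_inj₀ ?_ hρ.le two_ne_zero).1 ?_)
  · exact div_nonneg (mul_nonneg (Real.sinh_nonneg_iff.2 hσ.le)
      (Real.sin_pos_of_mem_Ioo hθ).le) zero_le_two
  · have hfocal := ellipticCoord_sq_add_sq (Real.arcosh (R + S), Real.arccos (R - S))
    rw [hfst, hcosh, hcos] at hfocal
    linear_combination hfocal + hR

lemma image_ellipticCoord :
    ellipticCoord '' (Set.Ioi 0 ×ˢ Set.Ioo 0 Real.pi) = Set.univ ×ˢ Set.Ioi 0 := by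
  ext ⟨a, ρ⟩
  constructor
  · rintro ⟨⟨σ, θ⟩, ⟨hσ, hθ⟩, heq⟩
    rw [← heq]
    exact ⟨trivial, half_pos (mul_pos (Real.sinh_pos_iff.2 hσ) (Real.sin_pos_of_mem_Ioo hθ))⟩
  · rintro ⟨-, hρ⟩
    exact exists_ellipticCoord_eq a hρ

theorem lintegral_ellipticCoord {g : ℝ → ℝ → ℝ≥0∞} (hg : Measurable (Function.uncurry g)) :
    ∫⁻ a : ℝ, ∫⁻ ρ in Set.Ioi (0 : ℝ), g a ρ =
      ∫⁻ σ in Set.Ioi (0 : ℝ), ∫⁻ θ in Set.Ioo 0 Real.pi,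
        ENNReal.ofReal ((Real.cosh σ ^ 2 - Real.cos θ ^ 2) / 4) *
          g (ellipticCoord (σ, θ)).1 (ellipticCoord (σ, θ)).2 := by
  have hmeas : Measurable fun p => ENNReal.ofReal |(ellipticCoordDeriv p).det| *
      Function.uncurry g (ellipticCoord p) := by
    simp only [det_ellipticCoordDeriv]
    refine Measurable.mul (by fun_prop) (hg.comp ?_)
    unfold ellipticCoord
    fun_prop
  have hchange := lintegral_image_eq_lintegral_abs_det_fderiv_mul (volume : Measure (ℝ × ℝ))
    (measurableSet_Ioi.prod measurableSet_Ioo)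
    (fun p _ => (hasFDerivAt_ellipticCoord p).hasFDerivWithinAt) injOn_ellipticCoord
    (Function.uncurry g)
  rw [image_ellipticCoord, Measure.volume_eq_prod, ← Measure.prod_restrict,
    Measure.restrict_univ, lintegral_prod _ hg.aemeasurable, ← Measure.prod_restrict,
    lintegral_prod _ hmeas.aemeasurable] at hchange
  refine hchange.trans (lintegral_congr fun σ => lintegral_congr fun θ => ?_)
  have hjacobian : 0 ≤ (Real.cosh σ ^ 2 - Real.cos θ ^ 2) / 4 :=
    div_nonneg (sub_nonneg.2 ((Real.cos_sq_le_one θ).trans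
      (one_le_pow₀ (Real.one_le_cosh σ)))) (by norm_num)
  rw [det_ellipticCoordDeriv, abs_of_nonneg hjacobian]
  rfl

lemma rieszKernel_eq_inv_ofReal {E : Type*} [NormedAddCommGroup E] (k : ℕ) (x : E) :
    rieszKernel k x = (ENNReal.ofReal (‖x‖ ^ k))⁻¹ := by
  rw [rieszKernel, ← ofReal_norm, ENNReal.ofReal_pow (norm_nonneg _)]

lemma norm_sq_eq_add_axisDist_sq (y : R4) : ‖y‖ ^ 2 = y 0 ^ 2 + axisDist y ^ 2 := by
  rw [axisDist, Real.sq_sqrt (by positivity), EuclideanSpace.real_norm_sq_eq, Fin.sum_univ_four]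
  ring

/-- The unit vector spanning the axis. -/
noncomputable def pole : R4 := !₂[1, 0, 0, 0]

/-- The point at height `q.1` and distance `q.2` from the axis, in a fixed half plane. -/
noncomputable def meridianPt (q : ℝ × ℝ) : R4 := !₂[q.1, q.2, 0, 0]

/-- Functions invariant under the isometries fixing the axis. -/
def IsAxial (φ : R4 → ℝ≥0∞) : Prop :=
  ∀ U : R4 ≃ₗᵢ[ℝ] R4, U pole = pole → ∀ x, φ (U x) = φ x

@[fun_prop]
lemma measurable_meridianPt : Measurable meridianPt := by
  unfold meridianPt
  exact Continuous.measurable (by fun_prop)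

lemma norm_pole : ‖pole‖ = 1 := by
  rw [pole, EuclideanSpace.norm_eq, Fin.sum_univ_four]
  simp

lemma axisDist_pole_sub (y : R4) : axisDist (pole - y) = axisDist y := by
  simp [pole, axisDist]

lemma norm_sq_pole_sub (y : R4) : ‖pole - y‖ ^ 2 = (1 - y 0) ^ 2 + axisDist y ^ 2 := by
  rw [norm_sq_eq_add_axisDist_sq, axisDist_pole_sub]
  simp [pole]

lemma norm_sq_meridianPt (q : ℝ × ℝ) : ‖meridianPt q‖ ^ 2 = q.1 ^ 2 + q.2 ^ 2 := by
  rw [EuclideanSpace.real_norm_sq_eq, Fin.sum_univ_four]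
  simp [meridianPt]

lemma norm_sq_meridianPt_sub (q : ℝ × ℝ) (y : R4) :
    ‖meridianPt q - y‖ ^ 2 = (q.1 - y 0) ^ 2 + q.2 ^ 2 + axisDist y ^ 2 - 2 * q.2 * y 1 := by
  rw [axisDist, Real.sq_sqrt (by positivity), EuclideanSpace.real_norm_sq_eq, Fin.sum_univ_four]
  simp only [meridianPt, PiLp.sub_apply, Matrix.cons_val_zero, Matrix.cons_val_one,
    Matrix.cons_val, zero_sub, even_two, Even.neg_pow]
  ring

lemma isAxial_rieszKernel (k : ℕ) : IsAxial (rieszKernel k) :=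
  fun U _ x => rieszKernel_linearIsometryEquiv k U x

lemma IsAxial.symmTransfer {φ : R4 → ℝ≥0∞} (hφ : IsAxial φ) : IsAxial (symmTransfer pole φ) := by
  intro U hU x
  unfold _root_.symmTransfer
  rw [← lintegral_comp_linearIsometryEquiv U]
  refine lintegral_congr fun y => ?_
  have hsub : pole - U y = U (pole - y) := by rw [map_sub, hU]
  rw [← map_sub, hsub, rieszKernel_linearIsometryEquiv, rieszKernel_linearIsometryEquiv,
    rieszKernel_linearIsometryEquiv, hφ U hU]

lemma IsAxial.symmTransfer_iterate {φ : R4 → ℝ≥0∞} (hφ : IsAxial φ) (k : ℕ) :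
    IsAxial ((_root_.symmTransfer pole)^[k] φ) := by
  induction k with
  | zero => exact hφ
  | succ k ih =>
    rw [Function.iterate_succ_apply']
    exact ih.symmTransfer

lemma IsAxial.eq_meridianPt {φ : R4 → ℝ≥0∞} (hφ : IsAxial φ) (x : R4) :
    φ x = φ (meridianPt (x 0, axisDist x)) := by
  set w := meridianPt (x 0, axisDist x) with hw
  have hnorm : ‖x‖ = ‖w‖ := by
    refine (pow_left_inj₀ (norm_nonneg _) (norm_nonneg _) two_ne_zero).1 ?_
    rw [norm_sq_eq_add_axisDist_sq, norm_sq_meridianPt]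
  have hpole : (Submodule.reflection (ℝ ∙ (x - w))ᗮ) pole = pole := by
    refine Submodule.reflection_mem_subspace_eq_self ?_
    rw [Submodule.mem_orthogonal_singleton_iff_inner_right, PiLp.inner_apply, Fin.sum_univ_four]
    simp [hw, meridianPt, pole]
  rw [← hφ _ hpole x, Submodule.reflection_sub hnorm]

lemma measurable_setLIntegral_Ioo {α : Type*} [MeasurableSpace α] {u v : α → ℝ} {f : α → ℝ → ℝ≥0∞}
    (hu : Measurable u) (hv : Measurable v) (hf : Measurable (Function.uncurry f)) :
    Measurable fun x => ∫⁻ t in Set.Ioo (u x) (v x), f x t := by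
  have hfiber (x : α) : ∫⁻ t in Set.Ioo (u x) (v x), f x t =
      ∫⁻ t, {p : α × ℝ | u p.1 < p.2 ∧ p.2 < v p.1}.indicator (Function.uncurry f) (x, t) := by
    rw [← lintegral_indicator measurableSet_Ioo]
    rfl
  simp_rw [hfiber]
  exact Measurable.lintegral_prod_right' (hf.indicator
    ((measurableSet_lt (hu.comp measurable_fst) measurable_snd).inter
      (measurableSet_lt measurable_snd (hv.comp measurable_fst))))

lemma ellipticCoord_snd_pos {σ θ : ℝ} (hσ : 0 < σ) (hθ : θ ∈ Set.Ioo 0 Real.pi) :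
    0 < (ellipticCoord (σ, θ)).2 :=
  half_pos (mul_pos (Real.sinh_pos_iff.2 hσ) (Real.sin_pos_of_mem_Ioo hθ))

lemma pi_sub_mem_Ioo {θ : ℝ} (hθ : θ ∈ Set.Ioo 0 Real.pi) : Real.pi - θ ∈ Set.Ioo 0 Real.pi :=
  ⟨sub_pos.2 hθ.2, sub_lt_self _ hθ.1⟩

lemma ellipticCoord_pi_sub (σ θ : ℝ) : ellipticCoord (σ, Real.pi - θ) =
    (1 - (ellipticCoord (σ, θ)).1, (ellipticCoord (σ, θ)).2) := by
  simp only [ellipticCoord, Real.cos_pi_sub, Real.sin_pi_sub, Prod.mk.injEq, and_true]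
  ring

lemma cos_lt_cosh {τ : ℝ} (hτ : τ ≠ 0) (θ : ℝ) : Real.cos θ < Real.cosh τ :=
  (Real.cos_le_one θ).trans_lt (Real.one_lt_cosh.2 hτ)

lemma cosh_add_cos_pos {τ : ℝ} (hτ : τ ≠ 0) (θ : ℝ) : 0 < Real.cosh τ + Real.cos θ := by
  linarith [Real.one_lt_cosh.2 hτ, Real.neg_one_le_cos θ]

/-- The inverse product of the distances to the foci `(0, 0)` and `(1, 0)`, as a function on the
half plane. -/
noncomputable def focalWeight (q : ℝ × ℝ) : ℝ≥0∞ :=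
  (ENNReal.ofReal √(q.1 ^ 2 + q.2 ^ 2))⁻¹ * (ENNReal.ofReal √((1 - q.1) ^ 2 + q.2 ^ 2))⁻¹

@[fun_prop]
lemma measurable_focalWeight : Measurable focalWeight := by
  unfold focalWeight
  fun_prop

lemma rieszKernel_one_mul_rieszKernel_one_pole_sub (y : R4) :
    rieszKernel 1 y * rieszKernel 1 (pole - y) = focalWeight (y 0, axisDist y) := by
  simp only [focalWeight, rieszKernel_eq_inv_ofReal, pow_one, ← norm_sq_pole_sub,
    ← norm_sq_eq_add_axisDist_sq, Real.sqrt_sq (norm_nonneg _)]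

lemma jacobian_mul_focalWeight_ellipticCoord {σ : ℝ} (hσ : σ ≠ 0) (θ : ℝ) :
    ENNReal.ofReal ((Real.cosh σ ^ 2 - Real.cos θ ^ 2) / 4) *
      focalWeight (ellipticCoord (σ, θ)) = 1 := by
  have hadd := half_pos (cosh_add_cos_pos hσ θ)
  have hsub := half_pos (sub_pos.2 (cos_lt_cosh hσ θ))
  have hfactor : (Real.cosh σ ^ 2 - Real.cos θ ^ 2) / 4 =
      (Real.cosh σ + Real.cos θ) / 2 * ((Real.cosh σ - Real.cos θ) / 2) := by ring
  simp only [focalWeight, ellipticCoord_sq_add_sq, one_sub_ellipticCoord_sq_add_sq,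
    Real.sqrt_sq hadd.le, Real.sqrt_sq hsub.le, hfactor]
  rw [← ENNReal.mul_inv (.inr ENNReal.ofReal_ne_top) (.inl ENNReal.ofReal_ne_top),
    ← ENNReal.ofReal_mul hadd.le, ENNReal.mul_inv_cancel
      (ENNReal.ofReal_pos.2 (mul_pos hadd hsub)).ne' ENNReal.ofReal_ne_top]

/-- The Jacobian of elliptic coordinates is the product of the two focal distances, so it cancels
the weight. -/
theorem lintegral_rieszKernel_mul_rieszKernel_mul {H : ℝ → ℝ → ℝ → ℝ≥0∞}
    (hH : Measurable fun z : ℝ × ℝ × ℝ => H z.1 z.2.1 z.2.2) :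
    ∫⁻ y : R4, rieszKernel 1 y * rieszKernel 1 (pole - y) * H (y 0) (y 1) (axisDist y) =
      ENNReal.ofReal (2 * Real.pi) * ∫⁻ σ in Set.Ioi (0 : ℝ), ∫⁻ θ in Set.Ioo 0 Real.pi,
        ENNReal.ofReal (ellipticCoord (σ, θ)).2 *
          ∫⁻ t in Set.Ioo (-(ellipticCoord (σ, θ)).2) (ellipticCoord (σ, θ)).2,
            H (ellipticCoord (σ, θ)).1 t (ellipticCoord (σ, θ)).2 := by
  have hmeas_weight : Measurable fun z : ℝ × ℝ × ℝ =>
      focalWeight (z.1, z.2.2) * H z.1 z.2.1 z.2.2 := Measurable.mul (by fun_prop) hH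
  have hmeas_inner : Measurable fun p : ℝ × ℝ =>
      ∫⁻ t in Set.Ioo (-p.2) p.2, focalWeight (p.1, p.2) * H p.1 t p.2 :=
    measurable_setLIntegral_Ioo (by fun_prop) (by fun_prop)
      (f := fun (p : ℝ × ℝ) t => focalWeight (p.1, p.2) * H p.1 t p.2)
      (hmeas_weight.comp (g := fun z : ℝ × ℝ × ℝ => focalWeight (z.1, z.2.2) * H z.1 z.2.1 z.2.2)
        (f := fun q : (ℝ × ℝ) × ℝ => (q.1.1, q.2, q.1.2)) (by fun_prop))
  simp_rw [rieszKernel_one_mul_rieszKernel_one_pole_sub]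
  rw [lintegral_hatbox (F := fun a t ρ => focalWeight (a, ρ) * H a t ρ) hmeas_weight,
    lintegral_ellipticCoord (g := fun a ρ => ENNReal.ofReal ρ * ∫⁻ t in Set.Ioo (-ρ) ρ,
      focalWeight (a, ρ) * H a t ρ) (Measurable.mul (by fun_prop) hmeas_inner)]
  congr 1
  refine setLIntegral_congr_fun measurableSet_Ioi fun σ (hσ : 0 < σ) => lintegral_congr fun θ => ?_
  have hcancel := jacobian_mul_focalWeight_ellipticCoord hσ.ne' θ
  have hfinite : focalWeight (ellipticCoord (σ, θ)) ≠ ∞ := by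
    rw [ENNReal.eq_inv_of_mul_eq_one_left ((mul_comm _ _).trans hcancel)]
    exact ENNReal.inv_ne_top.2 (left_ne_zero_of_mul_eq_one hcancel)
  rw [lintegral_const_mul' _ _ hfinite, mul_left_comm, ← mul_assoc (ENNReal.ofReal _)
    (focalWeight _), hcancel, one_mul]

/-! ### Reduction to the half strip -/

/-- The kernel `n ↦ exp (-n τ) sin (n θ) sin (n θ')`, summed over `n ≥ 1`: a multiple of the odd
part of the Poisson kernel of the half plane with period `2 π`. -/
noncomputable def oddPoisson (τ θ θ' : ℝ) : ℝ :=
  (Real.sinh τ / (Real.cosh τ - Real.cos (θ - θ')) -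
    Real.sinh τ / (Real.cosh τ - Real.cos (θ + θ'))) / 4

lemma oddPoisson_nonneg {τ θ θ' : ℝ} (hτ : 0 < τ) (hθ : θ ∈ Set.Ioo 0 Real.pi)
    (hθ' : θ' ∈ Set.Ioo 0 Real.pi) : 0 ≤ oddPoisson τ θ θ' := by
  have hcos : Real.cos (θ + θ') ≤ Real.cos (θ - θ') := by
    rw [Real.cos_add, Real.cos_sub]
    linarith [mul_pos (Real.sin_pos_of_mem_Ioo hθ) (Real.sin_pos_of_mem_Ioo hθ')]
  exact div_nonneg (sub_nonneg.2 (div_le_div_of_nonneg_left (Real.sinh_nonneg_iff.2 hτ.le)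
    (sub_pos.2 (cos_lt_cosh hτ.ne' _)) (by linarith))) (by norm_num)

lemma lintegral_Ioo_ofReal_deriv {f f' : ℝ → ℝ} {a b : ℝ} (hab : a ≤ b)
    (hcont : ContinuousOn f (Set.Icc a b)) (hderiv : ∀ x ∈ Set.Ioo a b, HasDerivAt f (f' x) x)
    (hnonneg : ∀ x ∈ Set.Ioo a b, 0 ≤ f' x) :
    ∫⁻ x in Set.Ioo a b, ENNReal.ofReal (f' x) = ENNReal.ofReal (f b - f a) := by
  have hint : IntegrableOn f' (Set.Ioc a b) :=
    intervalIntegral.integrableOn_deriv_of_nonneg hcont hderiv hnonneg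
  have hint' : IntervalIntegrable f' volume a b :=
    (intervalIntegrable_iff_integrableOn_Ioc_of_le hab).2 hint
  rw [← intervalIntegral.integral_eq_sub_of_hasDerivAt_of_le hab hcont hderiv hint',
    intervalIntegral.integral_of_le hab, integral_Ioc_eq_integral_Ioo,
    ofReal_integral_eq_lintegral_ofReal (hint.mono_set Set.Ioo_subset_Ioc_self)
      ((ae_restrict_iff' measurableSet_Ioo).2 (.of_forall hnonneg))]

lemma lintegral_oddPoisson {a b θ θ' : ℝ} (ha : 0 < a) (hab : a ≤ b)
    (hθ : θ ∈ Set.Ioo 0 Real.pi) (hθ' : θ' ∈ Set.Ioo 0 Real.pi) :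
    ∫⁻ τ in Set.Ioo a b, ENNReal.ofReal (oddPoisson τ θ θ') =
      ENNReal.ofReal (Real.log ((Real.cosh b - Real.cos (θ - θ')) *
        (Real.cosh a - Real.cos (θ + θ')) / ((Real.cosh b - Real.cos (θ + θ')) *
        (Real.cosh a - Real.cos (θ - θ')))) / 4) := by
  have hsub_pos {τ : ℝ} (hτ : 0 < τ) (α : ℝ) : 0 < Real.cosh τ - Real.cos α :=
    sub_pos.2 (cos_lt_cosh hτ.ne' α)
  have hderiv : ∀ τ ∈ Set.Icc a b, HasDerivAt (fun τ =>
      (Real.log (Real.cosh τ - Real.cos (θ - θ')) - Real.log (Real.cosh τ - Real.cos (θ + θ'))) / 4)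
      (oddPoisson τ θ θ') τ := fun τ hτ => by
    have hlog (α : ℝ) := ((Real.hasDerivAt_cosh τ).sub_const (Real.cos α)).log
      (hsub_pos (ha.trans_le hτ.1) α).ne'
    exact ((hlog (θ - θ')).sub (hlog (θ + θ'))).div_const 4
  rw [lintegral_Ioo_ofReal_deriv hab (fun τ hτ => (hderiv τ hτ).continuousAt.continuousWithinAt)
    (fun τ hτ => hderiv τ (Set.Ioo_subset_Icc_self hτ))
    (fun τ hτ => oddPoisson_nonneg (ha.trans hτ.1) hθ hθ')]
  have ha_ne := fun α => (hsub_pos ha α).ne'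
  have hb_ne := fun α => (hsub_pos (ha.trans_le hab) α).ne'
  rw [Real.log_div (mul_ne_zero (hb_ne _) (ha_ne _)) (mul_ne_zero (hb_ne _) (ha_ne _)),
    Real.log_mul (hb_ne _) (ha_ne _), Real.log_mul (hb_ne _) (ha_ne _)]
  congr 1
  ring

lemma lintegral_Ioo_inv_sub_mul {A r ρ : ℝ} (hr : 0 < r) (hρ : 0 ≤ ρ) (hA : 0 < A - 2 * r * ρ) :
    ∫⁻ t in Set.Ioo (-ρ) ρ, (ENNReal.ofReal (A - 2 * r * t))⁻¹ =
      ENNReal.ofReal (Real.log ((A + 2 * r * ρ) / (A - 2 * r * ρ)) / (2 * r)) := by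
  have hpos : ∀ t ∈ Set.Icc (-ρ) ρ, 0 < A - 2 * r * t := fun t ht => by
    linarith [mul_le_mul_of_nonneg_left ht.2 (by positivity : 0 ≤ 2 * r)]
  have hderiv : ∀ t ∈ Set.Icc (-ρ) ρ, HasDerivAt (fun t => -(2 * r)⁻¹ * Real.log (A - 2 * r * t))
      (A - 2 * r * t)⁻¹ t := fun t ht => by
    refine (((((hasDerivAt_id t).const_mul (2 * r)).const_sub A).log (hpos t ht).ne').const_mul
      (-(2 * r)⁻¹)).congr_deriv ?_
    have hne := (hpos t ht).ne'
    simp only [id]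
    field_simp
  have hofReal : ∀ t ∈ Set.Ioo (-ρ) ρ,
      (ENNReal.ofReal (A - 2 * r * t))⁻¹ = ENNReal.ofReal (A - 2 * r * t)⁻¹ := fun t ht =>
    (ENNReal.ofReal_inv_of_pos (hpos t (Set.Ioo_subset_Icc_self ht))).symm
  rw [setLIntegral_congr_fun measurableSet_Ioo hofReal, lintegral_Ioo_ofReal_deriv (by linarith)
    (fun t ht => (hderiv t ht).continuousAt.continuousWithinAt)
    (fun t ht => hderiv t (Set.Ioo_subset_Icc_self ht))
    (fun t ht => (inv_pos.2 (hpos t (Set.Ioo_subset_Icc_self ht))).le)]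
  have hpos_neg := hpos (-ρ) (Set.left_mem_Icc.2 (by linarith))
  rw [mul_neg, sub_neg_eq_add] at hpos_neg ⊢
  rw [Real.log_div hpos_neg.ne' hA.ne']
  congr 1
  field_simp
  ring

lemma ellipticCoord_dist_sq (σ θ σ' θ' : ℝ) :
    ((ellipticCoord (σ, θ)).1 - (ellipticCoord (σ', θ')).1) ^ 2 + (ellipticCoord (σ, θ)).2 ^ 2 +
      (ellipticCoord (σ', θ')).2 ^ 2 - 2 * (ellipticCoord (σ, θ)).2 * (ellipticCoord (σ', θ')).2 =
    (Real.cosh (σ + σ') - Real.cos (θ + θ')) * (Real.cosh (σ - σ') - Real.cos (θ - θ')) / 4 := by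
  rw [Real.cosh_add, Real.cosh_sub, Real.cos_add, Real.cos_sub, ellipticCoord, ellipticCoord]
  have hleft : Real.sinh σ ^ 2 + Real.sin θ' ^ 2 = Real.cosh σ ^ 2 - Real.cos θ' ^ 2 := by
    linear_combination Real.sin_sq_add_cos_sq θ' - Real.cosh_sq σ
  have hright : Real.sinh σ' ^ 2 + Real.sin θ ^ 2 = Real.cosh σ' ^ 2 - Real.cos θ ^ 2 := by
    linear_combination Real.sin_sq_add_cos_sq θ - Real.cosh_sq σ'
  linear_combination (Real.sinh σ' ^ 2 + Real.sin θ ^ 2) / 4 * hleft +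
    (Real.cosh σ ^ 2 - Real.cos θ' ^ 2) / 4 * hright

lemma ellipticCoord_neg (σ θ : ℝ) :
    ellipticCoord (σ, -θ) = ((ellipticCoord (σ, θ)).1, -(ellipticCoord (σ, θ)).2) := by
  simp only [ellipticCoord, Real.cos_neg, Real.sin_neg, mul_neg, neg_div]

lemma ellipticCoord_dist_sq_reflect (σ θ σ' θ' : ℝ) :
    ((ellipticCoord (σ, θ)).1 - (ellipticCoord (σ', θ')).1) ^ 2 + (ellipticCoord (σ, θ)).2 ^ 2 +
      (ellipticCoord (σ', θ')).2 ^ 2 + 2 * (ellipticCoord (σ, θ)).2 * (ellipticCoord (σ', θ')).2 =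
    (Real.cosh (σ + σ') - Real.cos (θ - θ')) * (Real.cosh (σ - σ') - Real.cos (θ + θ')) / 4 := by
  have hdist := ellipticCoord_dist_sq σ θ σ' (-θ')
  rw [ellipticCoord_neg, ← sub_eq_add_neg, sub_neg_eq_add] at hdist
  rw [← hdist]
  ring

lemma lintegral_Ioo_inv_ellipticCoord_dist_sq {σ θ σ' θ' : ℝ} (hσ : 0 < σ)
    (hθ : θ ∈ Set.Ioo 0 Real.pi) (hσ' : 0 < σ') (hθ' : θ' ∈ Set.Ioo 0 Real.pi) (hne : σ ≠ σ') :
    ∫⁻ t in Set.Ioo (-(ellipticCoord (σ', θ')).2) (ellipticCoord (σ', θ')).2,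
      (ENNReal.ofReal (((ellipticCoord (σ, θ)).1 - (ellipticCoord (σ', θ')).1) ^ 2 +
        (ellipticCoord (σ, θ)).2 ^ 2 + (ellipticCoord (σ', θ')).2 ^ 2 -
          2 * (ellipticCoord (σ, θ)).2 * t))⁻¹ =
      ENNReal.ofReal (2 / (ellipticCoord (σ, θ)).2) *
        ∫⁻ τ in Set.Ioo |σ - σ'| (σ + σ'), ENNReal.ofReal (oddPoisson τ θ θ') := by
  have hr := ellipticCoord_snd_pos hσ hθ
  have hdist := ellipticCoord_dist_sq σ θ σ' θ'
  have hpos : 0 < ((ellipticCoord (σ, θ)).1 - (ellipticCoord (σ', θ')).1) ^ 2 +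
      (ellipticCoord (σ, θ)).2 ^ 2 + (ellipticCoord (σ', θ')).2 ^ 2 -
        2 * (ellipticCoord (σ, θ)).2 * (ellipticCoord (σ', θ')).2 := by
    rw [hdist]
    exact div_pos (mul_pos (sub_pos.2 (cos_lt_cosh (by positivity) _))
      (sub_pos.2 (cos_lt_cosh (sub_ne_zero.2 hne) _))) (by norm_num)
  rw [lintegral_Ioo_inv_sub_mul hr (ellipticCoord_snd_pos hσ' hθ').le hpos, hdist,
    ellipticCoord_dist_sq_reflect, div_div_div_cancel_right₀ (by norm_num),
    lintegral_oddPoisson (abs_pos.2 (sub_ne_zero.2 hne))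
      (abs_le.2 ⟨by linarith, by linarith⟩) hθ hθ', Real.cosh_abs,
    ← ENNReal.ofReal_mul (by positivity)]
  congr 1
  field_simp
  ring

/-- `F` represents the axial function `φ` in elliptic coordinates, rescaled by the distance to the
axis. -/
def IsStripRep (φ : R4 → ℝ≥0∞) (F : ℝ → ℝ → ℝ≥0∞) : Prop :=
  ∀ σ > 0, ∀ θ ∈ Set.Ioo 0 Real.pi, φ (meridianPt (ellipticCoord (σ, θ))) =
    ENNReal.ofReal (ellipticCoord (σ, θ)).2⁻¹ * F σ θ

lemma IsStripRep.ofReal_mul {φ : R4 → ℝ≥0∞} {F : ℝ → ℝ → ℝ≥0∞} (hF : IsStripRep φ F) {σ θ : ℝ}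
    (hσ : 0 < σ) (hθ : θ ∈ Set.Ioo 0 Real.pi) :
    ENNReal.ofReal (ellipticCoord (σ, θ)).2 * φ (meridianPt (ellipticCoord (σ, θ))) = F σ θ := by
  have hρ := ellipticCoord_snd_pos hσ hθ
  rw [hF σ hσ θ hθ, ← mul_assoc, ← ENNReal.ofReal_mul hρ.le, mul_inv_cancel₀ hρ.ne',
    ENNReal.ofReal_one, one_mul]

lemma symmTransfer_pole_meridianPt {φ : R4 → ℝ≥0∞} (hm : Measurable φ) (hφ : IsAxial φ)
    (q : ℝ × ℝ) : symmTransfer pole φ (meridianPt q) = ENNReal.ofReal (2 * Real.pi) *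
      ∫⁻ σ in Set.Ioi (0 : ℝ), ∫⁻ θ in Set.Ioo 0 Real.pi,
        (∫⁻ t in Set.Ioo (-(ellipticCoord (σ, θ)).2) (ellipticCoord (σ, θ)).2,
          (ENNReal.ofReal ((q.1 - (ellipticCoord (σ, θ)).1) ^ 2 + q.2 ^ 2 +
            (ellipticCoord (σ, θ)).2 ^ 2 - 2 * q.2 * t))⁻¹) *
        (ENNReal.ofReal (ellipticCoord (σ, θ)).2 *
          φ (meridianPt (ellipticCoord (σ, Real.pi - θ)))) := by
  have hsub (y : R4) : φ (pole - y) = φ (meridianPt (1 - y 0, axisDist y)) := by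
    rw [hφ.eq_meridianPt (pole - y), axisDist_pole_sub]
    simp [pole]
  have hintegrand (y : R4) : rieszKernel 2 (meridianPt q - y) *
      (rieszKernel 1 y * rieszKernel 1 (pole - y)) * φ (pole - y) =
      rieszKernel 1 y * rieszKernel 1 (pole - y) *
        ((ENNReal.ofReal ((q.1 - y 0) ^ 2 + q.2 ^ 2 + axisDist y ^ 2 - 2 * q.2 * y 1))⁻¹ *
          φ (meridianPt (1 - y 0, axisDist y))) := by
    rw [rieszKernel_eq_inv_ofReal 2, norm_sq_meridianPt_sub, hsub]
    ring
  rw [symmTransfer, lintegral_congr hintegrand, lintegral_rieszKernel_mul_rieszKernel_mul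
    (H := fun b t ρ => (ENNReal.ofReal ((q.1 - b) ^ 2 + q.2 ^ 2 + ρ ^ 2 - 2 * q.2 * t))⁻¹ *
      φ (meridianPt (1 - b, ρ))) (Measurable.mul (by fun_prop) (hm.comp (by fun_prop)))]
  congr 1
  refine lintegral_congr fun σ => lintegral_congr fun θ => ?_
  rw [lintegral_mul_const _ (by fun_prop), ellipticCoord_pi_sub]
  ring

theorem IsStripRep.symmTransfer {φ : R4 → ℝ≥0∞} {F : ℝ → ℝ → ℝ≥0∞} (hm : Measurable φ)
    (hφ : IsAxial φ) (hF : IsStripRep φ F) :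
    IsStripRep (symmTransfer pole φ) fun σ θ => ENNReal.ofReal (4 * Real.pi) *
      ∫⁻ σ' in Set.Ioi (0 : ℝ), ∫⁻ θ' in Set.Ioo 0 Real.pi,
        (∫⁻ τ in Set.Ioo |σ - σ'| (σ + σ'), ENNReal.ofReal (oddPoisson τ θ θ')) *
          F σ' (Real.pi - θ') := by
  intro σ hσ θ hθ
  have hr := ellipticCoord_snd_pos hσ hθ
  have hconst : ENNReal.ofReal (ellipticCoord (σ, θ)).2⁻¹ * ENNReal.ofReal (4 * Real.pi) =
      ENNReal.ofReal (2 * Real.pi) * ENNReal.ofReal (2 / (ellipticCoord (σ, θ)).2) := by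
    rw [← ENNReal.ofReal_mul (by positivity), ← ENNReal.ofReal_mul (by positivity)]
    congr 1
    ring
  rw [symmTransfer_pole_meridianPt hm hφ, ← mul_assoc, hconst, mul_assoc]
  congr 1
  rw [← lintegral_const_mul' _ _ ENNReal.ofReal_ne_top]
  refine lintegral_congr_ae ?_
  filter_upwards [ae_restrict_mem measurableSet_Ioi, ae_restrict_of_ae (Measure.ae_ne _ σ)]
    with σ' (hσ' : 0 < σ') hne
  rw [← lintegral_const_mul' _ _ ENNReal.ofReal_ne_top]
  refine setLIntegral_congr_fun measurableSet_Ioo fun θ' hθ' => ?_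
  have hvalue : ENNReal.ofReal (ellipticCoord (σ', θ')).2 *
      φ (meridianPt (ellipticCoord (σ', Real.pi - θ'))) = F σ' (Real.pi - θ') := by
    rw [← hF.ofReal_mul hσ' (pi_sub_mem_Ioo hθ'), ellipticCoord_pi_sub]
  rw [hvalue, lintegral_Ioo_inv_ellipticCoord_dist_sq hσ hθ hσ' hθ' hne.symm, mul_assoc]

/-- The Poisson dipole of the half strip; up to sign conventions for the two ends of the base, it
is the strip representative of `‖x‖⁻²`. -/
noncomputable def poissonDipole (ε τ θ : ℝ) : ℝ :=
  2 * Real.sinh τ * Real.sin θ / (Real.cosh τ - ε * Real.cos θ) ^ 2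

lemma poissonDipole_nonneg {τ θ : ℝ} (ε : ℝ) (hτ : 0 < τ) (hθ : θ ∈ Set.Ioo 0 Real.pi) :
    0 ≤ poissonDipole ε τ θ := by
  have hsinh := Real.sinh_pos_iff.2 hτ
  have hsin := Real.sin_pos_of_mem_Ioo hθ
  unfold poissonDipole
  positivity

lemma measurable_poissonDipole {α : Type*} [MeasurableSpace α] {ε : ℝ} {u v : α → ℝ}
    (hu : Measurable u) (hv : Measurable v) : Measurable fun x => poissonDipole ε (u x) (v x) := by
  unfold poissonDipole
  fun_prop

lemma poissonDipole_pi_sub (ε τ θ : ℝ) :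
    poissonDipole ε τ (Real.pi - θ) = poissonDipole (-ε) τ θ := by
  unfold poissonDipole
  rw [Real.sin_pi_sub, Real.cos_pi_sub]
  ring

lemma isStripRep_rieszKernel_two :
    IsStripRep (rieszKernel 2) fun σ θ => ENNReal.ofReal (poissonDipole (-1) σ θ) := by
  intro σ hσ θ hθ
  have hρ := ellipticCoord_snd_pos hσ hθ
  have hadd := cosh_add_cos_pos hσ.ne' θ
  rw [rieszKernel_eq_inv_ofReal, norm_sq_meridianPt, ellipticCoord_sq_add_sq,
    ← ENNReal.ofReal_inv_of_pos (by positivity), ← ENNReal.ofReal_mul (by positivity)]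
  have hdipole : poissonDipole (-1) σ θ =
      (ellipticCoord (σ, θ)).2 * (((Real.cosh σ + Real.cos θ) / 2) ^ 2)⁻¹ := by
    rw [poissonDipole, neg_one_mul, sub_neg_eq_add, ellipticCoord]
    field_simp
  rw [hdipole, inv_mul_cancel_left₀ hρ.ne']

theorem IsStripRep.lintegral_rieszKernel_mul {φ : R4 → ℝ≥0∞} {F : ℝ → ℝ → ℝ≥0∞}
    (hm : Measurable φ) (hφ : IsAxial φ) (hF : IsStripRep φ F) :
    ∫⁻ y, rieszKernel 3 (pole - y) * rieszKernel 1 y * φ y = ENNReal.ofReal (4 * Real.pi) *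
      ∫⁻ σ in Set.Ioi (0 : ℝ), ∫⁻ θ in Set.Ioo 0 Real.pi,
        ENNReal.ofReal (poissonDipole 1 σ θ) * F σ θ := by
  have hintegrand (y : R4) : rieszKernel 3 (pole - y) * rieszKernel 1 y * φ y =
      rieszKernel 1 y * rieszKernel 1 (pole - y) *
        ((ENNReal.ofReal ((1 - y 0) ^ 2 + axisDist y ^ 2))⁻¹ *
          φ (meridianPt (y 0, axisDist y))) := by
    rw [rieszKernel_add 1 2, rieszKernel_eq_inv_ofReal 2, norm_sq_pole_sub,
      hφ.eq_meridianPt y]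
    ring
  have hconst : ENNReal.ofReal (4 * Real.pi) =
      ENNReal.ofReal (2 * Real.pi) * ENNReal.ofReal 2 := by
    rw [← ENNReal.ofReal_mul (by positivity)]
    congr 1
    ring
  rw [lintegral_congr hintegrand, lintegral_rieszKernel_mul_rieszKernel_mul
    (H := fun b _ ρ => (ENNReal.ofReal ((1 - b) ^ 2 + ρ ^ 2))⁻¹ * φ (meridianPt (b, ρ)))
    (Measurable.mul (by fun_prop) (hm.comp (by fun_prop))), hconst, mul_assoc]
  congr 1
  rw [← lintegral_const_mul' _ _ ENNReal.ofReal_ne_top]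
  refine setLIntegral_congr_fun measurableSet_Ioi fun σ (hσ : 0 < σ) => ?_
  rw [← lintegral_const_mul' _ _ ENNReal.ofReal_ne_top]
  refine setLIntegral_congr_fun measurableSet_Ioo fun θ hθ => ?_
  have hρ := ellipticCoord_snd_pos hσ hθ
  have hsub := sub_pos.2 (cos_lt_cosh hσ.ne' θ)
  have hdipole : 2 * poissonDipole 1 σ θ = (((Real.cosh σ - Real.cos θ) / 2) ^ 2)⁻¹ *
      ((ellipticCoord (σ, θ)).2 - -(ellipticCoord (σ, θ)).2) := by
    rw [poissonDipole, one_mul, ellipticCoord]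
    field_simp
    ring
  rw [← mul_assoc (ENNReal.ofReal 2), ← ENNReal.ofReal_mul zero_le_two, hdipole,
    ENNReal.ofReal_mul (by positivity), ← hF.ofReal_mul hσ hθ, setLIntegral_const, Real.volume_Ioo,
    one_sub_ellipticCoord_sq_add_sq, ENNReal.ofReal_inv_of_pos (by positivity)]
  ring

/-! ### Sine series -/

lemma norm_exp_neg_add_mul_I_lt_one {τ : ℝ} (hτ : 0 < τ) (α : ℝ) :
    ‖Complex.exp (-τ + α * Complex.I)‖ < 1 := by
  rw [Complex.norm_exp]
  simpa using hτ

lemma exp_neg_add_mul_I_pow (τ α : ℝ) (n : ℕ) :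
    Complex.exp (-τ + α * Complex.I) ^ n =
      Complex.exp (-(n * τ : ℝ) + (n * α : ℝ) * Complex.I) := by
  rw [← Complex.exp_nat_mul]
  push_cast
  ring_nf

lemma re_exp_neg_add_mul_I (τ α : ℝ) :
    (Complex.exp (-τ + α * Complex.I)).re = Real.exp (-τ) * Real.cos α := by
  simp [Complex.exp_re]

lemma im_exp_neg_add_mul_I (τ α : ℝ) :
    (Complex.exp (-τ + α * Complex.I)).im = Real.exp (-τ) * Real.sin α := by
  simp [Complex.exp_im]

lemma exp_neg_mul_cosh (τ : ℝ) : Real.exp (-τ) * Real.cosh τ = (1 + Real.exp (-τ) ^ 2) / 2 := by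
  have h : Real.exp (-τ) * Real.exp τ = 1 := by rw [← Real.exp_add, neg_add_cancel, Real.exp_zero]
  rw [Real.cosh_eq]
  linear_combination h / 2

lemma exp_neg_mul_sinh (τ : ℝ) : Real.exp (-τ) * Real.sinh τ = (1 - Real.exp (-τ) ^ 2) / 2 := by
  have h : Real.exp (-τ) * Real.exp τ = 1 := by rw [← Real.exp_add, neg_add_cancel, Real.exp_zero]
  rw [Real.sinh_eq]
  linear_combination h / 2

lemma normSq_one_sub_exp_neg_add_mul_I (τ α : ℝ) :
    Complex.normSq (1 - Complex.exp (-τ + α * Complex.I)) =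
      2 * Real.exp (-τ) * (Real.cosh τ - Real.cos α) := by
  rw [Complex.normSq_apply]
  simp only [Complex.sub_re, Complex.sub_im, Complex.one_re, Complex.one_im,
    re_exp_neg_add_mul_I, im_exp_neg_add_mul_I]
  linear_combination Real.exp (-τ) ^ 2 * Real.sin_sq_add_cos_sq α - 2 * exp_neg_mul_cosh τ

lemma hasSum_exp_mul_cos {τ : ℝ} (hτ : 0 < τ) (α : ℝ) :
    HasSum (fun n : ℕ => Real.exp (-(n * τ)) * Real.cos (n * α))
      ((Real.sinh τ / (Real.cosh τ - Real.cos α) + 1) / 2) := by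
  have h := Complex.hasSum_re
    (hasSum_geometric_of_norm_lt_one (norm_exp_neg_add_mul_I_lt_one hτ α))
  have hne : Real.cosh τ - Real.cos α ≠ 0 := (sub_pos.2 (cos_lt_cosh hτ.ne' α)).ne'
  convert! h using 1
  · funext n
    rw [exp_neg_add_mul_I_pow, re_exp_neg_add_mul_I]
  · rw [Complex.inv_re, normSq_one_sub_exp_neg_add_mul_I, Complex.sub_re, Complex.one_re,
      re_exp_neg_add_mul_I]
    field_simp
    linear_combination exp_neg_mul_cosh τ + exp_neg_mul_sinh τ

lemma hasSum_oddPoisson {τ : ℝ} (hτ : 0 < τ) (θ θ' : ℝ) :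
    HasSum (fun n : ℕ => (Real.exp (-(n * τ)) * Real.sin (n * θ)) * Real.sin (n * θ'))
      (oddPoisson τ θ θ') := by
  have h := ((hasSum_exp_mul_cos hτ (θ - θ')).sub (hasSum_exp_mul_cos hτ (θ + θ'))).div_const 2
  convert! h using 1
  · funext n
    rw [mul_sub, mul_add, Real.cos_sub, Real.cos_add]
    ring
  · unfold oddPoisson
    ring

lemma hasSum_poissonDipole_one {τ : ℝ} (hτ : 0 < τ) (θ : ℝ) :
    HasSum (fun n : ℕ => (4 * n * Real.exp (-(n * τ))) * Real.sin (n * θ))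
      (poissonDipole 1 τ θ) := by
  have h := (Complex.hasSum_im (hasSum_coe_mul_geometric_of_norm_lt_one
    (norm_exp_neg_add_mul_I_lt_one hτ θ))).mul_left 4
  have hne : Real.cosh τ - Real.cos θ ≠ 0 := (sub_pos.2 (cos_lt_cosh hτ.ne' θ)).ne'
  convert! h using 1
  · funext n
    rw [exp_neg_add_mul_I_pow, ← Complex.ofReal_natCast, Complex.im_ofReal_mul,
      im_exp_neg_add_mul_I]
    ring
  · rw [Complex.div_im, map_pow, normSq_one_sub_exp_neg_add_mul_I, poissonDipole, one_mul]
    simp only [pow_two (1 - Complex.exp _), Complex.mul_re, Complex.mul_im, Complex.sub_re,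
      Complex.sub_im, Complex.one_re, Complex.one_im, re_exp_neg_add_mul_I, im_exp_neg_add_mul_I]
    field_simp
    linear_combination 8 * Real.sin θ * exp_neg_mul_sinh τ +
      4 * Real.sin θ * Real.exp (-τ) ^ 2 * Real.sin_sq_add_cos_sq θ

lemma sin_natCast_mul_pi_sub (n : ℕ) (θ : ℝ) :
    Real.sin (n * (Real.pi - θ)) = (-1) ^ (n + 1) * Real.sin (n * θ) := by
  rw [mul_sub, Real.sin_nat_mul_pi_sub, pow_succ]
  ring

lemma hasSum_poissonDipole {ε τ : ℝ} (hε : ε ^ 2 = 1) (hτ : 0 < τ) (θ : ℝ) :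
    HasSum (fun n : ℕ => (4 * n * ε ^ (n + 1) * Real.exp (-(n * τ))) * Real.sin (n * θ))
      (poissonDipole ε τ θ) := by
  rcases sq_eq_one_iff.1 hε with rfl | rfl
  · simpa only [one_pow, mul_one] using hasSum_poissonDipole_one hτ θ
  · rw [← poissonDipole_pi_sub]
    convert! hasSum_poissonDipole_one hτ (Real.pi - θ) using 2 with n
    rw [sin_natCast_mul_pi_sub]
    ring

lemma integral_cos_intCast_mul {k : ℤ} (hk : k ≠ 0) :
    ∫ θ in (0 : ℝ)..Real.pi, Real.cos (k * θ) = 0 := by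
  rw [intervalIntegral.integral_comp_mul_left _ (Int.cast_ne_zero.2 hk), integral_cos,
    Real.sin_int_mul_pi, mul_zero, Real.sin_zero, sub_zero, smul_zero]

lemma integral_sin_mul_sin {n : ℕ} (hn : n ≠ 0) (m : ℕ) :
    ∫ θ in (0 : ℝ)..Real.pi, Real.sin (m * θ) * Real.sin (n * θ) =
      if m = n then Real.pi / 2 else 0 := by
  have h (θ : ℝ) : Real.sin (m * θ) * Real.sin (n * θ) =
      (Real.cos (((m - n : ℤ) : ℝ) * θ) - Real.cos (((m + n : ℤ) : ℝ) * θ)) / 2 := by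
    push_cast
    rw [sub_mul, add_mul, Real.cos_sub, Real.cos_add]
    ring
  simp_rw [h]
  rw [intervalIntegral.integral_div, intervalIntegral.integral_sub
    (Continuous.intervalIntegrable (by fun_prop) _ _)
    (Continuous.intervalIntegrable (by fun_prop) _ _),
    integral_cos_intCast_mul (k := m + n) (by omega)]
  split_ifs with hmn
  · simp [hmn]
  · rw [integral_cos_intCast_mul (k := m - n) (by omega), sub_zero, zero_div]

lemma norm_mul_sin_le (c x : ℝ) : ‖c * Real.sin x‖ ≤ |c| := by
  rw [norm_mul]
  exact mul_le_of_le_one_right (abs_nonneg c) (Real.abs_sin_le_one x)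

lemma continuous_of_hasSum_mul_sin {a : ℕ → ℝ} {f : ℝ → ℝ} (ha : Summable fun n => |a n|)
    (hf : ∀ θ, HasSum (fun n : ℕ => a n * Real.sin (n * θ)) (f θ)) : Continuous f := by
  rw [funext fun θ => (hf θ).tsum_eq.symm]
  exact continuous_tsum (fun n => by fun_prop) ha fun n θ => norm_mul_sin_le (a n) (n * θ)

lemma hasSum_integral_mul_sin {a : ℕ → ℝ} (ha : Summable fun n => |a n|) {f g : ℝ → ℝ}
    (hf : ∀ θ, HasSum (fun n : ℕ => a n * Real.sin (n * θ)) (f θ)) (hg : Continuous g) :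
    HasSum (fun n => a n * ∫ θ in (0 : ℝ)..Real.pi, Real.sin (n * θ) * g θ)
      (∫ θ in (0 : ℝ)..Real.pi, f θ * g θ) := by
  obtain ⟨C, hC⟩ := (isCompact_uIcc (a := (0 : ℝ)) (b := Real.pi)).exists_bound_of_continuousOn
    hg.continuousOn
  have hbound (n : ℕ) : ∀ᵐ θ : ℝ, θ ∈ Set.uIoc 0 Real.pi →
      ‖a n * Real.sin (n * θ) * g θ‖ ≤ |a n| * C := .of_forall fun θ hθ => by
    rw [norm_mul]
    gcongr
    · exact norm_mul_sin_le _ _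
    · exact hC θ (Set.uIoc_subset_uIcc hθ)
  have h := intervalIntegral.hasSum_integral_of_dominated_convergence (μ := volume)
    (fun n _ => |a n| * C) (fun n => Continuous.aestronglyMeasurable (by fun_prop)) hbound
    (.of_forall fun _ _ => ha.mul_right C) intervalIntegrable_const
    (.of_forall fun θ _ => (hf θ).mul_right (g θ))
  simpa only [mul_assoc, intervalIntegral.integral_const_mul] using h

lemma integral_mul_of_hasSum_mul_sin {a b : ℕ → ℝ} {f g : ℝ → ℝ} (ha : Summable fun n => |a n|)
    (hb : Summable fun n => |b n|) (ha₀ : a 0 = 0)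
    (hf : ∀ θ, HasSum (fun n : ℕ => a n * Real.sin (n * θ)) (f θ))
    (hg : ∀ θ, HasSum (fun n : ℕ => b n * Real.sin (n * θ)) (g θ)) :
    ∫ θ in (0 : ℝ)..Real.pi, f θ * g θ = Real.pi / 2 * ∑' n, a n * b n := by
  rw [← (hasSum_integral_mul_sin ha hf (continuous_of_hasSum_mul_sin hb hg)).tsum_eq,
    ← tsum_mul_left]
  refine tsum_congr fun n => ?_
  rcases eq_or_ne n 0 with rfl | hn
  · simp only [ha₀, zero_mul, mul_zero]
  have hcoeff : ∫ θ in (0 : ℝ)..Real.pi, g θ * Real.sin (n * θ) = b n * (Real.pi / 2) := by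
    rw [← (hasSum_integral_mul_sin hb hg (g := fun θ => Real.sin (n * θ)) (by fun_prop)).tsum_eq]
    simp_rw [integral_sin_mul_sin hn, mul_ite, mul_zero]
    exact tsum_ite_eq n _
  simp_rw [mul_comm (Real.sin _), hcoeff]
  ring

lemma lintegral_mul_of_hasSum_mul_sin {a b : ℕ → ℝ} {f g : ℝ → ℝ} (ha : Summable fun n => |a n|)
    (hb : Summable fun n => |b n|) (ha₀ : a 0 = 0)
    (hf : ∀ θ, HasSum (fun n : ℕ => a n * Real.sin (n * θ)) (f θ))
    (hg : ∀ θ, HasSum (fun n : ℕ => b n * Real.sin (n * θ)) (g θ))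
    (hf₀ : ∀ θ ∈ Set.Ioo 0 Real.pi, 0 ≤ f θ) (hg₀ : ∀ θ ∈ Set.Ioo 0 Real.pi, 0 ≤ g θ) :
    ∫⁻ θ in Set.Ioo 0 Real.pi, ENNReal.ofReal (f θ) * ENNReal.ofReal (g θ) =
      ENNReal.ofReal (Real.pi / 2 * ∑' n, a n * b n) := by
  have hint : IntervalIntegrable (fun θ => f θ * g θ) volume 0 Real.pi :=
    ((continuous_of_hasSum_mul_sin ha hf).mul
      (continuous_of_hasSum_mul_sin hb hg)).intervalIntegrable _ _
  rw [setLIntegral_congr_fun measurableSet_Ioo fun θ hθ => (ENNReal.ofReal_mul (hf₀ θ hθ)).symm,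
    ← ofReal_integral_eq_lintegral_ofReal (hint.1.mono_set Set.Ioo_subset_Ioc_self)
      (ae_restrict_of_forall_mem measurableSet_Ioo fun θ hθ =>
        mul_nonneg (hf₀ θ hθ) (hg₀ θ hθ)), ← integral_Ioc_eq_integral_Ioo,
    ← intervalIntegral.integral_of_le Real.pi_pos.le,
    integral_mul_of_hasSum_mul_sin ha hb ha₀ hf hg]

lemma summable_natCast_pow_mul_exp (k : ℕ) {τ : ℝ} (hτ : 0 < τ) :
    Summable fun n : ℕ => (n : ℝ) ^ k * Real.exp (-(n * τ)) := by
  have hlt : ‖Real.exp (-τ)‖ < 1 := by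
    rwa [Real.norm_eq_abs, Real.abs_exp, Real.exp_lt_one_iff, neg_lt_zero]
  refine (summable_pow_mul_geometric_of_norm_lt_one k hlt).congr fun n => ?_
  rw [← Real.exp_nat_mul, mul_neg]

lemma summable_abs_oddPoisson_coeff {τ : ℝ} (hτ : 0 < τ) (θ : ℝ) :
    Summable fun n : ℕ => |Real.exp (-(n * τ)) * Real.sin (n * θ)| := by
  refine (summable_natCast_pow_mul_exp 0 hτ).of_nonneg_of_le (fun _ => abs_nonneg _) fun n => ?_
  simpa only [pow_zero, one_mul, Real.norm_eq_abs, Real.abs_exp] using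
    norm_mul_sin_le (Real.exp (-(n * τ))) (n * θ)

lemma summable_abs_natCast_pow_mul_pow_mul_exp (k : ℕ) {ε τ : ℝ} (hε : ε ^ 2 = 1) (hτ : 0 < τ) :
    Summable fun n : ℕ => |(n : ℝ) ^ k * ε ^ (n + 1) * Real.exp (-(n * τ))| := by
  have hε_abs : |ε| = 1 := by rwa [← sq_eq_sq₀ (abs_nonneg ε) zero_le_one, sq_abs, one_pow]
  refine (summable_natCast_pow_mul_exp k hτ).congr fun n => ?_
  rw [abs_mul, abs_mul, abs_pow ε, hε_abs, one_pow, Real.abs_exp, mul_one, abs_pow, Nat.abs_cast]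

lemma summable_abs_poissonDipole_coeff {ε τ : ℝ} (hε : ε ^ 2 = 1) (hτ : 0 < τ) :
    Summable fun n : ℕ => |4 * n * ε ^ (n + 1) * Real.exp (-(n * τ))| := by
  refine ((summable_abs_natCast_pow_mul_pow_mul_exp 1 hε hτ).mul_left 4).congr fun n => ?_
  rw [pow_one, mul_assoc 4, mul_assoc 4, abs_mul 4, abs_of_pos (zero_lt_four' ℝ)]

lemma lintegral_oddPoisson_mul_poissonDipole {ε τ τ' θ : ℝ} (hε : ε ^ 2 = 1) (hτ : 0 < τ)
    (hτ' : 0 < τ') (hθ : θ ∈ Set.Ioo 0 Real.pi) :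
    ∫⁻ θ' in Set.Ioo 0 Real.pi,
      ENNReal.ofReal (oddPoisson τ θ θ') * ENNReal.ofReal (poissonDipole ε τ' θ') =
      ENNReal.ofReal (Real.pi / 2) * ENNReal.ofReal (poissonDipole ε (τ + τ') θ) := by
  rw [lintegral_mul_of_hasSum_mul_sin (summable_abs_oddPoisson_coeff hτ θ)
    (summable_abs_poissonDipole_coeff hε hτ') (by simp) (hasSum_oddPoisson hτ θ)
    (hasSum_poissonDipole hε hτ') (fun _ hθ' => oddPoisson_nonneg hτ hθ hθ')
    (fun _ hθ' => poissonDipole_nonneg ε hτ' hθ'),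
    ← ENNReal.ofReal_mul (by positivity), ← (hasSum_poissonDipole hε (add_pos hτ hτ') θ).tsum_eq]
  congr 2
  refine tsum_congr fun n => ?_
  rw [mul_add, neg_add, Real.exp_add]
  ring

/-- The pairing of `poissonDipole 1 σ` and `poissonDipole ε (τ - σ)` over `(0, π)`, divided by
`8 * π`; it does not depend on `σ`. -/
noncomputable def dipolePairing (ε τ : ℝ) : ℝ :=
  ∑' n : ℕ, (n : ℝ) ^ 2 * ε ^ (n + 1) * Real.exp (-(n * τ))

lemma tsum_poissonDipole_coeff_mul (ε σ τ : ℝ) :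
    ∑' n : ℕ, 4 * n * 1 ^ (n + 1) * Real.exp (-(n * σ)) *
        (4 * n * ε ^ (n + 1) * Real.exp (-(n * τ))) = 16 * dipolePairing ε (σ + τ) := by
  rw [dipolePairing, ← tsum_mul_left]
  refine tsum_congr fun n => ?_
  rw [mul_add, neg_add, Real.exp_add, one_pow]
  ring

lemma lintegral_poissonDipole_mul_poissonDipole {ε σ τ : ℝ} (hε : ε ^ 2 = 1) (hσ : 0 < σ)
    (hτ : 0 < τ) :
    ∫⁻ θ in Set.Ioo 0 Real.pi,
      ENNReal.ofReal (poissonDipole 1 σ θ) * ENNReal.ofReal (poissonDipole ε τ θ) =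
      ENNReal.ofReal (8 * Real.pi) * ENNReal.ofReal (dipolePairing ε (σ + τ)) := by
  rw [lintegral_mul_of_hasSum_mul_sin (summable_abs_poissonDipole_coeff (one_pow 2) hσ)
    (summable_abs_poissonDipole_coeff hε hτ) (by simp) (hasSum_poissonDipole (one_pow 2) hσ)
    (hasSum_poissonDipole hε hτ) (fun _ hθ => poissonDipole_nonneg 1 hσ hθ)
    (fun _ hθ => poissonDipole_nonneg ε hτ hθ),
    ← ENNReal.ofReal_mul (by positivity), tsum_poissonDipole_coeff_mul]
  congr 1
  ring

lemma dipolePairing_nonneg {ε τ : ℝ} (hε : ε ^ 2 = 1) (hτ : 0 < τ) : 0 ≤ dipolePairing ε τ := by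
  have h := integral_mul_of_hasSum_mul_sin
    (summable_abs_poissonDipole_coeff (one_pow 2) (half_pos hτ))
    (summable_abs_poissonDipole_coeff hε (half_pos hτ)) (by simp)
    (hasSum_poissonDipole (one_pow 2) (half_pos hτ)) (hasSum_poissonDipole hε (half_pos hτ))
  rw [tsum_poissonDipole_coeff_mul, add_halves, intervalIntegral.integral_of_le Real.pi_pos.le,
    integral_Ioc_eq_integral_Ioo] at h
  have hpos : 0 ≤ Real.pi / 2 * (16 * dipolePairing ε τ) :=
    h ▸ setIntegral_nonneg measurableSet_Ioo fun θ hθ =>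
      mul_nonneg (poissonDipole_nonneg _ (half_pos hτ) hθ) (poissonDipole_nonneg _ (half_pos hτ) hθ)
  exact nonneg_of_mul_nonneg_right (nonneg_of_mul_nonneg_right hpos (by positivity)) (by norm_num)

/-! ### Triangle operators -/

/-- Iterated integrals over all `s > 0` and `τ` such that `σ`, `s` and `τ` satisfy the strict
triangle inequalities. The shifts by `τ` are propagated inwards, so that `q` is evaluated at the sum
of the last `s` and all the `τ`. -/
noncomputable def triangleIterate : ℕ → (ℝ → ℝ≥0∞) → ℝ → ℝ≥0∞
  | 0, q, σ => q σ
  | k + 1, q, σ => ∫⁻ s in Set.Ioi 0, ∫⁻ τ in Set.Ioo |σ - s| (σ + s),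
      triangleIterate k (fun x => q (x + τ)) s

lemma triangleIterate_succ (k : ℕ) (q : ℝ → ℝ≥0∞) (σ : ℝ) :
    triangleIterate (k + 1) q σ = ∫⁻ s in Set.Ioi 0, ∫⁻ τ in Set.Ioo |σ - s| (σ + s),
      triangleIterate k (fun x => q (x + τ)) s := rfl

lemma measurable_uncurry_comp_add {α : Type*} [MeasurableSpace α] {Q : α → ℝ → ℝ≥0∞}
    (hQ : Measurable (Function.uncurry Q)) :
    Measurable (Function.uncurry fun (p : α × ℝ) x => Q p.1 (x + p.2)) :=
  hQ.comp (measurable_fst.fst.prodMk (measurable_snd.add measurable_fst.snd))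

lemma measurable_uncurry_triangleIterate {α : Type*} [MeasurableSpace α] (k : ℕ)
    {Q : α → ℝ → ℝ≥0∞} (hQ : Measurable (Function.uncurry Q)) :
    Measurable (Function.uncurry fun a σ => triangleIterate k (Q a) σ) := by
  induction k generalizing α with
  | zero => exact hQ
  | succ k ih =>
    refine Measurable.lintegral_prod_right (f := fun (p : α × ℝ) s =>
      ∫⁻ τ in Set.Ioo |p.2 - s| (p.2 + s), triangleIterate k (fun x => Q p.1 (x + τ)) s) ?_
    exact measurable_setLIntegral_Ioo (by fun_prop) (by fun_prop)
      (f := fun (p : (α × ℝ) × ℝ) τ => triangleIterate k (fun x => Q p.1.1 (x + τ)) p.2)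
      ((ih (measurable_uncurry_comp_add hQ)).comp
        ((measurable_fst.fst.fst.prodMk measurable_snd).prodMk measurable_fst.snd))

lemma measurable_triangleIterate_apply {α : Type*} [MeasurableSpace α] (k : ℕ)
    {Q : α → ℝ → ℝ≥0∞} (hQ : Measurable (Function.uncurry Q)) (σ : ℝ) :
    Measurable fun a => triangleIterate k (Q a) σ :=
  (measurable_uncurry_triangleIterate k hQ).of_uncurry_right

lemma triangleIterate_congr (k : ℕ) {q r : ℝ → ℝ≥0∞} (h : ∀ x, 0 < x → q x = r x) {σ : ℝ}
    (hσ : 0 < σ) : triangleIterate k q σ = triangleIterate k r σ := by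
  induction k generalizing q r σ with
  | zero => exact h σ hσ
  | succ k ih =>
    exact setLIntegral_congr_fun measurableSet_Ioi fun s hs =>
      setLIntegral_congr_fun measurableSet_Ioo fun τ hτ =>
        ih (fun x hx => h _ (add_pos hx ((abs_nonneg _).trans_lt hτ.1))) hs

lemma triangleIterate_lintegral {α : Type*} [MeasurableSpace α] (μ : Measure α) [SFinite μ]
    (k : ℕ) {Q : α → ℝ → ℝ≥0∞} (hQ : Measurable (Function.uncurry Q)) (σ : ℝ) :
    triangleIterate k (fun x => ∫⁻ a, Q a x ∂μ) σ = ∫⁻ a, triangleIterate k (Q a) σ ∂μ := by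
  induction k generalizing Q σ with
  | zero => rfl
  | succ k ih =>
    have hm : Measurable fun p : (α × ℝ) × ℝ =>
        triangleIterate k (fun x => Q p.1.1 (x + p.2)) p.1.2 :=
      (measurable_uncurry_triangleIterate k (measurable_uncurry_comp_add hQ)).comp
        ((measurable_fst.fst.prodMk measurable_snd).prodMk measurable_fst.snd)
    have hshift (τ : ℝ) : Measurable (Function.uncurry fun a x => Q a (x + τ)) :=
      hQ.comp (measurable_fst.prodMk (measurable_snd.add_const τ))
    calc triangleIterate (k + 1) (fun x => ∫⁻ a, Q a x ∂μ) σ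
      _ = ∫⁻ s in Set.Ioi 0, ∫⁻ τ in Set.Ioo |σ - s| (σ + s), ∫⁻ a,
            triangleIterate k (fun x => Q a (x + τ)) s ∂μ :=
          lintegral_congr fun s => lintegral_congr fun τ => ih (hshift τ) s
      _ = ∫⁻ s in Set.Ioi 0, ∫⁻ a, ∫⁻ τ in Set.Ioo |σ - s| (σ + s),
            triangleIterate k (fun x => Q a (x + τ)) s ∂volume ∂μ :=
          lintegral_congr fun s => lintegral_lintegral_swap (hm.comp
            ((measurable_snd.prodMk measurable_const).prodMk measurable_fst)).aemeasurable
      _ = ∫⁻ a, triangleIterate (k + 1) (Q a) σ ∂μ :=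
          lintegral_lintegral_swap (measurable_setLIntegral_Ioo (by fun_prop) (by fun_prop)
            (f := fun (p : ℝ × α) τ => triangleIterate k (fun x => Q p.2 (x + τ)) p.1)
            (hm.comp ((measurable_fst.snd.prodMk measurable_fst.fst).prodMk
              measurable_snd))).aemeasurable

lemma triangleIterate_const_mul (k : ℕ) {q : ℝ → ℝ≥0∞} (hq : Measurable q) (c : ℝ≥0∞) (σ : ℝ) :
    triangleIterate k (fun x => c * q x) σ = c * triangleIterate k q σ := by
  have h := triangleIterate_lintegral (c • Measure.dirac ()) k (Q := fun _ => q)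
    (hq.comp measurable_snd) σ
  simpa only [lintegral_smul_measure, lintegral_dirac, smul_eq_mul] using h

lemma triangleIterate_tsum {ι : Type*} [Countable ι] (k : ℕ) {q : ι → ℝ → ℝ≥0∞}
    (hq : ∀ i, Measurable (q i)) (σ : ℝ) :
    triangleIterate k (fun x => ∑' i, q i x) σ = ∑' i, triangleIterate k (q i) σ := by
  let _ : MeasurableSpace ι := ⊤
  have h := triangleIterate_lintegral (Measure.count : Measure ι) k (Q := q)
    (measurable_from_prod_countable_right hq) σ
  simpa only [lintegral_count] using h

lemma triangleIterate_add (k : ℕ) {q r : ℝ → ℝ≥0∞} (hq : Measurable q) (hr : Measurable r)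
    (σ : ℝ) :
    triangleIterate k (fun x => q x + r x) σ = triangleIterate k q σ + triangleIterate k r σ := by
  have h := triangleIterate_tsum k (q := fun b : Bool => bif b then q else r)
    (fun b => by cases b <;> assumption) σ
  simpa only [tsum_bool, cond_true, cond_false, add_comm] using h

lemma lintegral_mul_triangleIterate {α : Type*} [MeasurableSpace α] (μ : Measure α) [SFinite μ]
    (k : ℕ) {w : α → ℝ≥0∞} {Q : α → ℝ → ℝ≥0∞} (hw : Measurable w)
    (hQ : Measurable (Function.uncurry Q)) (σ : ℝ) :
    ∫⁻ a, w a * triangleIterate k (Q a) σ ∂μ =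
      triangleIterate k (fun x => ∫⁻ a, w a * Q a x ∂μ) σ := by
  rw [triangleIterate_lintegral μ k (Q := fun a x => w a * Q a x)
    ((hw.comp measurable_fst).mul hQ)]
  exact lintegral_congr fun a => (triangleIterate_const_mul k hQ.of_uncurry_left (w a) σ).symm

lemma measurable_uncurry_poissonDipole (ε : ℝ) :
    Measurable (Function.uncurry fun θ x => ENNReal.ofReal (poissonDipole ε x θ)) :=
  (measurable_poissonDipole measurable_snd measurable_fst).ennreal_ofReal

lemma measurable_oddPoisson {α : Type*} [MeasurableSpace α] {u v w : α → ℝ} (hu : Measurable u)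
    (hv : Measurable v) (hw : Measurable w) :
    Measurable fun x => ENNReal.ofReal (oddPoisson (u x) (v x) (w x)) := by
  unfold oddPoisson
  fun_prop

lemma lintegral_oddPoisson_mul_triangleIterate {ε τ s θ : ℝ} (hε : ε ^ 2 = 1) (k : ℕ) (hτ : 0 < τ)
    (hs : 0 < s) (hθ : θ ∈ Set.Ioo 0 Real.pi) :
    ∫⁻ θ' in Set.Ioo 0 Real.pi, ENNReal.ofReal (oddPoisson τ θ θ') *
      triangleIterate k (fun x => ENNReal.ofReal (poissonDipole ε x θ')) s =
    ENNReal.ofReal (Real.pi / 2) *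
      triangleIterate k (fun x => ENNReal.ofReal (poissonDipole ε (x + τ) θ)) s := by
  rw [lintegral_mul_triangleIterate _ k
      (measurable_oddPoisson measurable_const measurable_const measurable_id')
      (measurable_uncurry_poissonDipole ε),
    ← triangleIterate_const_mul k
      (measurable_poissonDipole (measurable_id'.add_const τ) measurable_const).ennreal_ofReal]
  refine triangleIterate_congr k (fun x hx => ?_) hs
  rw [lintegral_oddPoisson_mul_poissonDipole hε hτ hx hθ, add_comm]

lemma lintegral_lintegral_oddPoisson_mul_triangleIterate {ε : ℝ} (hε : ε ^ 2 = 1) (k : ℕ)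
    (σ : ℝ) {θ : ℝ} (hθ : θ ∈ Set.Ioo 0 Real.pi) :
    ∫⁻ s in Set.Ioi 0, ∫⁻ θ' in Set.Ioo 0 Real.pi,
      (∫⁻ τ in Set.Ioo |σ - s| (σ + s), ENNReal.ofReal (oddPoisson τ θ θ')) *
        triangleIterate k (fun x => ENNReal.ofReal (poissonDipole ε x θ')) s =
    ENNReal.ofReal (Real.pi / 2) *
      triangleIterate (k + 1) (fun x => ENNReal.ofReal (poissonDipole ε x θ)) σ := by
  rw [triangleIterate_succ, ← lintegral_const_mul' _ _ ENNReal.ofReal_ne_top]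
  refine setLIntegral_congr_fun measurableSet_Ioi fun s hs => ?_
  have hL := measurable_triangleIterate_apply k (measurable_uncurry_poissonDipole ε) s
  simp only [← lintegral_mul_const _
    (measurable_oddPoisson measurable_id' measurable_const measurable_const)]
  rw [lintegral_lintegral_swap (((measurable_oddPoisson measurable_snd measurable_const
      measurable_fst).mul (hL.comp measurable_fst)).aemeasurable),
    ← lintegral_const_mul' _ _ ENNReal.ofReal_ne_top]
  exact setLIntegral_congr_fun measurableSet_Ioo fun τ hτ =>
    lintegral_oddPoisson_mul_triangleIterate hε k ((abs_nonneg _).trans_lt hτ.1) hs hθ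

lemma sq_neg_one_pow (k : ℕ) : ((-1 : ℝ) ^ k) ^ 2 = 1 := by
  rw [pow_right_comm, neg_one_sq, one_pow]

lemma isStripRep_symmTransfer_iterate (k : ℕ) :
    IsStripRep ((symmTransfer pole)^[k] (rieszKernel 2)) fun σ θ =>
      ENNReal.ofReal (2 * Real.pi ^ 2) ^ k *
        triangleIterate k (fun x => ENNReal.ofReal (poissonDipole ((-1) ^ (k + 1)) x θ)) σ := by
  induction k with
  | zero =>
    simpa only [Function.iterate_zero, id, pow_zero, zero_add, pow_one, one_mul, triangleIterate]
      using isStripRep_rieszKernel_two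
  | succ k ih =>
    rw [Function.iterate_succ_apply']
    intro σ hσ θ hθ
    have hC : ENNReal.ofReal (2 * Real.pi ^ 2) ^ k ≠ ⊤ := ENNReal.pow_ne_top ENNReal.ofReal_ne_top
    have hε : -(-1 : ℝ) ^ (k + 1) = (-1) ^ (k + 1 + 1) := by ring
    have hπ : 4 * Real.pi * (Real.pi / 2) = 2 * Real.pi ^ 2 := by ring
    rw [(ih.symmTransfer (measurable_symmTransfer_iterate (measurable_rieszKernel 2) k)
      (IsAxial.symmTransfer_iterate (isAxial_rieszKernel 2) k)) σ hσ θ hθ]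
    simp_rw [poissonDipole_pi_sub, hε, mul_left_comm,
      lintegral_const_mul' _ _ hC]
    rw [lintegral_lintegral_oddPoisson_mul_triangleIterate (sq_neg_one_pow _) k σ hθ,
      pow_succ (ENNReal.ofReal _), ← hπ, ENNReal.ofReal_mul (p := 4 * Real.pi) (by positivity)]
    ring

/-- The integral over `σ > 0` of `triangleIterate k` of the translate `x ↦ q (σ + x)`, evaluated at
`σ` itself. -/
noncomputable def triangleMass (k : ℕ) (q : ℝ → ℝ≥0∞) : ℝ≥0∞ :=
  ∫⁻ σ in Set.Ioi 0, triangleIterate k (fun x => q (σ + x)) σ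

lemma measurable_triangleIterate_shift (k : ℕ) {q : ℝ → ℝ≥0∞} (hq : Measurable q) :
    Measurable fun σ => triangleIterate k (fun x => q (σ + x)) σ :=
  (measurable_uncurry_triangleIterate k (Q := fun σ x => q (σ + x))
    (hq.comp (measurable_fst.add measurable_snd))).comp (measurable_id.prodMk measurable_id)

lemma triangleMass_const_mul (k : ℕ) {q : ℝ → ℝ≥0∞} (hq : Measurable q) (c : ℝ≥0∞) :
    triangleMass k (fun x => c * q x) = c * triangleMass k q := by
  unfold triangleMass
  rw [← lintegral_const_mul _ (measurable_triangleIterate_shift k hq)]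
  exact lintegral_congr fun σ =>
    triangleIterate_const_mul k (hq.comp (measurable_const_add σ)) c σ

lemma triangleMass_add (k : ℕ) {q r : ℝ → ℝ≥0∞} (hq : Measurable q) (hr : Measurable r) :
    triangleMass k (fun x => q x + r x) = triangleMass k q + triangleMass k r := by
  unfold triangleMass
  rw [← lintegral_add_left (measurable_triangleIterate_shift k hq)]
  exact lintegral_congr fun σ => triangleIterate_add k (hq.comp (measurable_const_add σ))
    (hr.comp (measurable_const_add σ)) σ

lemma triangleMass_tsum {ι : Type*} [Countable ι] (k : ℕ) {q : ι → ℝ → ℝ≥0∞}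
    (hq : ∀ i, Measurable (q i)) :
    triangleMass k (fun x => ∑' i, q i x) = ∑' i, triangleMass k (q i) := by
  unfold triangleMass
  rw [← lintegral_tsum fun i => (measurable_triangleIterate_shift k (hq i)).aemeasurable]
  exact lintegral_congr fun σ =>
    triangleIterate_tsum k (fun i => (hq i).comp (measurable_const_add σ)) σ

lemma triangleMass_congr (k : ℕ) {q r : ℝ → ℝ≥0∞} (h : ∀ x, 0 < x → q x = r x) :
    triangleMass k q = triangleMass k r :=
  setLIntegral_congr_fun measurableSet_Ioi fun _ hσ =>
    triangleIterate_congr k (fun _ hx => h _ (add_pos hσ hx)) hσ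

lemma measurable_dipolePairing (ε : ℝ) :
    Measurable fun x => ENNReal.ofReal (dipolePairing ε x) := by
  unfold dipolePairing
  fun_prop

lemma lintegral_poissonDipole_mul_triangleIterate {ε σ : ℝ} (hε : ε ^ 2 = 1) (k : ℕ)
    (hσ : 0 < σ) :
    ∫⁻ θ in Set.Ioo 0 Real.pi, ENNReal.ofReal (poissonDipole 1 σ θ) *
      triangleIterate k (fun x => ENNReal.ofReal (poissonDipole ε x θ)) σ =
    ENNReal.ofReal (8 * Real.pi) *
      triangleIterate k (fun x => ENNReal.ofReal (dipolePairing ε (σ + x))) σ := by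
  have hpair : Measurable fun x => ENNReal.ofReal (dipolePairing ε (σ + x)) :=
    (measurable_dipolePairing ε).comp (measurable_const_add σ)
  rw [lintegral_mul_triangleIterate _ k
      (measurable_poissonDipole measurable_const measurable_id').ennreal_ofReal
      (measurable_uncurry_poissonDipole ε),
    ← triangleIterate_const_mul k hpair]
  exact triangleIterate_congr k
    (fun x hx => lintegral_poissonDipole_mul_poissonDipole hε hσ hx) hσ

theorem lintegral_symmTransfer_iterate_eq_triangleMass (k : ℕ) :
    ∫⁻ y, rieszKernel 3 (pole - y) * rieszKernel 1 y *
        (symmTransfer pole)^[k] (rieszKernel 2) y =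
      ENNReal.ofReal (32 * Real.pi ^ 2) * ENNReal.ofReal (2 * Real.pi ^ 2) ^ k *
        triangleMass k fun x => ENNReal.ofReal (dipolePairing ((-1) ^ (k + 1)) x) := by
  have hC : ENNReal.ofReal (2 * Real.pi ^ 2) ^ k ≠ ⊤ := ENNReal.pow_ne_top ENNReal.ofReal_ne_top
  have hπ : 32 * Real.pi ^ 2 = 4 * Real.pi * (8 * Real.pi) := by ring
  rw [(isStripRep_symmTransfer_iterate k).lintegral_rieszKernel_mul
    (measurable_symmTransfer_iterate (measurable_rieszKernel 2) k)
    (IsAxial.symmTransfer_iterate (isAxial_rieszKernel 2) k)]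
  simp_rw [mul_left_comm (ENNReal.ofReal (poissonDipole _ _ _)), lintegral_const_mul' _ _ hC]
  rw [setLIntegral_congr_fun measurableSet_Ioi fun σ hσ =>
      lintegral_poissonDipole_mul_triangleIterate (sq_neg_one_pow (k + 1)) k hσ,
    lintegral_const_mul' _ _ ENNReal.ofReal_ne_top, hπ,
    ENNReal.ofReal_mul (p := 4 * Real.pi) (by positivity), triangleMass]
  ring

/-! ### Exponentials and the Catalan triangle -/

/-- The divided power `(c s)ʲ / j!`, normalised so that its derivative in `s` is `c` times the
divided power of degree `j - 1`. -/
noncomputable def scaledMonomial (c : ℝ) (j : ℕ) (s : ℝ) : ℝ := (c * s) ^ j / j.factorial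

lemma scaledMonomial_zero (c s : ℝ) : scaledMonomial c 0 s = 1 := by
  simp only [scaledMonomial, pow_zero, Nat.factorial_zero, Nat.cast_one, div_one]

lemma scaledMonomial_succ_zero (c : ℝ) (j : ℕ) : scaledMonomial c (j + 1) 0 = 0 := by
  simp only [scaledMonomial, mul_zero, ne_eq, Nat.succ_ne_zero, not_false_eq_true, zero_pow,
    zero_div]

lemma continuous_scaledMonomial (c : ℝ) (j : ℕ) : Continuous (scaledMonomial c j) := by
  unfold scaledMonomial
  fun_prop

lemma scaledMonomial_nonneg {c s : ℝ} (hc : 0 ≤ c) (hs : 0 ≤ s) (j : ℕ) :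
    0 ≤ scaledMonomial c j s := by
  unfold scaledMonomial
  positivity

lemma hasDerivAt_scaledMonomial_succ (c : ℝ) (j : ℕ) (s : ℝ) :
    HasDerivAt (scaledMonomial c (j + 1)) (c * scaledMonomial c j s) s := by
  have h : HasDerivAt (scaledMonomial c (j + 1)) _ s :=
    (((hasDerivAt_id s).const_mul c).pow (j + 1)).div_const ((j + 1).factorial : ℝ)
  refine h.congr_deriv ?_
  rw [Nat.factorial_succ, scaledMonomial]
  push_cast
  simp only [id]
  field_simp

lemma hasDerivAt_exp_neg_mul (c s : ℝ) :
    HasDerivAt (fun s => Real.exp (-(c * s))) (-c * Real.exp (-(c * s))) s := by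
  have h : HasDerivAt (fun s => -(c * s)) (-(c * 1)) s := ((hasDerivAt_id s).const_mul c).neg
  refine h.exp.congr_deriv ?_
  ring

lemma hasDerivAt_exp_neg_mul_sum_scaledMonomial {c : ℝ} (hc : c ≠ 0) (j : ℕ) (s : ℝ) :
    HasDerivAt
      (fun s => -(Real.exp (-(c * s)) * ∑ i ∈ Finset.range (j + 1), scaledMonomial c i s / c))
      (Real.exp (-(c * s)) * scaledMonomial c j s) s := by
  have hexp := hasDerivAt_exp_neg_mul c s
  induction j with
  | zero =>
    simp only [zero_add, Finset.sum_range_one, scaledMonomial_zero]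
    refine (hexp.mul_const (1 / c)).neg.congr_deriv ?_
    field_simp
  | succ j ih =>
    have h := ih.sub (hexp.mul ((hasDerivAt_scaledMonomial_succ c j s).div_const c))
    convert! h using 1
    · funext s
      rw [Finset.sum_range_succ _ (j + 1)]
      simp only [Pi.sub_apply, Pi.mul_apply]
      ring
    · field_simp
      ring

lemma tendsto_exp_neg_mul_sum_scaledMonomial {c : ℝ} (hc : 0 < c) (j : ℕ) :
    Filter.Tendsto
      (fun s => -(Real.exp (-(c * s)) * ∑ i ∈ Finset.range (j + 1), scaledMonomial c i s / c))
      Filter.atTop (nhds 0) := by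
  have hlin : Filter.Tendsto (fun s : ℝ => c * s) Filter.atTop Filter.atTop :=
    Filter.tendsto_id.const_mul_atTop hc
  have hterm : ∀ i ∈ Finset.range (j + 1), Filter.Tendsto
      (fun s => Real.exp (-(c * s)) * (scaledMonomial c i s / c)) Filter.atTop (nhds 0) := by
    intro i _
    have h := ((Real.tendsto_pow_mul_exp_neg_atTop_nhds_zero i).comp hlin).div_const
      (i.factorial * c)
    rw [zero_div] at h
    refine h.congr fun s => ?_
    simp only [Function.comp, scaledMonomial]
    field_simp
  have hsum := (tendsto_finsetSum _ hterm).neg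
  simp only [Finset.sum_const_zero, neg_zero] at hsum
  refine hsum.congr fun s => ?_
  rw [Finset.mul_sum]

lemma exp_mul_scaledMonomial_nonneg {a b c s : ℝ} (hc : 0 ≤ c) (ha : 0 ≤ a) (j : ℕ)
    (hs : s ∈ Set.Ioi a) : 0 ≤ Real.exp b * scaledMonomial c j s :=
  mul_nonneg (Real.exp_pos _).le (scaledMonomial_nonneg hc (ha.trans (le_of_lt hs)) j)

lemma integrableOn_exp_mul_scaledMonomial {c a : ℝ} (hc : 0 < c) (ha : 0 ≤ a) (j : ℕ) :
    IntegrableOn (fun s => Real.exp (-(c * s)) * scaledMonomial c j s) (Set.Ioi a) :=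
  integrableOn_Ioi_deriv_of_nonneg'
    (fun s _ => hasDerivAt_exp_neg_mul_sum_scaledMonomial hc.ne' j s)
    (fun _ => exp_mul_scaledMonomial_nonneg hc.le ha j)
    (tendsto_exp_neg_mul_sum_scaledMonomial hc j)

lemma integral_exp_mul_scaledMonomial {c a : ℝ} (hc : 0 < c) (ha : 0 ≤ a) (j : ℕ) :
    ∫ s in Set.Ioi a, Real.exp (-(c * s)) * scaledMonomial c j s =
      Real.exp (-(c * a)) * ∑ i ∈ Finset.range (j + 1), scaledMonomial c i a / c := by
  rw [integral_Ioi_of_hasDerivAt_of_nonneg'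
    (fun s _ => hasDerivAt_exp_neg_mul_sum_scaledMonomial hc.ne' j s)
    (fun _ => exp_mul_scaledMonomial_nonneg hc.le ha j)
    (tendsto_exp_neg_mul_sum_scaledMonomial hc j), zero_sub, neg_neg]

lemma integral_Ioi_zero_exp_mul_scaledMonomial {c : ℝ} (hc : 0 < c) (j : ℕ) :
    ∫ s in Set.Ioi 0, Real.exp (-(c * s)) * scaledMonomial c j s = c⁻¹ := by
  rw [integral_exp_mul_scaledMonomial hc le_rfl, Finset.sum_range_succ']
  simp only [scaledMonomial_succ_zero, scaledMonomial_zero, zero_div, Finset.sum_const_zero,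
    mul_zero, neg_zero, Real.exp_zero, zero_add, one_mul, one_div]

lemma lintegral_Ioi_exp_mul_scaledMonomial {c : ℝ} (hc : 0 < c) (j : ℕ) :
    ∫⁻ s in Set.Ioi 0, ENNReal.ofReal (Real.exp (-(c * s)) * scaledMonomial c j s) =
      ENNReal.ofReal c⁻¹ := by
  rw [← integral_Ioi_zero_exp_mul_scaledMonomial hc j,
    ofReal_integral_eq_lintegral_ofReal (integrableOn_exp_mul_scaledMonomial hc le_rfl j)
      (ae_restrict_of_forall_mem measurableSet_Ioi fun _ =>
        exp_mul_scaledMonomial_nonneg hc.le le_rfl j)]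

lemma integral_Ioc_scaledMonomial {c σ : ℝ} (hc : c ≠ 0) (hσ : 0 ≤ σ) (j : ℕ) :
    ∫ s in Set.Ioc 0 σ, scaledMonomial c j s = scaledMonomial c (j + 1) σ / c := by
  have hderiv (s : ℝ) : HasDerivAt (fun s => scaledMonomial c (j + 1) s / c)
      (scaledMonomial c j s) s :=
    ((hasDerivAt_scaledMonomial_succ c j s).div_const c).congr_deriv (mul_div_cancel_left₀ _ hc)
  rw [← intervalIntegral.integral_of_le hσ, intervalIntegral.integral_eq_sub_of_hasDerivAt
    (fun s _ => hderiv s) ((continuous_scaledMonomial c j).intervalIntegrable _ _),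
    scaledMonomial_succ_zero, zero_div, sub_zero]

/-- `exp (-p s) (2 p s)ʲ / j!`: for fixed `p` these functions span a space that is stable under
integration against `halfLineGreen p`. -/
noncomputable def expMonomial (p : ℝ) (j : ℕ) (s : ℝ) : ℝ :=
  Real.exp (-(p * s)) * scaledMonomial (2 * p) j s

lemma expMonomial_zero (p s : ℝ) : expMonomial p 0 s = Real.exp (-(p * s)) := by
  rw [expMonomial, scaledMonomial_zero, mul_one]

lemma continuous_expMonomial (p : ℝ) (j : ℕ) : Continuous (expMonomial p j) :=
  (by fun_prop : Continuous fun s : ℝ => Real.exp (-(p * s))).mul (continuous_scaledMonomial _ j)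

lemma expMonomial_nonneg {p s : ℝ} (hp : 0 ≤ p) (hs : 0 ≤ s) (j : ℕ) : 0 ≤ expMonomial p j s :=
  mul_nonneg (Real.exp_pos _).le (scaledMonomial_nonneg (by positivity) hs j)

lemma exp_neg_mul_mul_expMonomial (p s : ℝ) (j : ℕ) :
    Real.exp (-(p * s)) * expMonomial p j s =
      Real.exp (-(2 * p * s)) * scaledMonomial (2 * p) j s := by
  rw [expMonomial, ← mul_assoc, ← Real.exp_add]
  ring_nf

/-- Twice the Green's function of `p² - d²/ds²` on the half line `s > 0` with Dirichlet boundary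
condition at `0`. -/
noncomputable def halfLineGreen (p σ s : ℝ) : ℝ :=
  (Real.exp (-(p * |σ - s|)) - Real.exp (-(p * (σ + s)))) / p

lemma abs_sub_le_add {a b : ℝ} (ha : 0 ≤ a) (hb : 0 ≤ b) : |a - b| ≤ a + b :=
  abs_le.2 ⟨by linarith, by linarith⟩

lemma halfLineGreen_nonneg {p σ s : ℝ} (hp : 0 ≤ p) (hσ : 0 ≤ σ) (hs : 0 ≤ s) :
    0 ≤ halfLineGreen p σ s :=
  div_nonneg (sub_nonneg.2 (Real.exp_le_exp.2 (neg_le_neg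
    (mul_le_mul_of_nonneg_left (abs_sub_le_add hσ hs) hp)))) hp

lemma continuous_halfLineGreen (p σ : ℝ) : Continuous (halfLineGreen p σ) := by
  unfold halfLineGreen
  fun_prop

lemma lintegral_Ioo_exp_neg_mul {p σ s : ℝ} (hp : p ≠ 0) (hσ : 0 ≤ σ) (hs : 0 ≤ s) :
    ∫⁻ τ in Set.Ioo |σ - s| (σ + s), ENNReal.ofReal (Real.exp (-(p * τ))) =
      ENNReal.ofReal (halfLineGreen p σ s) := by
  have hderiv (τ : ℝ) : HasDerivAt (fun τ => -(Real.exp (-(p * τ)) / p)) (Real.exp (-(p * τ))) τ :=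
    ((hasDerivAt_exp_neg_mul p τ).div_const p).neg.congr_deriv (by field_simp)
  rw [lintegral_Ioo_ofReal_deriv (abs_sub_le_add hσ hs) (by fun_prop) (fun τ _ => hderiv τ)
    fun τ _ => (Real.exp_pos _).le, halfLineGreen]
  congr 1
  ring

lemma exp_neg_mul_abs_sub_mul_expMonomial_of_le {p σ s : ℝ} (hs : s ≤ σ) (j : ℕ) :
    Real.exp (-(p * |σ - s|)) * expMonomial p j s =
      Real.exp (-(p * σ)) * scaledMonomial (2 * p) j s := by
  rw [abs_of_nonneg (sub_nonneg.2 hs), expMonomial, ← mul_assoc, ← Real.exp_add]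
  ring_nf

lemma exp_neg_mul_abs_sub_mul_expMonomial_of_ge {p σ s : ℝ} (hs : σ ≤ s) (j : ℕ) :
    Real.exp (-(p * |σ - s|)) * expMonomial p j s =
      Real.exp (p * σ) * (Real.exp (-(2 * p * s)) * scaledMonomial (2 * p) j s) := by
  rw [abs_of_nonpos (sub_nonpos.2 hs), expMonomial, ← mul_assoc, ← mul_assoc, ← Real.exp_add,
    ← Real.exp_add]
  ring_nf

lemma integrableOn_Ioc_exp_neg_mul_abs_sub_mul_expMonomial (p σ : ℝ) (j : ℕ) :
    IntegrableOn (fun s => Real.exp (-(p * |σ - s|)) * expMonomial p j s) (Set.Ioc 0 σ) :=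
  (((by fun_prop : Continuous fun s : ℝ => Real.exp (-(p * |σ - s|))).mul
    (continuous_expMonomial p j)).integrableOn_Icc).mono_set Set.Ioc_subset_Icc_self

lemma integrableOn_Ioi_exp_neg_mul_abs_sub_mul_expMonomial {p σ : ℝ} (hp : 0 < p) (hσ : 0 ≤ σ)
    (j : ℕ) :
    IntegrableOn (fun s => Real.exp (-(p * |σ - s|)) * expMonomial p j s) (Set.Ioi σ) :=
  IntegrableOn.congr_fun
    ((integrableOn_exp_mul_scaledMonomial (mul_pos two_pos hp) hσ j).const_mul _)
    (fun _ hs => (exp_neg_mul_abs_sub_mul_expMonomial_of_ge (le_of_lt hs) j).symm)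
    measurableSet_Ioi

lemma integrableOn_exp_neg_mul_abs_sub_mul_expMonomial {p σ : ℝ} (hp : 0 < p) (hσ : 0 ≤ σ)
    (j : ℕ) :
    IntegrableOn (fun s => Real.exp (-(p * |σ - s|)) * expMonomial p j s) (Set.Ioi 0) := by
  rw [← Set.Ioc_union_Ioi_eq_Ioi hσ]
  exact (integrableOn_Ioc_exp_neg_mul_abs_sub_mul_expMonomial p σ j).union
    (integrableOn_Ioi_exp_neg_mul_abs_sub_mul_expMonomial hp hσ j)

lemma integral_exp_neg_mul_abs_sub_mul_expMonomial {p σ : ℝ} (hp : 0 < p) (hσ : 0 ≤ σ) (j : ℕ) :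
    ∫ s in Set.Ioi 0, Real.exp (-(p * |σ - s|)) * expMonomial p j s =
      (∑ i ∈ Finset.range (j + 2), expMonomial p i σ) / (2 * p) := by
  have hexp : Real.exp (p * σ) * Real.exp (-(2 * p * σ)) = Real.exp (-(p * σ)) := by
    rw [← Real.exp_add]
    ring_nf
  rw [← Set.Ioc_union_Ioi_eq_Ioi hσ, setIntegral_union (Set.Ioc_disjoint_Ioi le_rfl)
      measurableSet_Ioi (integrableOn_Ioc_exp_neg_mul_abs_sub_mul_expMonomial p σ j)
      (integrableOn_Ioi_exp_neg_mul_abs_sub_mul_expMonomial hp hσ j),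
    setIntegral_congr_fun measurableSet_Ioc fun s hs =>
      exp_neg_mul_abs_sub_mul_expMonomial_of_le hs.2 j,
    setIntegral_congr_fun measurableSet_Ioi fun s hs =>
      exp_neg_mul_abs_sub_mul_expMonomial_of_ge (le_of_lt hs) j,
    integral_const_mul, integral_const_mul, integral_Ioc_scaledMonomial (by positivity) hσ,
    integral_exp_mul_scaledMonomial (by positivity) hσ, ← mul_assoc, hexp, ← Finset.sum_div,
    Finset.sum_range_succ _ (j + 1)]
  simp only [expMonomial, ← Finset.mul_sum]
  ring

lemma exp_neg_mul_add_mul_expMonomial (p σ s : ℝ) (j : ℕ) :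
    Real.exp (-(p * (σ + s))) * expMonomial p j s =
      Real.exp (-(p * σ)) * (Real.exp (-(2 * p * s)) * scaledMonomial (2 * p) j s) := by
  rw [← exp_neg_mul_mul_expMonomial, ← mul_assoc, ← Real.exp_add]
  ring_nf

lemma integral_halfLineGreen_mul_expMonomial {p σ : ℝ} (hp : 0 < p) (hσ : 0 ≤ σ) (j : ℕ) :
    IntegrableOn (fun s => halfLineGreen p σ s * expMonomial p j s) (Set.Ioi 0) ∧
    ∫ s in Set.Ioi 0, halfLineGreen p σ s * expMonomial p j s =
      1 / (2 * p ^ 2) * ∑ i ∈ Finset.range (j + 1), expMonomial p (i + 1) σ := by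
  have hsplit : (fun s => halfLineGreen p σ s * expMonomial p j s) = fun s =>
      (Real.exp (-(p * |σ - s|)) * expMonomial p j s -
        Real.exp (-(p * σ)) * (Real.exp (-(2 * p * s)) * scaledMonomial (2 * p) j s)) / p := by
    funext s
    rw [halfLineGreen, ← exp_neg_mul_add_mul_expMonomial]
    ring
  have hdirect := integrableOn_exp_neg_mul_abs_sub_mul_expMonomial hp hσ j
  have hmirror := (integrableOn_exp_mul_scaledMonomial (mul_pos two_pos hp) le_rfl j).const_mul
    (Real.exp (-(p * σ)))
  rw [hsplit, integral_div, integral_sub hdirect hmirror,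
    integral_exp_neg_mul_abs_sub_mul_expMonomial hp hσ, integral_const_mul,
    integral_Ioi_zero_exp_mul_scaledMonomial (mul_pos two_pos hp), Finset.sum_range_succ']
  refine ⟨(hdirect.sub hmirror).div_const p, ?_⟩
  rw [expMonomial_zero]
  field_simp
  ring

lemma lintegral_halfLineGreen_mul_expMonomial {p σ : ℝ} (hp : 0 < p) (hσ : 0 ≤ σ) (j : ℕ) :
    ∫⁻ s in Set.Ioi 0, ENNReal.ofReal (halfLineGreen p σ s) * ENNReal.ofReal (expMonomial p j s) =
      ENNReal.ofReal (1 / (2 * p ^ 2) * ∑ i ∈ Finset.range (j + 1), expMonomial p (i + 1) σ) := by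
  obtain ⟨hint, hval⟩ := integral_halfLineGreen_mul_expMonomial hp hσ j
  have hgreen {s : ℝ} (hs : s ∈ Set.Ioi (0 : ℝ)) : 0 ≤ halfLineGreen p σ s :=
    halfLineGreen_nonneg hp.le hσ (le_of_lt hs)
  rw [setLIntegral_congr_fun measurableSet_Ioi fun s hs => (ENNReal.ofReal_mul (hgreen hs)).symm,
    ← hval, ofReal_integral_eq_lintegral_ofReal hint (ae_restrict_of_forall_mem measurableSet_Ioi
      fun s hs => mul_nonneg (hgreen hs) (expMonomial_nonneg hp.le (le_of_lt hs) j))]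

/-- The entries `(m + 1 - r) (m + r)! / ((m + 1)! r!)`, `r ≤ m`, of the Catalan triangle; the
formula gives `0` for `r = m + 1`. -/
noncomputable def catalanTriangle (m r : ℕ) : ℝ :=
  (m + 1 - r) * (m + r).factorial / ((m + 1).factorial * r.factorial)

lemma catalanTriangle_nonneg {m r : ℕ} (h : r ≤ m + 1) : 0 ≤ catalanTriangle m r := by
  have hle : (r : ℝ) ≤ m + 1 := by exact_mod_cast h
  exact div_nonneg (mul_nonneg (sub_nonneg.2 hle) (by positivity)) (by positivity)

lemma catalanTriangle_self_succ (m : ℕ) : catalanTriangle m (m + 1) = 0 := by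
  simp only [catalanTriangle, Nat.cast_add, Nat.cast_one, sub_self, zero_mul, zero_div]

lemma catalanTriangle_zero_right (m : ℕ) : catalanTriangle m 0 = 1 := by
  simp only [catalanTriangle, Nat.factorial_succ, add_zero, Nat.factorial_zero]
  push_cast
  field_simp
  ring

lemma catalanTriangle_add_catalanTriangle_succ (m r : ℕ) :
    catalanTriangle (m + 1) r + catalanTriangle m (r + 1) = catalanTriangle (m + 1) (r + 1) := by
  simp only [catalanTriangle, show m + 1 + (r + 1) = m + r + 1 + 1 by ring,
    show m + 1 + r = m + r + 1 by ring, ← add_assoc, Nat.factorial_succ]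
  have hm : (m : ℝ) + 1 + 1 ≠ 0 := by positivity
  push_cast
  field_simp
  ring

lemma sum_range_catalanTriangle (m r : ℕ) :
    ∑ i ∈ Finset.range (r + 1), catalanTriangle m i = catalanTriangle (m + 1) r := by
  induction r with
  | zero => rw [Finset.sum_range_one, catalanTriangle_zero_right, catalanTriangle_zero_right]
  | succ r ih => rw [Finset.sum_range_succ, ih, catalanTriangle_add_catalanTriangle_succ]

lemma sum_catalanTriangle_mul_sum (m : ℕ) (g : ℕ → ℝ) :
    ∑ r ∈ Finset.range (m + 1),
        catalanTriangle m r * ∑ i ∈ Finset.range (m + 1 - r + 1), g (i + 1) =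
      ∑ r ∈ Finset.range (m + 2), catalanTriangle (m + 1) r * g (m + 2 - r) := by
  have hreflect : ∀ r ∈ Finset.Ico 0 (m + 2),
      catalanTriangle m r * ∑ i ∈ Finset.range (m + 1 - r + 1), g (i + 1) =
        ∑ j ∈ Finset.Ico r (m + 2), catalanTriangle m r * g (m + 2 - j) := by
    intro r hr
    have hr_le := (Finset.mem_Ico.1 hr).2
    rw [← Finset.mul_sum, Finset.sum_Ico_eq_sum_range, show m + 2 - r = m + 1 - r + 1 by omega,
      ← Finset.sum_range_reflect]
    congr 1
    refine Finset.sum_congr rfl fun i hi => congrArg g ?_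
    rw [Finset.mem_range] at hi
    omega
  calc ∑ r ∈ Finset.range (m + 1),
        catalanTriangle m r * ∑ i ∈ Finset.range (m + 1 - r + 1), g (i + 1)
    _ = ∑ r ∈ Finset.range (m + 2),
          catalanTriangle m r * ∑ i ∈ Finset.range (m + 1 - r + 1), g (i + 1) := by
        rw [Finset.sum_range_succ _ (m + 1), catalanTriangle_self_succ, zero_mul, add_zero]
    _ = ∑ j ∈ Finset.Ico 0 (m + 2), ∑ r ∈ Finset.Ico 0 (j + 1),
          catalanTriangle m r * g (m + 2 - j) := by
        rw [Finset.range_eq_Ico, Finset.sum_congr rfl hreflect, Finset.sum_Ico_Ico_comm]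
    _ = ∑ r ∈ Finset.range (m + 2), catalanTriangle (m + 1) r * g (m + 2 - r) := by
        simp only [← Finset.sum_mul, ← Finset.range_eq_Ico, sum_range_catalanTriangle]

/-- The exponential times polynomial with Catalan triangle coefficients which
`triangleIterate (m + 1)` assigns to `x ↦ exp (-p x)`. -/
noncomputable def expCatalanPoly (p : ℝ) (m : ℕ) (σ : ℝ) : ℝ :=
  ∑ r ∈ Finset.range (m + 1),
    (1 / (2 * p ^ 2)) ^ (m + 1) * catalanTriangle m r * expMonomial p (m + 1 - r) σ

lemma expCatalanPoly_coeff_nonneg {m r : ℕ} (p : ℝ) (hr : r ∈ Finset.range (m + 1)) :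
    0 ≤ (1 / (2 * p ^ 2)) ^ (m + 1) * catalanTriangle m r :=
  mul_nonneg (by positivity) (catalanTriangle_nonneg (Finset.mem_range.1 hr).le)

lemma lintegral_mul_ofReal_sum_mul {α ι : Type*} [MeasurableSpace α] {μ : Measure α}
    (t : Finset ι) {w : α → ℝ≥0∞} {a : ι → ℝ} {f : ι → α → ℝ} (hw : Measurable w)
    (ha : ∀ i ∈ t, 0 ≤ a i) (hf : ∀ i, Measurable (f i)) (hf₀ : ∀ᵐ x ∂μ, ∀ i, 0 ≤ f i x) :
    ∫⁻ x, w x * ENNReal.ofReal (∑ i ∈ t, a i * f i x) ∂μ =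
      ∑ i ∈ t, ENNReal.ofReal (a i) * ∫⁻ x, w x * ENNReal.ofReal (f i x) ∂μ := by
  have hm (i : ι) : Measurable fun x => w x * ENNReal.ofReal (f i x) := by fun_prop
  simp only [← lintegral_const_mul _ (hm _)]
  rw [← lintegral_finsetSum _ fun i _ => (hm i).const_mul _]
  refine lintegral_congr_ae (hf₀.mono fun x hx => ?_)
  dsimp only
  rw [ENNReal.ofReal_sum_of_nonneg fun i hi => mul_nonneg (ha i hi) (hx i), Finset.mul_sum]
  exact Finset.sum_congr rfl fun i hi => by rw [ENNReal.ofReal_mul (ha i hi), mul_left_comm]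

lemma lintegral_Ioi_mul_expCatalanPoly {p : ℝ} (hp : 0 ≤ p) (m : ℕ) {w : ℝ → ℝ≥0∞}
    (hw : Measurable w) :
    ∫⁻ s in Set.Ioi 0, w s * ENNReal.ofReal (expCatalanPoly p m s) =
      ∑ r ∈ Finset.range (m + 1),
        ENNReal.ofReal ((1 / (2 * p ^ 2)) ^ (m + 1) * catalanTriangle m r) *
          ∫⁻ s in Set.Ioi 0, w s * ENNReal.ofReal (expMonomial p (m + 1 - r) s) :=
  lintegral_mul_ofReal_sum_mul _ hw (fun _ => expCatalanPoly_coeff_nonneg p)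
    (fun _ => (continuous_expMonomial p _).measurable)
    (ae_restrict_of_forall_mem measurableSet_Ioi fun _ hs _ =>
      expMonomial_nonneg hp (le_of_lt hs) _)

lemma lintegral_halfLineGreen_mul_expCatalanPoly {p σ : ℝ} (hp : 0 < p) (hσ : 0 ≤ σ) (m : ℕ) :
    ∫⁻ s in Set.Ioi 0,
      ENNReal.ofReal (halfLineGreen p σ s) * ENNReal.ofReal (expCatalanPoly p m s) =
    ENNReal.ofReal (expCatalanPoly p (m + 1) σ) := by
  have hinner (r : ℕ) : 0 ≤ 1 / (2 * p ^ 2) *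
      ∑ i ∈ Finset.range (m + 1 - r + 1), expMonomial p (i + 1) σ :=
    mul_nonneg (by positivity) (Finset.sum_nonneg fun i _ => expMonomial_nonneg hp.le hσ _)
  rw [lintegral_Ioi_mul_expCatalanPoly hp.le m
    (continuous_halfLineGreen p σ).measurable.ennreal_ofReal]
  simp only [lintegral_halfLineGreen_mul_expMonomial hp hσ]
  rw [Finset.sum_congr rfl fun r hr =>
      (ENNReal.ofReal_mul (expCatalanPoly_coeff_nonneg p hr)).symm,
    ← ENNReal.ofReal_sum_of_nonneg fun r hr =>
      mul_nonneg (expCatalanPoly_coeff_nonneg p hr) (hinner r)]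
  congr 1
  simp only [mul_assoc, expCatalanPoly, ← Finset.mul_sum,
    ← sum_catalanTriangle_mul_sum m fun i => expMonomial p i σ]
  simp only [mul_left_comm (catalanTriangle m _), ← Finset.mul_sum]
  ring

lemma triangleIterate_exp_shift (k : ℕ) (p τ s : ℝ) :
    triangleIterate k (fun x => ENNReal.ofReal (Real.exp (-(p * (x + τ))))) s =
      ENNReal.ofReal (Real.exp (-(p * τ))) *
        triangleIterate k (fun x => ENNReal.ofReal (Real.exp (-(p * x)))) s := by
  rw [← triangleIterate_const_mul k (by fun_prop)]
  congr 1
  funext x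
  rw [← ENNReal.ofReal_mul (Real.exp_pos _).le, ← Real.exp_add]
  ring_nf

lemma triangleIterate_succ_exp (k : ℕ) {p σ : ℝ} (hp : p ≠ 0) (hσ : 0 ≤ σ) :
    triangleIterate (k + 1) (fun x => ENNReal.ofReal (Real.exp (-(p * x)))) σ =
      ∫⁻ s in Set.Ioi 0, ENNReal.ofReal (halfLineGreen p σ s) *
        triangleIterate k (fun x => ENNReal.ofReal (Real.exp (-(p * x)))) s := by
  rw [triangleIterate_succ]
  refine setLIntegral_congr_fun measurableSet_Ioi fun s hs => ?_
  simp only [triangleIterate_exp_shift]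
  rw [lintegral_mul_const _ (by fun_prop), lintegral_Ioo_exp_neg_mul hp hσ (le_of_lt hs)]

lemma triangleIterate_exp {p σ : ℝ} (hp : 0 < p) (hσ : 0 ≤ σ) (m : ℕ) :
    triangleIterate (m + 1) (fun x => ENNReal.ofReal (Real.exp (-(p * x)))) σ =
      ENNReal.ofReal (expCatalanPoly p m σ) := by
  induction m generalizing σ with
  | zero =>
    rw [triangleIterate_succ_exp 0 hp.ne' hσ]
    simpa only [triangleIterate, expCatalanPoly, zero_add, pow_one, Finset.sum_range_one,
      catalanTriangle_zero_right, mul_one, tsub_zero, expMonomial_zero]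
      using lintegral_halfLineGreen_mul_expMonomial hp hσ 0
  | succ m ih =>
    rw [triangleIterate_succ_exp (m + 1) hp.ne' hσ, setLIntegral_congr_fun measurableSet_Ioi
      fun s hs => congrArg _ (ih (le_of_lt hs)), lintegral_halfLineGreen_mul_expCatalanPoly hp hσ]

lemma lintegral_Ioi_exp_mul_expMonomial {p : ℝ} (hp : 0 < p) (j : ℕ) :
    ∫⁻ s in Set.Ioi 0, ENNReal.ofReal (Real.exp (-(p * s))) * ENNReal.ofReal (expMonomial p j s) =
      ENNReal.ofReal (2 * p)⁻¹ := by
  simp only [← ENNReal.ofReal_mul (Real.exp_pos _).le, exp_neg_mul_mul_expMonomial]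
  exact lintegral_Ioi_exp_mul_scaledMonomial (mul_pos two_pos hp) j

/-- The value of `triangleMass (m + 1)` at `x ↦ exp (-x)`: the Catalan number of index `m + 1`
divided by `2ᵐ⁺²`. -/
noncomputable def catalanMass (m : ℕ) : ℝ :=
  (2 * m + 2).factorial / ((m + 2).factorial * (m + 1).factorial) / 2 ^ (m + 2)

lemma catalanMass_nonneg (m : ℕ) : 0 ≤ catalanMass m := by
  unfold catalanMass
  positivity

lemma catalanTriangle_succ_self (m : ℕ) :
    catalanTriangle (m + 1) m / 2 ^ (m + 2) = catalanMass m := by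
  simp only [catalanTriangle, catalanMass, show m + 1 + m = 2 * m + 1 by ring, Nat.factorial_succ]
  push_cast
  field_simp
  ring

lemma triangleMass_exp {p : ℝ} (hp : 0 < p) (m : ℕ) :
    triangleMass (m + 1) (fun x => ENNReal.ofReal (Real.exp (-(p * x)))) =
      ENNReal.ofReal (catalanMass m / p ^ (2 * m + 3)) := by
  have hiterate : ∀ σ ∈ Set.Ioi (0 : ℝ),
      triangleIterate (m + 1) (fun x => ENNReal.ofReal (Real.exp (-(p * (σ + x))))) σ =
        ENNReal.ofReal (Real.exp (-(p * σ))) * ENNReal.ofReal (expCatalanPoly p m σ) := by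
    intro σ hσ
    simp only [add_comm σ, triangleIterate_exp_shift, triangleIterate_exp hp (le_of_lt hσ)]
  have hcoeff (r : ℕ) (hr : r ∈ Finset.range (m + 1)) := expCatalanPoly_coeff_nonneg p hr
  rw [triangleMass, setLIntegral_congr_fun measurableSet_Ioi hiterate,
    lintegral_Ioi_mul_expCatalanPoly hp.le m (by fun_prop)]
  simp only [lintegral_Ioi_exp_mul_expMonomial hp]
  rw [← Finset.sum_mul, ← ENNReal.ofReal_sum_of_nonneg hcoeff,
    ← ENNReal.ofReal_mul (Finset.sum_nonneg hcoeff), ← Finset.mul_sum, sum_range_catalanTriangle,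
    ← catalanTriangle_succ_self, one_div_pow, mul_pow, ← pow_mul]
  congr 1
  field_simp
  ring

/-! ### The zeta value -/

lemma summable_dipolePairing {ε x : ℝ} (hε : ε ^ 2 = 1) (hx : 0 < x) :
    Summable fun n : ℕ => (n : ℝ) ^ 2 * ε ^ (n + 1) * Real.exp (-(n * x)) :=
  (summable_abs_natCast_pow_mul_pow_mul_exp 2 hε hx).of_abs

lemma dipolePairing_eq_even_add_odd {ε x : ℝ} (hε : ε ^ 2 = 1) (hx : 0 < x) :
    dipolePairing ε x = 4 * ε * dipolePairing 1 (2 * x) +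
      ∑' k : ℕ, (2 * (k : ℝ) + 1) ^ 2 * Real.exp (-((2 * k + 1) * x)) := by
  have hsum := summable_dipolePairing hε hx
  have hsplit := tsum_even_add_odd
    (f := fun n : ℕ => (n : ℝ) ^ 2 * ε ^ (n + 1) * Real.exp (-(n * x)))
    (hsum.comp_injective fun a b h => by simpa using h)
    (hsum.comp_injective fun a b h => by simpa using h)
  have heven (k : ℕ) : ((2 * k : ℕ) : ℝ) ^ 2 * ε ^ (2 * k + 1) *
      Real.exp (-((2 * k : ℕ) * x)) =
        4 * ε * ((k : ℝ) ^ 2 * 1 ^ (k + 1) * Real.exp (-(k * (2 * x)))) := by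
    rw [pow_succ ε, pow_mul, hε, one_pow, one_pow, Nat.cast_mul, Nat.cast_two,
      show (2 * k * x : ℝ) = k * (2 * x) by ring]
    ring
  have hodd (k : ℕ) : ((2 * k + 1 : ℕ) : ℝ) ^ 2 * ε ^ (2 * k + 1 + 1) *
      Real.exp (-((2 * k + 1 : ℕ) * x)) =
        (2 * (k : ℝ) + 1) ^ 2 * Real.exp (-((2 * k + 1) * x)) := by
    rw [show 2 * k + 1 + 1 = 2 * (k + 1) by ring, pow_mul, hε, one_pow, mul_one,
      Nat.cast_add_one, Nat.cast_mul, Nat.cast_two]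
  rw [dipolePairing, ← hsplit, dipolePairing, ← tsum_mul_left, tsum_congr heven,
    tsum_congr hodd]

lemma dipolePairing_neg_one_add {x : ℝ} (hx : 0 < x) :
    dipolePairing (-1) x + 8 * dipolePairing 1 (2 * x) = dipolePairing 1 x := by
  rw [dipolePairing_eq_even_add_odd (by norm_num) hx,
    dipolePairing_eq_even_add_odd (one_pow 2) hx]
  ring

lemma ofReal_dipolePairing_one_eq_add {x : ℝ} (hx : 0 < x) :
    ENNReal.ofReal (dipolePairing 1 x) = ENNReal.ofReal (dipolePairing (-1) x) +
      ENNReal.ofReal 8 * ENNReal.ofReal (dipolePairing 1 (2 * x)) := by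
  have hdouble : 0 ≤ dipolePairing 1 (2 * x) := dipolePairing_nonneg (one_pow 2) (by positivity)
  rw [← dipolePairing_neg_one_add hx, ENNReal.ofReal_add (dipolePairing_nonneg (by norm_num) hx)
    (by positivity), ENNReal.ofReal_mul (by norm_num)]

lemma ofReal_dipolePairing_one {x : ℝ} (hx : 0 < x) :
    ENNReal.ofReal (dipolePairing 1 x) =
      ∑' n : ℕ, ENNReal.ofReal (((n : ℝ) + 1) ^ 2) *
        ENNReal.ofReal (Real.exp (-((n + 1) * x))) := by
  have hsum := summable_dipolePairing (one_pow 2) hx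
  have hterm (n : ℕ) : ENNReal.ofReal (((n : ℝ) + 1) ^ 2) *
      ENNReal.ofReal (Real.exp (-((n + 1) * x))) =
        ENNReal.ofReal (((n + 1 : ℕ) : ℝ) ^ 2 * 1 ^ (n + 1 + 1) *
          Real.exp (-((n + 1 : ℕ) * x))) := by
    rw [← ENNReal.ofReal_mul (by positivity), one_pow, mul_one, Nat.cast_add_one]
  rw [tsum_congr hterm, ← ENNReal.ofReal_tsum_of_nonneg (fun n => by positivity)
    ((summable_nat_add_iff 1).2 hsum), dipolePairing, hsum.tsum_eq_zero_add, Nat.cast_zero,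
    zero_pow two_ne_zero, zero_mul, zero_mul, zero_add]

lemma summable_one_div_add_one_pow {k : ℕ} (hk : 1 < k) :
    Summable fun n : ℕ => 1 / ((n : ℝ) + 1) ^ k := by
  simpa only [Nat.cast_add_one] using
    (summable_nat_add_iff 1).2 (Real.summable_one_div_nat_pow.2 hk)

lemma triangleMass_dipolePairing_one_comp_mul {m : ℕ} (hm : m ≠ 0) {c : ℝ} (hc : 0 < c) :
    triangleMass (m + 1) (fun x => ENNReal.ofReal (dipolePairing 1 (c * x))) =
      ENNReal.ofReal (catalanMass m / c ^ (2 * m + 3) *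
        ∑' n : ℕ, 1 / ((n : ℝ) + 1) ^ (2 * m + 1)) := by
  have hmass := catalanMass_nonneg m
  have hmeas (n : ℕ) : Measurable fun x => ENNReal.ofReal (Real.exp (-((n + 1) * c * x))) := by
    fun_prop
  have hexpand : ∀ x, 0 < x → ENNReal.ofReal (dipolePairing 1 (c * x)) =
      ∑' n : ℕ, ENNReal.ofReal (((n : ℝ) + 1) ^ 2) *
        ENNReal.ofReal (Real.exp (-((n + 1) * c * x))) := fun x hx => by
    simp only [ofReal_dipolePairing_one (mul_pos hc hx), mul_assoc]
  rw [triangleMass_congr _ hexpand, triangleMass_tsum _ fun n => (hmeas n).const_mul _,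
    ← tsum_mul_left, ENNReal.ofReal_tsum_of_nonneg (fun n => by positivity)
      ((summable_one_div_add_one_pow (by omega)).mul_left _)]
  refine tsum_congr fun n => ?_
  rw [triangleMass_const_mul _ (hmeas n), triangleMass_exp (by positivity),
    ← ENNReal.ofReal_mul (by positivity), mul_pow]
  congr 1
  field_simp
  ring

theorem triangleMass_dipolePairing {m : ℕ} (hm : m ≠ 0) :
    triangleMass (m + 1) (fun x => ENNReal.ofReal (dipolePairing ((-1) ^ m) x)) =
      ENNReal.ofReal (catalanMass m * (1 - (1 - (-1) ^ m) / 2 ^ (2 * m + 1)) *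
        ∑' n : ℕ, 1 / ((n : ℝ) + 1) ^ (2 * m + 1)) := by
  have hone := triangleMass_dipolePairing_one_comp_mul hm one_pos
  simp only [one_mul, one_pow, div_one] at hone
  rcases neg_one_pow_eq_or ℝ m with hsign | hsign <;> rw [hsign]
  · rw [hone, sub_self, zero_div, sub_zero, mul_one]
  have htwo := triangleMass_dipolePairing_one_comp_mul hm two_pos
  have hmeas : Measurable fun x => ENNReal.ofReal (dipolePairing 1 (2 * x)) :=
    (measurable_dipolePairing 1).comp (measurable_const_mul 2)
  rw [triangleMass_congr _ fun x => ofReal_dipolePairing_one_eq_add,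
    triangleMass_add _ (measurable_dipolePairing _) (hmeas.const_mul _),
    triangleMass_const_mul _ hmeas, htwo, ← ENNReal.ofReal_mul (by norm_num)] at hone
  have hmass := catalanMass_nonneg m
  rw [ENNReal.eq_sub_of_add_eq ENNReal.ofReal_ne_top hone,
    ← ENNReal.ofReal_sub _ (by positivity)]
  congr 1
  field_simp
  ring

/-! ### The residue -/

lemma measurable_kirchhoff_chart {V : Type*} [Fintype V] (G : SimpleGraph V) (e₀ : G.edgeSet) :
    Measurable fun u => kirchhoff G (chart G e₀ u) := by
  unfold kirchhoff
  refine Finset.measurable_sum _ fun T _ => Finset.measurable_prod _ fun e _ => ?_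
  split_ifs
  · exact measurable_const
  · unfold chart
    split_ifs
    · exact measurable_const
    · exact measurable_pi_apply _

lemma integrable_and_integral_eq_of_lintegral_ofReal_eq {α : Type*} [MeasurableSpace α]
    {μ : Measure α} {f : α → ℝ} {c : ℝ} (hf : AEStronglyMeasurable f μ) (hf₀ : 0 ≤ᵐ[μ] f)
    (hc : 0 ≤ c) (h : ∫⁻ a, ENNReal.ofReal (f a) ∂μ = ENNReal.ofReal c) :
    Integrable f μ ∧ ∫ a, f a ∂μ = c := by
  refine ⟨⟨hf, ?_⟩, ?_⟩
  · rw [hasFiniteIntegral_iff_ofReal hf₀, h]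
    exact ENNReal.ofReal_lt_top
  · rw [integral_eq_lintegral_of_nonneg_ae hf₀ hf, h, ENNReal.toReal_ofReal hc]

/-- The closed form of the Feynman residue of the zig-zag graph with loop number `m + 2`; the shift
keeps natural subtraction out of the factorials and exponents. -/
noncomputable def zigzagResidue (m : ℕ) : ℝ :=
  4 * (2 * m + 2).factorial / ((m + 2).factorial * (m + 1).factorial) *
    (1 - (1 - (-1) ^ m) / 2 ^ (2 * m + 1)) * ∑' n : ℕ, 1 / ((n : ℝ) + 1) ^ (2 * m + 1)

lemma zigzagResidue_nonneg (m : ℕ) : 0 ≤ zigzagResidue m := by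
  refine mul_nonneg (mul_nonneg (by positivity) ?_) (tsum_nonneg fun k => by positivity)
  rw [sub_nonneg, div_le_one (by positivity)]
  have hpow : (2 : ℝ) ^ 1 ≤ 2 ^ (2 * m + 1) := pow_le_pow_right₀ one_le_two (by omega)
  rcases neg_one_pow_eq_or ℝ m with hsign | hsign <;> rw [hsign] <;> linarith

lemma lintegral_exp_mul_transfer_iterate_eq_zigzagResidue {m : ℕ} (hm : m ≠ 0) :
    ∫⁻ p : R4, ENNReal.ofReal (Real.exp (-‖p‖ ^ 2)) *
        (transfer p)^[m + 1] (rieszKernel 2) p =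
      ENNReal.ofReal (Real.pi ^ (2 * (m + 2))) * ENNReal.ofReal (zigzagResidue m) := by
  have hstrip := lintegral_exp_mul_transfer_iterate norm_pole (m + 1)
  rw [lintegral_symmTransfer_iterate_eq_triangleMass,
    show (-1 : ℝ) ^ (m + 1 + 1) = (-1) ^ m by ring, triangleMass_dipolePairing hm,
    ← ENNReal.ofReal_pow (by positivity), ← ENNReal.ofReal_mul (by positivity),
    ← ENNReal.ofReal_mul (by positivity)] at hstrip
  have hvalue : 32 * Real.pi ^ 2 * (2 * Real.pi ^ 2) ^ (m + 1) *
      (catalanMass m * (1 - (1 - (-1) ^ m) / 2 ^ (2 * m + 1)) *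
        ∑' n : ℕ, 1 / ((n : ℝ) + 1) ^ (2 * m + 1)) =
      4 * (Real.pi ^ (2 * (m + 2)) * zigzagResidue m) := by
    rw [catalanMass, zigzagResidue, mul_pow, ← pow_mul]
    field_simp
    ring
  rw [hvalue, ENNReal.ofReal_mul (by norm_num)] at hstrip
  rw [← ENNReal.ofReal_mul (by positivity)]
  exact (ENNReal.mul_right_inj (by simp) ENNReal.ofReal_ne_top).1 hstrip

theorem lintegral_kirchhoff_zigzag_eq_zigzagResidue {m : ℕ} (hm : m ≠ 0)
    (e₀ : (zigzag (m + 2)).edgeSet)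
    (he₀ : (e₀ : Sym2 (Fin (m + 2 + 1))) = s(0, ⟨m + 2, Nat.lt_succ_self _⟩)) :
    ∫⁻ u in {u : {e : (zigzag (m + 2)).edgeSet // e ≠ e₀} → ℝ | ∀ e, 0 < u e},
      ENNReal.ofReal ((kirchhoff (zigzag (m + 2)) (chart (zigzag (m + 2)) e₀ u))⁻¹ ^ 2) =
        ENNReal.ofReal (zigzagResidue m) := by
  have hm₂ : 2 ≤ m + 1 := by omega
  obtain rfl : e₀ = zigzagEdgeEquiv hm₂ (Sum.inl 0) :=
    Subtype.ext (by rw [he₀, coe_zigzagEdgeEquiv]; rfl)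
  have hπ : ENNReal.ofReal (Real.pi ^ (2 * (m + 2))) ≠ 0 := by
    simpa only [ne_eq, ENNReal.ofReal_eq_zero, not_le] using pow_pos Real.pi_pos _
  exact (ENNReal.mul_right_inj hπ ENNReal.ofReal_ne_top).1 <|
    (lintegral_kirchhoff_zigzag hm₂).trans
      (lintegral_exp_mul_transfer_iterate_eq_zigzagResidue hm)

/-- The Feynman residue of the zig-zag graph `Z_n` (in the affine chart where
the edge `{0, n}` is set to `1`) is finite and equals
`4·(2n−2)!/(n!·(n−1)!)·(1 − (1 − (−1)ⁿ)/2^{2n−3})·ζ(2n−3)`. -/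
theorem feynmanResidue_zigzag (n : ℕ) (hn : 3 ≤ n)
    (e₀ : (zigzag n).edgeSet)
    (he₀ : (e₀ : Sym2 (Fin (n + 1))) =
      s((0 : Fin (n + 1)), (⟨n, Nat.lt_succ_self n⟩ : Fin (n + 1)))) :
    IntegrableOn (fun u : {e : (zigzag n).edgeSet // e ≠ e₀} → ℝ =>
        (kirchhoff (zigzag n) (chart (zigzag n) e₀ u))⁻¹ ^ 2)
      {u | ∀ e, 0 < u e} ∧
    ∫ u in {u : {e : (zigzag n).edgeSet // e ≠ e₀} → ℝ | ∀ e, 0 < u e},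
        (kirchhoff (zigzag n) (chart (zigzag n) e₀ u))⁻¹ ^ 2 =
      4 * ((2 * n - 2).factorial : ℝ) /
          ((n.factorial : ℝ) * ((n - 1).factorial : ℝ)) *
        (1 - (1 - (-1 : ℝ) ^ n) / 2 ^ (2 * n - 3)) *
        ∑' k : ℕ, 1 / ((k : ℝ) + 1) ^ (2 * n - 3) := by
  obtain ⟨m, rfl⟩ : ∃ m, n = m + 2 := ⟨n - 2, by omega⟩
  rw [show 2 * (m + 2) - 2 = 2 * m + 2 by omega, show m + 2 - 1 = m + 1 by omega,
    show 2 * (m + 2) - 3 = 2 * m + 1 by omega, show (-1 : ℝ) ^ (m + 2) = (-1) ^ m by ring]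
  exact integrable_and_integral_eq_of_lintegral_ofReal_eq
    ((measurable_kirchhoff_chart _ e₀).inv.pow_const 2).aestronglyMeasurable
    (Filter.Eventually.of_forall fun u => sq_nonneg _) (zigzagResidue_nonneg m)
    (lintegral_kirchhoff_zigzag_eq_zigzagResidue (by omega) e₀ he₀)
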